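/- arXiv:2206.11711 — 2 statements merged into one kernel-verified Lean document; each statement's English description precedes it below -/
import Mathlib

section
/- Let n ∈ ℕ and let f : 𝕊 → GL_n(ℂ) be a smooth (C^∞) map, where 𝕊 carries its structure as a one-dimensional real manifold. Then there exist integers κ₁ ≥ κ₂ ≥ ⋯ ≥ κ_n, a continuous map F₊ : 𝔻̄ → M_n(ℂ) which is holomorphic on 𝔻, takes invertible values on all of 𝔻̄, and whose restriction to 𝕊 is smooth, and a continuous map F₋ : {z ∈ ℂ : |z| ≥ 1} → M_n(ℂ) which is holomorphic on {z : |z| > 1}, takes invertible values, has an invertible limit F₋(∞) as |z| → ∞, and whose restriction to 𝕊 is smooth, such that f(z) = F₊(z)·diag(z^{κ₁},…,z^{κ_n})·F₋(z) for all z ∈ 𝕊. Moreover, the n-tuple (κ₁,…,κ_n) is uniquely determined by f. -/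
open Metric Filter

/-- The parametrization `t ↦ e^{2πit}` of the unit circle. -/
noncomputable def circleParam (t : ℝ) : ℂ :=
  Complex.exp (2 * (Real.pi : ℂ) * Complex.I * (t : ℂ))

/-- A Birkhoff decomposition `f = F₊ · diag(z^κ) · F₋` (on the unit circle) of a smooth
loop `f` in `GL_n(ℂ)`, with smooth boundary values:  `F₊` is continuous on the closed unit
disk, holomorphic on the open disk, `GL_n`-valued, with smooth restriction to `𝕊`; `F₋` is
continuous on `{|z| ≥ 1}`, holomorphic on `{|z| > 1}`, `GL_n`-valued, with smooth
restriction to `𝕊` and an invertible limit `L` at `∞`. -/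
def SmoothBirkhoffFactorization (n : ℕ) (f : ℂ → Matrix (Fin n) (Fin n) ℂ)
    (κ : Fin n → ℤ) (Fp Fm : ℂ → Matrix (Fin n) (Fin n) ℂ)
    (L : Matrix (Fin n) (Fin n) ℂ) : Prop :=
  (∀ i j, ContinuousOn (fun z => Fp z i j) (closedBall 0 1)) ∧
  (∀ i j, DifferentiableOn ℂ (fun z => Fp z i j) (ball 0 1)) ∧
  (∀ z ∈ closedBall (0 : ℂ) 1, IsUnit (Fp z)) ∧
  (∀ i j, ContDiff ℝ (⊤ : ℕ∞) fun t : ℝ => Fp (circleParam t) i j) ∧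
  (∀ i j, ContinuousOn (fun z => Fm z i j) {z : ℂ | 1 ≤ ‖z‖}) ∧
  (∀ i j, DifferentiableOn ℂ (fun z => Fm z i j) {z : ℂ | 1 < ‖z‖}) ∧
  (∀ z : ℂ, 1 ≤ ‖z‖ → IsUnit (Fm z)) ∧
  (∀ i j, ContDiff ℝ (⊤ : ℕ∞) fun t : ℝ => Fm (circleParam t) i j) ∧
  IsUnit L ∧
  (∀ i j, Tendsto (fun z => Fm z i j) (comap (fun z : ℂ => ‖z‖) atTop) (nhds (L i j))) ∧
  (∀ z : ℂ, ‖z‖ = 1 → f z = Fp z * Matrix.diagonal (fun i => z ^ κ i) * Fm z)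

/-!
Approximating `f` by a Laurent polynomial leaves a loop close to `1`, which Wiener-Hopf
factorization in a weighted Wiener algebra writes as a plus loop times a minus loop: the equation
for the inverse of the plus factor is solved by a Neumann series, for which smallness in the
unweighted norm is enough, while rapid decay of the coefficients passes to the solution. What
remains is (matrix polynomial) · (plus loop), up to a power of `z`. The zeros of its determinant
inside the disk are split off on the right one at a time, giving (plus loop) · (matrix polynomial
`Q` invertible for `1 ≤ ‖z‖`), and row reduction of `Q` over `ℂ[X]` until the leading coefficients
of its rows are independent factors it as (unimodular) · `diag (z ^ d i)` · (polynomial in `z⁻¹`).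

Two factorizations of `f` are intertwined by a plus loop `A` and a minus loop `B`:
`A i j * z ^ κ j = z ^ κ' i * B i j` on the circle. If `κ' i < κ j`, then `A i j` has only
nonnegative and only negative frequencies, hence vanishes; if the sorted tuples `κ` and `κ'`
differed, these zeros would form a block too large for `A` to be invertible.
-/

namespace BirkhoffFactorization

open scoped ContDiff Topology Ring

section UnitCircle

lemma circleParam_eq_circleMap (t : ℝ) : circleParam t = circleMap 0 1 (2 * Real.pi * t) := by
  simp only [circleParam, circleMap, zero_add, Complex.ofReal_one, one_mul]
  push_cast
  ring_nf

lemma norm_circleParam (t : ℝ) : ‖circleParam t‖ = 1 := by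
  simp [circleParam_eq_circleMap]

lemma circleParam_ne_zero (t : ℝ) : circleParam t ≠ 0 := Complex.exp_ne_zero _

lemma circleParam_mem_sphere (t : ℝ) : circleParam t ∈ sphere (0 : ℂ) 1 := by
  simp [norm_circleParam]

lemma exists_circleParam_eq {z : ℂ} (hz : ‖z‖ = 1) : ∃ t : ℝ, circleParam t = z := by
  obtain ⟨θ, -, rfl⟩ : z ∈ circleMap 0 1 '' Set.Ioc 0 (2 * Real.pi) := by
    simpa [image_circleMap_Ioc] using hz
  refine ⟨θ / (2 * Real.pi), ?_⟩
  rw [circleParam_eq_circleMap, mul_div_cancel₀ _ Real.two_pi_pos.ne']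

lemma contDiff_circleParam : ContDiff ℝ ∞ circleParam :=
  (contDiff_const.mul Complex.ofRealCLM.contDiff).cexp

lemma circleParam_periodic : Function.Periodic circleParam 1 := fun t => by
  simp only [circleParam_eq_circleMap, mul_add, mul_one]
  exact periodic_circleMap 0 1 _

lemma fourier_eq_circleParam_zpow (k : ℤ) (t : ℝ) :
    fourier k (t : UnitAddCircle) = circleParam t ^ k := by
  rw [fourier_coe_apply, circleParam, ← Complex.exp_int_mul]
  push_cast
  ring_nf

lemma closure_compl_closedBall :
    closure (closedBall (0 : ℂ) 1)ᶜ = {z : ℂ | 1 ≤ ‖z‖} := by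
  rw [closure_compl, interior_closedBall _ one_ne_zero]
  ext z
  simp

end UnitCircle

section SmoothBoundaryAlgebra

variable {A : Type*} [NormedRing A] [NormedAlgebra ℂ A] {U : Set ℂ} {g : ℂ → A}

/-- The algebra of functions that are holomorphic on `U`, continuous on its closure, and smooth
along the unit circle. It is used for the open unit disk and for `(closedBall 0 1)ᶜ`. -/
def smoothBoundaryAlgebra (U : Set ℂ) (A : Type*) [NormedRing A] [NormedAlgebra ℂ A] :
    Subalgebra ℂ (ℂ → A) where
  carrier := {g | DiffContOnCl ℂ g U ∧ ContDiff ℝ ∞ fun t => g (circleParam t)}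
  mul_mem' ha hb := ⟨⟨ha.1.1.mul hb.1.1, ha.1.2.mul hb.1.2⟩, ha.2.mul hb.2⟩
  add_mem' ha hb := ⟨ha.1.add hb.1, ha.2.add hb.2⟩
  algebraMap_mem' _ := ⟨diffContOnCl_const, contDiff_const⟩

lemma const_mem_smoothBoundaryAlgebra (a : A) : (fun _ => a) ∈ smoothBoundaryAlgebra U A :=
  ⟨diffContOnCl_const, contDiff_const⟩

lemma differentiable_mem_smoothBoundaryAlgebra [CompleteSpace A] (hg : Differentiable ℂ g) :
    g ∈ smoothBoundaryAlgebra U A :=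
  ⟨hg.diffContOnCl, ((hg.contDiff (n := ∞)).restrict_scalars ℝ).comp contDiff_circleParam⟩

lemma clm_comp_mem_smoothBoundaryAlgebra {B : Type*} [NormedRing B] [NormedAlgebra ℂ B]
    (T : A →L[ℂ] B) (hg : g ∈ smoothBoundaryAlgebra U A) :
    (fun z => T (g z)) ∈ smoothBoundaryAlgebra U B :=
  ⟨T.differentiable.comp_diffContOnCl hg.1, (T.restrictScalars ℝ).contDiff.comp hg.2⟩

lemma contDiff_ringInverse_comp [CompleteSpace A] {h : ℝ → A} (hh : ContDiff ℝ ∞ h)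
    (hunit : ∀ t, IsUnit (h t)) : ContDiff ℝ ∞ fun t => (h t)⁻¹ʳ :=
  contDiff_iff_contDiffAt.2 fun t => by
    obtain ⟨u, hu⟩ := hunit t
    exact ContDiffAt.comp t (g := Ring.inverse) (hu ▸ contDiffAt_ringInverse ℝ u) hh.contDiffAt

lemma ringInverse_mem_smoothBoundaryAlgebra [CompleteSpace A]
    (hU : sphere 0 1 ⊆ closure U) (hg : g ∈ smoothBoundaryAlgebra U A)
    (hunit : ∀ z ∈ closure U, IsUnit (g z)) :
    (fun z => (g z)⁻¹ʳ) ∈ smoothBoundaryAlgebra U A := by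
  refine ⟨⟨hg.1.1.inverse fun z hz => hunit z (subset_closure hz), fun z hz => ?_⟩,
    contDiff_ringInverse_comp hg.2 fun t => hunit _ (hU (circleParam_mem_sphere t))⟩
  obtain ⟨u, hu⟩ := hunit z hz
  refine ContinuousAt.comp_continuousWithinAt (g := Ring.inverse) ?_ (hg.1.2 z hz)
  exact hu ▸ NormedRing.inverse_continuousAt u

lemma inv_mem_smoothBoundaryAlgebra :
    (fun z => z⁻¹) ∈ smoothBoundaryAlgebra (closedBall 0 1)ᶜ ℂ := by
  refine ⟨DiffContOnCl.inv (f := id) differentiable_id.diffContOnCl fun z hz => ?_,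
    contDiff_circleParam.inv circleParam_ne_zero⟩
  rw [closure_compl_closedBall] at hz
  exact norm_pos_iff.1 (one_pos.trans_le hz)

end SmoothBoundaryAlgebra

section Loops

variable {A : Type*} [NormedRing A] [NormedAlgebra ℂ A] {G H X Y : ℂ → A} {L M : A}

/-- A plus loop: a loop of units with smooth boundary values that extends holomorphically, through
units, to the closed unit disk. -/
structure IsPlusLoop (G : ℂ → A) : Prop where
  mem : G ∈ smoothBoundaryAlgebra (ball 0 1) A
  isUnit : ∀ z, ‖z‖ ≤ 1 → IsUnit (G z)

/-- A minus loop with value `L` at infinity: a loop of units with smooth boundary values that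
extends holomorphically, through units, to the exterior of the unit disk and to `∞`. -/
structure IsMinusLoop (X : ℂ → A) (L : A) : Prop where
  mem : X ∈ smoothBoundaryAlgebra (closedBall 0 1)ᶜ A
  isUnit : ∀ z, 1 ≤ ‖z‖ → IsUnit (X z)
  isUnit_limit : IsUnit L
  tendsto : Tendsto X (Bornology.cobounded ℂ) (𝓝 L)

lemma IsPlusLoop.mul (hG : IsPlusLoop G) (hH : IsPlusLoop H) : IsPlusLoop (G * H) :=
  ⟨mul_mem hG.mem hH.mem, fun z hz => (hG.isUnit z hz).mul (hH.isUnit z hz)⟩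

lemma IsMinusLoop.mul (hX : IsMinusLoop X L) (hY : IsMinusLoop Y M) :
    IsMinusLoop (X * Y) (L * M) :=
  ⟨mul_mem hX.mem hY.mem, fun z hz => (hX.isUnit z hz).mul (hY.isUnit z hz),
    hX.isUnit_limit.mul hY.isUnit_limit, hX.tendsto.mul hY.tendsto⟩

lemma IsPlusLoop.ringInverse [CompleteSpace A] (hG : IsPlusLoop G) :
    IsPlusLoop fun z => (G z)⁻¹ʳ := by
  have hcl : closure (ball (0 : ℂ) 1) = closedBall 0 1 := closure_ball 0 one_ne_zero
  refine ⟨ringInverse_mem_smoothBoundaryAlgebra (hcl ▸ sphere_subset_closedBall) hG.mem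
    fun z hz => hG.isUnit z (by simpa [hcl] using hz), fun z hz => (hG.isUnit z hz).ringInverse⟩

lemma IsMinusLoop.ringInverse [CompleteSpace A] (hX : IsMinusLoop X L) :
    IsMinusLoop (fun z => (X z)⁻¹ʳ) L⁻¹ʳ := by
  refine ⟨ringInverse_mem_smoothBoundaryAlgebra ?_ hX.mem fun z hz => hX.isUnit z ?_,
    fun z hz => (hX.isUnit z hz).ringInverse, hX.isUnit_limit.ringInverse, ?_⟩
  · rw [closure_compl_closedBall]
    intro z hz
    simpa using (mem_sphere_zero_iff_norm.1 hz).ge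
  · rwa [closure_compl_closedBall] at hz
  · obtain ⟨u, rfl⟩ := hX.isUnit_limit
    exact (NormedRing.inverse_continuousAt u).tendsto.comp hX.tendsto

end Loops

section MatrixLoops

open scoped Matrix.Norms.Operator

variable {ι : Type*} [Fintype ι] [DecidableEq ι] {U : Set ℂ} {G : ℂ → Matrix ι ι ℂ}

lemma matrix_mem_smoothBoundaryAlgebra_iff :
    G ∈ smoothBoundaryAlgebra U (Matrix ι ι ℂ) ↔
      ∀ i j, (fun z => G z i j) ∈ smoothBoundaryAlgebra U ℂ := by
  refine ⟨fun hG i j => clm_comp_mem_smoothBoundaryAlgebra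
    (Matrix.entryLinearMap ℂ ℂ i j).toContinuousLinearMap hG, fun hG => ?_⟩
  have hsum : G = ∑ i, ∑ j, fun z => Matrix.single i j (G z i j) := by
    funext z
    simpa using Matrix.matrix_eq_sum_single (G z)
  rw [hsum]
  exact sum_mem fun i _ => sum_mem fun j _ => clm_comp_mem_smoothBoundaryAlgebra
    (Matrix.singleLinearMap ℂ i j).toContinuousLinearMap (hG i j)

/-- `f` has partial indices `κ`: it admits a Birkhoff factorization
`f = F₊ · diag(z ^ κ i) · F₋` on the unit circle. The indices are not required to be sorted. -/
def HasPartialIndices (f : ℂ → Matrix ι ι ℂ) (κ : ι → ℤ) : Prop :=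
  ∃ Fp Fm L, IsPlusLoop Fp ∧ IsMinusLoop Fm L ∧
    ∀ z, ‖z‖ = 1 → f z = Fp z * Matrix.diagonal (fun i => z ^ κ i) * Fm z

lemma isPlusLoop_matrix_iff : IsPlusLoop G ↔
    (∀ i j, ContinuousOn (fun z => G z i j) (closedBall 0 1)) ∧
    (∀ i j, DifferentiableOn ℂ (fun z => G z i j) (ball 0 1)) ∧
    (∀ z ∈ closedBall (0 : ℂ) 1, IsUnit (G z)) ∧
    ∀ i j, ContDiff ℝ ∞ fun t => G (circleParam t) i j := by
  have hcl : closure (ball (0 : ℂ) 1) = closedBall 0 1 := closure_ball 0 one_ne_zero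
  constructor
  · intro hG
    have hentry := matrix_mem_smoothBoundaryAlgebra_iff.1 hG.mem
    exact ⟨fun i j => hcl ▸ (hentry i j).1.2, fun i j => (hentry i j).1.1,
      fun z hz => hG.isUnit z (mem_closedBall_zero_iff.1 hz), fun i j => (hentry i j).2⟩
  · rintro ⟨hcont, hdiff, hunit, hsmooth⟩
    exact ⟨matrix_mem_smoothBoundaryAlgebra_iff.2 fun i j =>
      ⟨⟨hdiff i j, hcl ▸ hcont i j⟩, hsmooth i j⟩,
      fun z hz => hunit z (mem_closedBall_zero_iff.2 hz)⟩

lemma isMinusLoop_matrix_iff {X : ℂ → Matrix ι ι ℂ} {L : Matrix ι ι ℂ} : IsMinusLoop X L ↔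
    (∀ i j, ContinuousOn (fun z => X z i j) {z : ℂ | 1 ≤ ‖z‖}) ∧
    (∀ i j, DifferentiableOn ℂ (fun z => X z i j) {z : ℂ | 1 < ‖z‖}) ∧
    (∀ z, 1 ≤ ‖z‖ → IsUnit (X z)) ∧
    (∀ i j, ContDiff ℝ ∞ fun t => X (circleParam t) i j) ∧ IsUnit L ∧
    ∀ i j, Tendsto (fun z => X z i j) (comap (fun z => ‖z‖) atTop) (𝓝 (L i j)) := by
  have hopen : (closedBall (0 : ℂ) 1)ᶜ = {z | 1 < ‖z‖} := by ext; simp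
  have hlim : Tendsto X (Bornology.cobounded ℂ) (𝓝 L) ↔
      ∀ i j, Tendsto (fun z => X z i j) (comap (fun z => ‖z‖) atTop) (𝓝 (L i j)) := by
    rw [comap_norm_atTop]
    exact tendsto_pi_nhds.trans (forall_congr' fun i => tendsto_pi_nhds)
  constructor
  · intro hX
    have hentry := matrix_mem_smoothBoundaryAlgebra_iff.1 hX.mem
    exact ⟨fun i j => closure_compl_closedBall ▸ (hentry i j).1.2,
      fun i j => hopen ▸ (hentry i j).1.1, hX.isUnit, fun i j => (hentry i j).2,
      hX.isUnit_limit, hlim.1 hX.tendsto⟩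
  · rintro ⟨hcont, hdiff, hunit, hsmooth, hL, htendsto⟩
    exact ⟨matrix_mem_smoothBoundaryAlgebra_iff.2 fun i j =>
      ⟨⟨hopen ▸ hdiff i j, closure_compl_closedBall ▸ hcont i j⟩, hsmooth i j⟩, hunit, hL,
      hlim.2 htendsto⟩

lemma exists_smoothBirkhoffFactorization_iff {n : ℕ} {f : ℂ → Matrix (Fin n) (Fin n) ℂ}
    {κ : Fin n → ℤ} :
    (∃ Fp Fm L, SmoothBirkhoffFactorization n f κ Fp Fm L) ↔ HasPartialIndices f κ := by
  refine exists_congr fun Fp => exists_congr fun Fm => exists_congr fun L => ?_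
  rw [isPlusLoop_matrix_iff, isMinusLoop_matrix_iff]
  simp only [SmoothBirkhoffFactorization, and_assoc]

namespace HasPartialIndices

variable {f g X : ℂ → Matrix ι ι ℂ} {κ : ι → ℤ} {L : Matrix ι ι ℂ}

lemma mul_plusLoop_left (hf : HasPartialIndices f κ) (hG : IsPlusLoop G)
    (hg : ∀ z, ‖z‖ = 1 → g z = G z * f z) : HasPartialIndices g κ := by
  obtain ⟨Fp, Fm, L, hFp, hFm, hfac⟩ := hf
  refine ⟨G * Fp, Fm, L, hG.mul hFp, hFm, fun z hz => ?_⟩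
  simp only [hg z hz, hfac z hz, Pi.mul_apply, mul_assoc]

lemma mul_minusLoop_right (hf : HasPartialIndices f κ) (hX : IsMinusLoop X L)
    (hg : ∀ z, ‖z‖ = 1 → g z = f z * X z) : HasPartialIndices g κ := by
  obtain ⟨Fp, Fm, M, hFp, hFm, hfac⟩ := hf
  refine ⟨Fp, Fm * X, M * L, hFp, hFm.mul hX, fun z hz => ?_⟩
  simp only [hg z hz, hfac z hz, Pi.mul_apply, mul_assoc]

lemma zpow_smul (hf : HasPartialIndices f κ) (m : ℤ) (hg : ∀ z, ‖z‖ = 1 → g z = z ^ m • f z) :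
    HasPartialIndices g fun i => m + κ i := by
  obtain ⟨Fp, Fm, L, hFp, hFm, hfac⟩ := hf
  refine ⟨Fp, Fm, L, hFp, hFm, fun z hz => ?_⟩
  have hz0 : z ≠ 0 := by
    rintro rfl
    simp at hz
  have hdiag : Matrix.diagonal (fun i => z ^ (m + κ i)) =
      z ^ m • Matrix.diagonal fun i => z ^ κ i := by
    rw [← Matrix.diagonal_smul]
    exact congrArg _ (funext fun i => zpow_add₀ hz0 m (κ i))
  simp only [hg z hz, hfac z hz, hdiag, Matrix.mul_smul, Matrix.smul_mul]

lemma comp_perm (hf : HasPartialIndices f κ) (σ : Equiv.Perm ι) : HasPartialIndices f (κ ∘ σ) := by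
  obtain ⟨Fp, Fm, L, hFp, hFm, hfac⟩ := hf
  refine ⟨fun z => (Fp z).submatrix (Equiv.refl ι) σ, fun z => (Fm z).submatrix σ (Equiv.refl ι),
    L.submatrix σ (Equiv.refl ι), ⟨?_, fun z hz => ?_⟩, ⟨?_, fun z hz => ?_, ?_, ?_⟩,
    fun z hz => ?_⟩
  · exact matrix_mem_smoothBoundaryAlgebra_iff.2 fun i j =>
      matrix_mem_smoothBoundaryAlgebra_iff.1 hFp.mem i (σ j)
  · exact (Matrix.isUnit_submatrix_equiv _ _).2 (hFp.isUnit z hz)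
  · exact matrix_mem_smoothBoundaryAlgebra_iff.2 fun i j =>
      matrix_mem_smoothBoundaryAlgebra_iff.1 hFm.mem (σ i) j
  · exact (Matrix.isUnit_submatrix_equiv _ _).2 (hFm.isUnit z hz)
  · exact (Matrix.isUnit_submatrix_equiv _ _).2 hFm.isUnit_limit
  · exact ((continuous_id.matrix_submatrix _ _).tendsto L).comp hFm.tendsto
  · have hdiag : Matrix.diagonal (fun i => z ^ (κ ∘ σ) i) =
        (Matrix.diagonal fun i => z ^ κ i).submatrix σ σ :=
      (Matrix.submatrix_diagonal_equiv (fun i => z ^ κ i) σ).symm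
    rw [hdiag, Matrix.submatrix_mul_equiv, Matrix.submatrix_mul_equiv, hfac z hz]
    rfl

end HasPartialIndices

end MatrixLoops

section Uniqueness

variable {E : Type*} [NormedAddCommGroup E]

lemma diffContOnCl_update_comp_inv [NormedSpace ℂ E] [CompleteSpace E] {b : ℂ → E} {l : E}
    (hb : DiffContOnCl ℂ b (closedBall 0 1)ᶜ) (hl : Tendsto b (Bornology.cobounded ℂ) (𝓝 l)) :
    DiffContOnCl ℂ (Function.update (fun u => b u⁻¹) 0 l) (ball 0 1) := by
  set φ := Function.update (fun u => b u⁻¹) 0 l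
  have hcont_zero : ContinuousAt φ 0 :=
    continuousAt_update_same.2 (hl.comp tendsto_inv₀_nhdsNE_zero)
  have heq : Set.EqOn φ (fun u => b u⁻¹) {0}ᶜ := fun u hu => Function.update_of_ne hu _ _
  refine ⟨?_, ?_⟩
  · refine (Complex.differentiableOn_compl_singleton_and_continuousAt_iff
      (ball_mem_nhds (0 : ℂ) one_pos)).1 ⟨DifferentiableOn.congr (f := fun u => b u⁻¹) ?_
        fun u hu => heq hu.2, hcont_zero⟩
    refine hb.1.comp (differentiableOn_inv.mono fun u hu => hu.2) fun u hu => ?_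
    have hu0 : 0 < ‖u‖ := norm_pos_iff.2 hu.2
    simpa using (one_lt_inv₀ hu0).2 (by simpa using hu.1)
  · rw [closure_ball _ one_ne_zero]
    intro u hu
    obtain rfl | hu0 := eq_or_ne u 0
    · exact hcont_zero.continuousWithinAt
    have hcont : ContinuousOn (fun u => b u⁻¹) (closedBall 0 1 ∩ {0}ᶜ) := by
      refine hb.2.comp (continuousOn_inv₀.mono Set.inter_subset_right) fun v hv => ?_
      rw [closure_compl_closedBall]
      have hv0 : 0 < ‖v‖ := norm_pos_iff.2 hv.2
      simpa using (one_le_inv₀ hv0).2 (by simpa using hv.1)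
    exact (continuousWithinAt_inter (isOpen_compl_singleton.mem_nhds hu0)).1
      ((hcont.congr (heq.mono Set.inter_subset_right)) u ⟨hu, hu0⟩)

lemma diffContOnCl_conj_conj {φ : ℂ → ℂ} (hφ : DiffContOnCl ℂ φ (ball 0 1)) :
    DiffContOnCl ℂ (fun z => starRingEnd ℂ (φ (starRingEnd ℂ z))) (ball 0 1) := by
  refine ⟨fun z hz => ?_, Complex.continuous_conj.comp_continuousOn
    (hφ.2.comp Complex.continuous_conj.continuousOn fun z hz => ?_)⟩
  · exact (differentiableAt_conj_conj_iff.2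
      (hφ.differentiableAt isOpen_ball (by simpa using hz))).differentiableWithinAt
  · simpa [closure_ball] using hz

lemma eq_zero_on_circle_of_circleAverage_sq_eq_zero {a : ℂ → E}
    (ha : ContinuousOn a (sphere 0 1))
    (havg : Real.circleAverage (fun z => ‖a z‖ ^ 2) 0 1 = 0) :
    ∀ z, ‖z‖ = 1 → a z = 0 := by
  intro z hz
  obtain ⟨θ, hθ, rfl⟩ : z ∈ circleMap 0 1 '' Set.Ioc 0 (2 * Real.pi) := by
    simpa [image_circleMap_Ioc] using hz
  by_contra hne
  have hcont : Continuous fun θ : ℝ => ‖a (circleMap 0 1 θ)‖ ^ 2 :=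
    (ha.comp_continuous (continuous_circleMap 0 1) fun θ => by simp).norm.pow 2
  have hpos := intervalIntegral.integral_pos Real.two_pi_pos hcont.continuousOn
    (fun x _ => by positivity) ⟨θ, ⟨hθ.1.le, hθ.2⟩, by positivity⟩
  have h2pi : (2 * Real.pi)⁻¹ ≠ 0 := inv_ne_zero Real.two_pi_pos.ne'
  exact hpos.ne' ((smul_eq_zero.1 havg).resolve_left h2pi)

-- With `φ u = b u⁻¹`, the function `a z * conj (φ (conj z))` equals `‖a z‖ ^ 2` on the circle and
-- vanishes at `0`, so the mean value property gives `∫ ‖a‖ ^ 2 = 0`.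
lemma eq_zero_on_circle_of_eq_exterior {a b : ℂ → ℂ} (ha : DiffContOnCl ℂ a (ball 0 1))
    (hb : DiffContOnCl ℂ b (closedBall 0 1)ᶜ) (hb0 : Tendsto b (Bornology.cobounded ℂ) (𝓝 0))
    (hab : ∀ z, ‖z‖ = 1 → a z = b z) : ∀ z, ‖z‖ = 1 → a z = 0 := by
  set φ := Function.update (fun u => b u⁻¹) 0 0
  set ψ : ℂ → ℂ := fun z => starRingEnd ℂ (φ (starRingEnd ℂ z))
  have hψ : DiffContOnCl ℂ ψ (ball 0 1) :=
    diffContOnCl_conj_conj (diffContOnCl_update_comp_inv hb hb0)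
  have haψ : DiffContOnCl ℂ (fun z => a z * ψ z) (ball 0 |1|) := by
    simpa using ha.smul hψ
  have hcircle : ∀ z ∈ sphere (0 : ℂ) |1|, a z * ψ z = ((‖a z‖ ^ 2 : ℝ) : ℂ) := by
    intro z hz
    have hz1 : ‖z‖ = 1 := by simpa using hz
    have hz0 : z ≠ 0 := by
      rintro rfl
      simp at hz1
    have hconj : (starRingEnd ℂ z)⁻¹ = z := by
      rw [← Complex.inv_eq_conj hz1, inv_inv]
    have hφ : φ (starRingEnd ℂ z) = a z := by
      rw [show φ (starRingEnd ℂ z) = b (starRingEnd ℂ z)⁻¹ from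
        Function.update_of_ne (by simpa using hz0) _ _, hconj, hab z hz1]
    simp only [ψ, hφ, Complex.mul_conj, Complex.normSq_eq_norm_sq]
  have havg : ((Real.circleAverage (fun z => ‖a z‖ ^ 2) 0 1 : ℝ) : ℂ) = a 0 * ψ 0 := by
    rw [← haψ.circleAverage, Real.circleAverage_congr_sphere hcircle]
    simp only [Real.circleAverage_def, intervalIntegral.integral_ofReal, smul_eq_mul,
      Complex.real_smul, Complex.ofReal_mul]
  refine eq_zero_on_circle_of_circleAverage_sq_eq_zero
    (ha.2.mono (closure_ball (0 : ℂ) one_ne_zero ▸ sphere_subset_closedBall)) ?_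
  simpa [ψ, φ] using havg

lemma det_eq_zero_of_zero_block {R ι : Type*} [CommRing R] [Fintype ι] [DecidableEq ι]
    (B : Matrix ι ι R) (s t : Finset ι) (hst : Fintype.card ι < s.card + t.card)
    (hB : ∀ i ∈ s, ∀ j ∈ t, B i j = 0) : B.det = 0 := by
  rw [Matrix.det_apply]
  refine Finset.sum_eq_zero fun σ _ => ?_
  obtain ⟨j, hjt, hjs⟩ : ∃ j ∈ t, σ j ∈ s := by
    by_contra! hcon
    have hdisj : Disjoint s (t.map σ.toEmbedding) := by
      rw [Finset.disjoint_left]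
      rintro i his hit
      obtain ⟨j, hj, rfl⟩ := Finset.mem_map.1 hit
      exact hcon j hj his
    have hcard := Finset.card_le_univ (s.disjUnion _ hdisj)
    rw [Finset.card_disjUnion, Finset.card_map] at hcard
    exact hst.not_ge hcard
  have hprod : ∏ i, B (σ i) i = 0 := Finset.prod_eq_zero (Finset.mem_univ j) (hB _ hjs _ hjt)
  rw [hprod, smul_zero]

lemma eq_of_antitone_of_card_le_eq {n : ℕ} {κ κ' : Fin n → ℤ} (hκ : Antitone κ)
    (hκ' : Antitone κ')
    (hcard : ∀ c, (Finset.univ.filter (c ≤ κ ·)).card = (Finset.univ.filter (c ≤ κ' ·)).card) :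
    κ = κ' := by
  have hle : ∀ {μ ν : Fin n → ℤ}, Antitone μ → Antitone ν →
      (∀ c, (Finset.univ.filter (c ≤ μ ·)).card ≤ (Finset.univ.filter (c ≤ ν ·)).card) →
      μ ≤ ν := by
    intro μ ν hμ hν hcard m
    by_contra! hlt
    have hμcard : m + 1 ≤ (Finset.univ.filter (μ m ≤ μ ·)).card := by
      rw [← Fin.card_Iic]
      exact Finset.card_le_card fun i hi => by simpa using hμ (Finset.mem_Iic.1 hi)
    have hνcard : (Finset.univ.filter (μ m ≤ ν ·)).card ≤ m := by
      rw [← Fin.card_Iio]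
      refine Finset.card_le_card fun i hi => Finset.mem_Iio.2 (not_le.1 fun hmi => ?_)
      exact (hlt.trans_le (Finset.mem_filter.1 hi).2).not_ge (hν hmi)
    have := hcard (μ m)
    omega
  exact le_antisymm (hle hκ hκ' fun c => (hcard c).le) (hle hκ' hκ fun c => (hcard c).ge)

end Uniqueness

namespace HasPartialIndices

open scoped Matrix.Norms.Operator

variable {ι : Type*} [Fintype ι] [DecidableEq ι] {f : ℂ → Matrix ι ι ℂ} {κ κ' : ι → ℤ}

lemma exists_intertwining (hκ : HasPartialIndices f κ) (hκ' : HasPartialIndices f κ') :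
    ∃ A B M, IsPlusLoop A ∧ IsMinusLoop B M ∧ ∀ z, ‖z‖ = 1 →
      A z * Matrix.diagonal (fun i => z ^ κ i) = Matrix.diagonal (fun i => z ^ κ' i) * B z := by
  obtain ⟨Fp, Fm, L, hFp, hFm, hF⟩ := hκ
  obtain ⟨Gp, Gm, L', hGp, hGm, hG⟩ := hκ'
  refine ⟨_, _, _, hGp.ringInverse.mul hFp, hGm.mul hFm.ringInverse, fun z hz => ?_⟩
  calc (Gp z)⁻¹ʳ * Fp z * Matrix.diagonal (fun i => z ^ κ i)
      = (Gp z)⁻¹ʳ * (Fp z * Matrix.diagonal (fun i => z ^ κ i) * Fm z) * (Fm z)⁻¹ʳ := by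
        simp only [mul_assoc, Ring.mul_inverse_cancel _ (hFm.isUnit z hz.ge), mul_one]
    _ = (Gp z)⁻¹ʳ * (Gp z * Matrix.diagonal (fun i => z ^ κ' i) * Gm z) * (Fm z)⁻¹ʳ := by
        rw [← hF z hz, ← hG z hz]
    _ = Matrix.diagonal (fun i => z ^ κ' i) * (Gm z * (Fm z)⁻¹ʳ) := by
        simp only [← mul_assoc, Ring.inverse_mul_cancel _ (hGp.isUnit z hz.le), one_mul]

lemma intertwining_entry_eq_zero {A B : ℂ → Matrix ι ι ℂ} {M : Matrix ι ι ℂ} {i j : ι}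
    (hA : IsPlusLoop A) (hB : IsMinusLoop B M)
    (hAB : ∀ z, ‖z‖ = 1 →
      A z * Matrix.diagonal (fun i => z ^ κ i) = Matrix.diagonal (fun i => z ^ κ' i) * B z)
    (hij : κ' i < κ j) : ∀ z, ‖z‖ = 1 → A z i j = 0 := by
  obtain ⟨m, hm⟩ : ∃ m : ℕ, κ j - κ' i = m + 1 := ⟨(κ j - κ' i - 1).toNat, by omega⟩
  have hb : (fun z => z⁻¹) ^ (m + 1) * (fun z => B z i j) ∈
      smoothBoundaryAlgebra (closedBall 0 1)ᶜ ℂ :=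
    mul_mem (pow_mem inv_mem_smoothBoundaryAlgebra _)
      (matrix_mem_smoothBoundaryAlgebra_iff.1 hB.mem i j)
  refine eq_zero_on_circle_of_eq_exterior
    (matrix_mem_smoothBoundaryAlgebra_iff.1 hA.mem i j).1 hb.1 ?_ fun z hz => ?_
  · have hBij : Tendsto (fun z => B z i j) (Bornology.cobounded ℂ) (𝓝 (M i j)) :=
      ((continuous_id.matrix_elem i j).tendsto M).comp hB.tendsto
    simpa [Pi.mul_def, Pi.pow_def] using (tendsto_inv₀_cobounded.pow (m + 1)).mul hBij
  · have hz0 : z ≠ 0 := norm_pos_iff.1 (hz ▸ one_pos)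
    have hABij := congrFun (congrFun (hAB z hz) i) j
    rw [Matrix.mul_diagonal, Matrix.diagonal_mul] at hABij
    have hκj : z ^ κ j = z ^ κ' i * z ^ (m + 1) := by
      rw [← zpow_natCast, ← zpow_add₀ hz0]
      congr 1
      push_cast
      omega
    rw [hκj] at hABij
    have hentry : A z i j * z ^ (m + 1) = B z i j :=
      mul_left_cancel₀ (zpow_ne_zero (κ' i) hz0) (by linear_combination hABij)
    simp [← hentry, mul_left_comm _ (A z i j), hz0]

lemma card_filter_le (hκ : HasPartialIndices f κ) (hκ' : HasPartialIndices f κ') (c : ℤ) :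
    (Finset.univ.filter (c ≤ κ ·)).card ≤ (Finset.univ.filter (c ≤ κ' ·)).card := by
  obtain ⟨A, B, M, hA, hB, hAB⟩ := exists_intertwining hκ hκ'
  by_contra! hlt
  have hdet : (A 1).det = 0 := by
    refine det_eq_zero_of_zero_block _ (Finset.univ.filter (¬ c ≤ κ' ·))
      (Finset.univ.filter (c ≤ κ ·)) ?_ fun i hi j hj => ?_
    · have := Finset.card_filter_add_card_filter_not (s := Finset.univ) (c ≤ κ' ·)
      rw [Finset.card_univ] at this
      omega
    · exact intertwining_entry_eq_zero hA hB hAB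
        ((not_le.1 (Finset.mem_filter.1 hi).2).trans_le (Finset.mem_filter.1 hj).2) 1 (by simp)
  exact ((Matrix.isUnit_iff_isUnit_det _).1 (hA.isUnit 1 (by simp))).ne_zero hdet

theorem unique_of_antitone {n : ℕ} {f : ℂ → Matrix (Fin n) (Fin n) ℂ} {κ κ' : Fin n → ℤ}
    (hκ : HasPartialIndices f κ) (hκ' : HasPartialIndices f κ') (hanti : Antitone κ)
    (hanti' : Antitone κ') : κ = κ' :=
  eq_of_antitone_of_card_le_eq hanti hanti' fun c =>
    le_antisymm (card_filter_le hκ hκ' c) (card_filter_le hκ' hκ c)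

end HasPartialIndices

section WienerNorm

open scoped NNReal ENNReal

/-- Weights for which the weighted `ℓ¹` sequences on `ℤ` form a Banach algebra under
convolution. -/
structure IsBeurlingWeight (w : ℤ → ℝ≥0) : Prop where
  one_le : 1 ≤ w
  map_add_le_mul : ∀ j k, w (j + k) ≤ w j * w k

/-- The polynomial weight `k ↦ (1 + ε|k|) ^ s`. -/
def polyWeight (ε : ℝ≥0) (s : ℕ) (k : ℤ) : ℝ≥0 := (1 + ε * k.natAbs) ^ s

lemma isBeurlingWeight_one : IsBeurlingWeight 1 := ⟨le_rfl, fun _ _ => by simp⟩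

lemma isBeurlingWeight_polyWeight (ε : ℝ≥0) (s : ℕ) : IsBeurlingWeight (polyWeight ε s) := by
  refine ⟨fun k => one_le_pow₀ le_self_add, fun j k => ?_⟩
  rw [polyWeight, polyWeight, polyWeight, ← mul_pow]
  gcongr
  have hnatAbs : ((j + k).natAbs : ℝ≥0) ≤ j.natAbs + k.natAbs := by
    exact_mod_cast Int.natAbs_add_le j k
  calc 1 + ε * ((j + k).natAbs : ℝ≥0) ≤ 1 + ε * (j.natAbs + k.natAbs) := by gcongr
    _ ≤ 1 + ε * (j.natAbs + k.natAbs) + ε * j.natAbs * (ε * k.natAbs) := le_self_add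
    _ = _ := by ring

lemma polyWeight_le_one_add {ε : ℝ≥0} (hε : ε ≤ 1) (s : ℕ) (k : ℤ) :
    polyWeight ε s k ≤ 1 + ε * polyWeight 1 s k := by
  have hconv := (convexOn_pow s).2 (Set.mem_Ici.2 zero_le_one)
    (Set.mem_Ici.2 (by positivity : (0 : ℝ) ≤ 1 + k.natAbs))
    (sub_nonneg.2 (NNReal.coe_le_one.2 hε)) ε.2 (sub_add_cancel 1 (ε : ℝ))
  rw [← NNReal.coe_le_coe]
  simp only [polyWeight, smul_eq_mul, mul_one, one_pow, one_mul] at hconv ⊢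
  push_cast
  calc (1 + (ε : ℝ) * k.natAbs) ^ s = (1 - ε + ε * (1 + k.natAbs)) ^ s := by ring
    _ ≤ 1 - ε + ε * (1 + k.natAbs) ^ s := hconv
    _ ≤ 1 + ε * (1 + k.natAbs) ^ s := by linarith [ε.2]

lemma polyWeight_one_le_inv_pow_mul {ε : ℝ≥0} (hε0 : ε ≠ 0) (hε : ε ≤ 1) (s : ℕ) (k : ℤ) :
    polyWeight 1 s k ≤ ε⁻¹ ^ s * polyWeight ε s k := by
  rw [polyWeight, polyWeight, ← mul_pow, mul_add, mul_one, inv_mul_cancel_left₀ hε0, one_mul]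
  gcongr
  exact (one_le_inv₀ (pos_iff_ne_zero.2 hε0)).2 hε

variable {E : Type*} [NormedAddCommGroup E] {w : ℤ → ℝ≥0} {a b : ℤ → E}

/-- The `ℓ¹` norm of the family `a` with weight `w`, with value `⊤` if `a` is not summable. -/
noncomputable def wienerNorm (w : ℤ → ℝ≥0) (a : ℤ → E) : ℝ≥0∞ := ∑' k, ‖a k‖ₑ * w k

/-- Families that decay faster than every power of the index. -/
def RapidlyDecreasing (a : ℤ → E) : Prop := ∀ s, wienerNorm (polyWeight 1 s) a < ⊤

lemma wienerNorm_mono (h : ∀ k, ‖a k‖ₑ ≤ ‖b k‖ₑ) : wienerNorm w a ≤ wienerNorm w b :=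
  ENNReal.tsum_le_tsum fun k => by gcongr; exact h k

lemma wienerNorm_add_le : wienerNorm w (a + b) ≤ wienerNorm w a + wienerNorm w b := by
  rw [wienerNorm, wienerNorm, wienerNorm, ← ENNReal.tsum_add]
  refine ENNReal.tsum_le_tsum fun k => ?_
  rw [← add_mul]
  gcongr
  exact enorm_add_le _ _

lemma wienerNorm_tsum_le {d : ℕ → ℤ → E} :
    wienerNorm w (fun k => ∑' j, d j k) ≤ ∑' j, wienerNorm w (d j) := by
  calc wienerNorm w (fun k => ∑' j, d j k) ≤ ∑' k, ∑' j, ‖d j k‖ₑ * w k := by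
        refine ENNReal.tsum_le_tsum fun k => ?_
        rw [ENNReal.tsum_mul_right]
        gcongr
        exact enorm_tsum_le_tsum_enorm
    _ = ∑' j, wienerNorm w (d j) := ENNReal.tsum_comm

lemma wienerNorm_le_of_le_mul {w v : ℤ → ℝ≥0} {c : ℝ≥0} (h : ∀ k, w k ≤ c * v k) :
    wienerNorm w a ≤ c * wienerNorm v a := by
  rw [wienerNorm, wienerNorm, ← ENNReal.tsum_mul_left]
  refine ENNReal.tsum_le_tsum fun k => ?_
  calc ‖a k‖ₑ * w k ≤ ‖a k‖ₑ * (c * v k) := by gcongr; exact_mod_cast h k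
    _ = _ := by ring

lemma summable_norm_of_wienerNorm_lt_top (h : wienerNorm 1 a < ⊤) : Summable fun k => ‖a k‖ := by
  exact tsum_enorm_ne_top_iff_summable_norm.1 (by simpa [wienerNorm] using h.ne)

lemma RapidlyDecreasing.wienerNorm_lt_top (ha : RapidlyDecreasing a) : wienerNorm 1 a < ⊤ := by
  simpa [polyWeight, wienerNorm] using ha 0

lemma RapidlyDecreasing.summable_norm (ha : RapidlyDecreasing a) : Summable fun k => ‖a k‖ :=
  summable_norm_of_wienerNorm_lt_top ha.wienerNorm_lt_top

lemma RapidlyDecreasing.summable_norm_mul_pow (ha : RapidlyDecreasing a) (s : ℕ) :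
    Summable fun k => ‖a k‖ * (1 + (k.natAbs : ℝ)) ^ s := by
  have hsum : ∑' k, ((‖a k‖₊ * polyWeight 1 s k : ℝ≥0) : ℝ≥0∞) ≠ ⊤ := by
    simpa only [wienerNorm, ENNReal.coe_mul, enorm_eq_nnnorm] using (ha s).ne
  simpa [polyWeight] using NNReal.summable_coe.2 (ENNReal.tsum_coe_ne_top_iff_summable.1 hsum)

lemma RapidlyDecreasing.mono (hb : RapidlyDecreasing b) (h : ∀ k, ‖a k‖ₑ ≤ ‖b k‖ₑ) :
    RapidlyDecreasing a := fun s => (wienerNorm_mono h).trans_lt (hb s)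

lemma RapidlyDecreasing.add (ha : RapidlyDecreasing a) (hb : RapidlyDecreasing b) :
    RapidlyDecreasing (a + b) := fun s =>
  wienerNorm_add_le.trans_lt (ENNReal.add_lt_top.2 ⟨ha s, hb s⟩)

lemma RapidlyDecreasing.exists_wienerNorm_polyWeight_lt (ha : RapidlyDecreasing a) {r : ℝ≥0∞}
    (hr : wienerNorm 1 a < r) (s : ℕ) :
    ∃ ε : ℝ≥0, ε ≠ 0 ∧ ε ≤ 1 ∧ wienerNorm (polyWeight ε s) a < r := by
  obtain ⟨δ, hδ, hδlt⟩ := ENNReal.exists_nnreal_pos_mul_lt (ha s).ne (tsub_pos_of_lt hr).ne'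
  have hle : wienerNorm (polyWeight (min δ 1) s) a ≤
      wienerNorm 1 a + min δ 1 * wienerNorm (polyWeight 1 s) a := by
    rw [wienerNorm, wienerNorm, wienerNorm, ← ENNReal.tsum_mul_left, ← ENNReal.tsum_add]
    refine ENNReal.tsum_le_tsum fun k => ?_
    calc ‖a k‖ₑ * polyWeight (min δ 1) s k
        ≤ ‖a k‖ₑ * (1 + min δ 1 * polyWeight 1 s k : ℝ≥0) := by
          gcongr
          exact polyWeight_le_one_add (min_le_right _ _) s k
      _ = _ := by push_cast; simp; ring
  refine ⟨min δ 1, (lt_min hδ one_pos).ne', min_le_right _ _, hle.trans_lt ?_⟩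
  calc wienerNorm 1 a + min δ 1 * wienerNorm (polyWeight 1 s) a
      ≤ wienerNorm 1 a + δ * wienerNorm (polyWeight 1 s) a := by
        gcongr
        exact min_le_left _ _
    _ < r := lt_tsub_iff_left.1 hδlt

end WienerNorm

section Convolution

open scoped NNReal ENNReal

variable {A : Type*} [NormedRing A] {w : ℤ → ℝ≥0} {a b : ℤ → A}

/-- The convolution of two families indexed by `ℤ`, the coefficients of the product of two Laurent
series. -/
noncomputable def convolution (a b : ℤ → A) (m : ℤ) : A := ∑' k, a (m - k) * b k

lemma tsum_enorm_mul_le (m : ℤ) :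
    ∑' k, ‖a (m - k) * b k‖ₑ ≤ wienerNorm 1 a * wienerNorm 1 b := by
  rw [wienerNorm, wienerNorm, ← ENNReal.tsum_mul_left]
  refine ENNReal.tsum_le_tsum fun k => ?_
  simp only [Pi.one_apply, ENNReal.coe_one, mul_one]
  calc ‖a (m - k) * b k‖ₑ ≤ ‖a (m - k)‖ₑ * ‖b k‖ₑ := enorm_smul_le
    _ ≤ _ := by
        gcongr
        exact ENNReal.le_tsum (f := fun j => ‖a j‖ₑ) (m - k)

lemma wienerNorm_convolution_le (hw : IsBeurlingWeight w) :
    wienerNorm w (convolution a b) ≤ wienerNorm w a * wienerNorm w b := by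
  have hterm : ∀ m k, ‖a (m - k) * b k‖ₑ * w m ≤
      ‖a (m - k)‖ₑ * w (m - k) * (‖b k‖ₑ * w k) := fun m k => by
    have hwm : w m ≤ w (m - k) * w k := by simpa using hw.map_add_le_mul (m - k) k
    calc ‖a (m - k) * b k‖ₑ * w m ≤ ‖a (m - k)‖ₑ * ‖b k‖ₑ * (w (m - k) * w k) := by
          gcongr
          · exact enorm_smul_le
          · exact_mod_cast hwm
      _ = _ := by ring
  calc wienerNorm w (convolution a b)
      ≤ ∑' m, ∑' k, ‖a (m - k) * b k‖ₑ * w m := by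
        refine ENNReal.tsum_le_tsum fun m => ?_
        rw [ENNReal.tsum_mul_right]
        gcongr
        exact enorm_tsum_le_tsum_enorm
    _ ≤ ∑' m, ∑' k, ‖a (m - k)‖ₑ * w (m - k) * (‖b k‖ₑ * w k) :=
        ENNReal.tsum_le_tsum fun m => ENNReal.tsum_le_tsum fun k => hterm m k
    _ = ∑' k, (∑' m, ‖a (m - k)‖ₑ * w (m - k)) * (‖b k‖ₑ * w k) := by
        rw [ENNReal.tsum_comm]
        simp only [ENNReal.tsum_mul_right]
    _ = wienerNorm w a * wienerNorm w b := by
        rw [wienerNorm, wienerNorm, ← ENNReal.tsum_mul_left]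
        refine tsum_congr fun k => ?_
        congr 1
        exact (Equiv.subRight k).tsum_eq fun j => ‖a j‖ₑ * (w j : ℝ≥0∞)

lemma RapidlyDecreasing.convolution (ha : RapidlyDecreasing a) (hb : RapidlyDecreasing b) :
    RapidlyDecreasing (convolution a b) := fun s =>
  (wienerNorm_convolution_le (isBeurlingWeight_polyWeight 1 s)).trans_lt
    (ENNReal.mul_lt_top (ha s) (hb s))

end Convolution

section WienerHopf

open scoped NNReal ENNReal

variable {A : Type*} [NormedRing A] {w : ℤ → ℝ≥0} {e : ℤ → A} (S : Set ℤ)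

/-- The terms of the Neumann series that solves the Wiener–Hopf equation
`x = -S.indicator (e + convolution x e)`. -/
noncomputable def wienerHopfTerm (S : Set ℤ) (e : ℤ → A) : ℕ → ℤ → A
  | 0 => -S.indicator e
  | j + 1 => -S.indicator (convolution (wienerHopfTerm S e j) e)

/-- The solution of the Wiener–Hopf equation `x = -S.indicator (e + convolution x e)`, given by its
Neumann series. -/
noncomputable def wienerHopfSolution (S : Set ℤ) (e : ℤ → A) (k : ℤ) : A :=
  ∑' j, wienerHopfTerm S e j k

lemma wienerNorm_neg_indicator_le (a : ℤ → A) :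
    wienerNorm w (-S.indicator a) ≤ wienerNorm w a :=
  wienerNorm_mono fun k => by
    rw [Pi.neg_apply, enorm_neg]
    exact enorm_indicator_le_enorm_self a k

lemma wienerNorm_wienerHopfTerm_le (hw : IsBeurlingWeight w) (j : ℕ) :
    wienerNorm w (wienerHopfTerm S e j) ≤ wienerNorm w e ^ (j + 1) := by
  induction j with
  | zero => simpa [wienerHopfTerm] using wienerNorm_neg_indicator_le S e
  | succ j ih =>
    calc wienerNorm w (wienerHopfTerm S e (j + 1))
        ≤ wienerNorm w (convolution (wienerHopfTerm S e j) e) := wienerNorm_neg_indicator_le S _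
      _ ≤ wienerNorm w (wienerHopfTerm S e j) * wienerNorm w e := wienerNorm_convolution_le hw
      _ ≤ wienerNorm w e ^ (j + 1 + 1) := by
        rw [pow_succ _ (j + 1)]
        gcongr

lemma tsum_wienerNorm_wienerHopfTerm_le (hw : IsBeurlingWeight w) :
    ∑' j, wienerNorm w (wienerHopfTerm S e j) ≤ wienerNorm w e * (1 - wienerNorm w e)⁻¹ := by
  calc ∑' j, wienerNorm w (wienerHopfTerm S e j) ≤ ∑' j, wienerNorm w e ^ (j + 1) :=
        ENNReal.tsum_le_tsum (wienerNorm_wienerHopfTerm_le S hw)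
    _ = wienerNorm w e * (1 - wienerNorm w e)⁻¹ := by
        simp only [pow_succ', ENNReal.tsum_mul_left, ENNReal.tsum_geometric]

lemma wienerNorm_wienerHopfSolution_le (hw : IsBeurlingWeight w) :
    wienerNorm w (wienerHopfSolution S e) ≤ wienerNorm w e * (1 - wienerNorm w e)⁻¹ :=
  wienerNorm_tsum_le.trans (tsum_wienerNorm_wienerHopfTerm_le S hw)

-- A polynomial weight of any order becomes harmless, for the smallness of `e`, after rescaling `k`
-- by a small `ε`.
lemma rapidlyDecreasing_wienerHopfSolution (he : RapidlyDecreasing e) (hlt : wienerNorm 1 e < 1) :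
    RapidlyDecreasing (wienerHopfSolution S e) := fun s => by
  obtain ⟨ε, hε0, hε1, hε⟩ := he.exists_wienerNorm_polyWeight_lt hlt s
  refine (wienerNorm_le_of_le_mul (polyWeight_one_le_inv_pow_mul hε0 hε1 s)).trans_lt
    (ENNReal.mul_lt_top ENNReal.coe_lt_top ?_)
  refine (wienerNorm_wienerHopfSolution_le S (isBeurlingWeight_polyWeight ε s)).trans_lt ?_
  exact ENNReal.mul_lt_top (hε.trans ENNReal.one_lt_top)
    (ENNReal.inv_lt_top.2 (tsub_pos_of_lt hε))

lemma tsum_wienerNorm_wienerHopfTerm_lt_top (hlt : wienerNorm 1 e < 1) :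
    ∑' j, wienerNorm 1 (wienerHopfTerm S e j) < ⊤ :=
  (tsum_wienerNorm_wienerHopfTerm_le S isBeurlingWeight_one).trans_lt <|
    ENNReal.mul_lt_top (hlt.trans ENNReal.one_lt_top) (ENNReal.inv_lt_top.2 (tsub_pos_of_lt hlt))

variable [CompleteSpace A]

lemma summable_wienerHopfTerm (hlt : wienerNorm 1 e < 1) (k : ℤ) :
    Summable fun j => wienerHopfTerm S e j k := by
  refine Summable.of_enorm (ne_top_of_le_ne_top (tsum_wienerNorm_wienerHopfTerm_lt_top S hlt).ne
    (ENNReal.tsum_le_tsum fun j => ?_))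
  simpa [wienerNorm] using ENNReal.le_tsum (f := fun i => ‖wienerHopfTerm S e j i‖ₑ) k

lemma convolution_wienerHopfSolution (hlt : wienerNorm 1 e < 1) (m : ℤ) :
    convolution (wienerHopfSolution S e) e m = ∑' j, convolution (wienerHopfTerm S e j) e m := by
  have hsum : Summable fun p : ℕ × ℤ => wienerHopfTerm S e p.1 (m - p.2) * e p.2 := by
    refine Summable.of_enorm ?_
    rw [ENNReal.tsum_prod']
    refine ne_top_of_le_ne_top ?_ (ENNReal.tsum_le_tsum fun j =>
      tsum_enorm_mul_le (a := wienerHopfTerm S e j) (b := e) m)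
    rw [ENNReal.tsum_mul_right]
    exact ENNReal.mul_ne_top (tsum_wienerNorm_wienerHopfTerm_lt_top S hlt).ne
      (hlt.trans ENNReal.one_lt_top).ne
  calc convolution (wienerHopfSolution S e) e m
      = ∑' k, ∑' j, wienerHopfTerm S e j (m - k) * e k :=
        tsum_congr fun k => ((summable_wienerHopfTerm S hlt _).tsum_mul_right _).symm
    _ = _ := hsum.tsum_comm

lemma wienerHopfSolution_eq (hlt : wienerNorm 1 e < 1) :
    wienerHopfSolution S e = -S.indicator (e + convolution (wienerHopfSolution S e) e) := by
  funext m
  rw [wienerHopfSolution, (summable_wienerHopfTerm S hlt m).tsum_eq_zero_add]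
  by_cases hm : m ∈ S
  · simp [wienerHopfTerm, hm, convolution_wienerHopfSolution S hlt, tsum_neg,
      add_comm]
  · simp [wienerHopfTerm, hm]

end WienerHopf

lemma hasDerivAt_circleParam_zpow (k : ℤ) (t : ℝ) :
    HasDerivAt (fun t => circleParam t ^ k)
      (2 * Real.pi * Complex.I * k * circleParam t ^ k) t := by
  simp only [circleParam, ← Complex.exp_int_mul, ← mul_assoc]
  have hlin := (Complex.ofRealCLM.hasDerivAt (x := t)).const_mul (2 * Real.pi * Complex.I * (k : ℂ))
  convert hlin.cexp using 1
  · funext t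
    simp only [Complex.ofRealCLM_apply]
    ring_nf
  · simp only [Complex.ofRealCLM_apply, Complex.ofReal_one]
    ring_nf

lemma norm_circleParam_zpow (k : ℤ) (t : ℝ) : ‖circleParam t ^ k‖ = 1 := by
  rw [norm_zpow, norm_circleParam, one_zpow]

lemma iteratedDeriv_circleParam_zpow (k : ℤ) (s : ℕ) :
    iteratedDeriv s (fun t => circleParam t ^ k) =
      fun t => (2 * Real.pi * Complex.I * k) ^ s * circleParam t ^ k := by
  induction s with
  | zero => simp
  | succ s ih =>
    funext t
    rw [iteratedDeriv_succ, ih, ((hasDerivAt_circleParam_zpow k t).const_mul _).deriv]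
    ring

lemma contDiff_circleParam_zpow (k : ℤ) : ContDiff ℝ ∞ fun t => circleParam t ^ k := by
  simp only [circleParam, ← Complex.exp_int_mul]
  exact (contDiff_const.mul (contDiff_const.mul Complex.ofRealCLM.contDiff)).cexp

lemma isUnit_one_add_of_enorm_lt_one {A : Type*} [NormedRing A] [CompleteSpace A] {x : A}
    (hx : ‖x‖ₑ < 1) : IsUnit (1 + x) := by
  rw [← sub_neg_eq_add]
  refine isUnit_one_sub_of_norm_lt_one ?_
  have hlt : ‖x‖₊ < 1 := enorm_lt_coe.1 (by simpa using hx)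
  rwa [norm_neg]

section LaurentSum

open scoped ENNReal

variable {E : Type*} [NormedAddCommGroup E] [NormedSpace ℂ E] {a b : ℤ → E} {z : ℂ}

/-- The sum of the Laurent series with coefficients `a`. -/
noncomputable def laurentSum (a : ℤ → E) (z : ℂ) : E := ∑' k, z ^ k • a k

lemma enorm_laurentSum_le (h : ∀ k, ‖z ^ k • a k‖ ≤ ‖a k‖) :
    ‖laurentSum a z‖ₑ ≤ wienerNorm 1 a := by
  refine enorm_tsum_le_tsum_enorm.trans (ENNReal.tsum_le_tsum fun k => ?_)
  simpa using enorm_le_iff_norm_le.2 (h k)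

lemma norm_zpow_smul_le_of_norm_le_one (ha : ∀ k < 0, a k = 0) (hz : ‖z‖ ≤ 1) (k : ℤ) :
    ‖z ^ k • a k‖ ≤ ‖a k‖ := by
  rcases lt_or_ge k 0 with hk | hk
  · simp [ha k hk]
  · lift k to ℕ using hk
    rw [norm_smul, norm_zpow, zpow_natCast]
    exact mul_le_of_le_one_left (norm_nonneg _) (pow_le_one₀ (norm_nonneg _) hz)

lemma norm_zpow_smul_le_of_one_le_norm (ha : ∀ k, 0 ≤ k → a k = 0) (hz : 1 ≤ ‖z‖) (k : ℤ) :
    ‖z ^ k • a k‖ ≤ ‖a k‖ := by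
  rcases lt_or_ge k 0 with hk | hk
  · rw [norm_smul, norm_zpow]
    exact mul_le_of_le_one_left (norm_nonneg _) (zpow_le_one_of_nonpos₀ hz hk.le)
  · simp [ha k hk]

variable [CompleteSpace E]

lemma summable_laurentSum (ha : Summable fun k => ‖a k‖) (hz : ‖z‖ = 1) :
    Summable fun k => z ^ k • a k :=
  Summable.of_norm (by simpa [norm_smul, hz] using ha)

lemma laurentSum_add (ha : Summable fun k => ‖a k‖) (hb : Summable fun k => ‖b k‖)
    (hz : ‖z‖ = 1) : laurentSum (a + b) z = laurentSum a z + laurentSum b z := by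
  simp only [laurentSum, Pi.add_apply, smul_add]
  exact (summable_laurentSum ha hz).tsum_add (summable_laurentSum hb hz)

lemma laurentSum_convolution {A : Type*} [NormedRing A] [NormedAlgebra ℂ A] [CompleteSpace A]
    {a b : ℤ → A} (ha : Summable fun k => ‖a k‖) (hb : Summable fun k => ‖b k‖) (hz : ‖z‖ = 1) :
    laurentSum (convolution a b) z = laurentSum a z * laurentSum b z := by
  have hz0 : z ≠ 0 := norm_ne_zero_iff.1 (hz ▸ one_ne_zero)
  have hnorm : ∀ c : ℤ → A, (Summable fun k => ‖c k‖) → Summable fun k => ‖z ^ k • c k‖ :=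
    fun c hc => by simpa [norm_smul, hz] using hc
  let shear : ℤ × ℤ ≃ ℤ × ℤ :=
    ⟨fun p => (p.1 - p.2, p.2), fun p => (p.1 + p.2, p.2), fun p => by simp, fun p => by simp⟩
  have hsum : Summable fun p : ℤ × ℤ => z ^ (p.1 - p.2) • a (p.1 - p.2) * z ^ p.2 • b p.2 :=
    shear.summable_iff.2 (summable_mul_of_summable_norm (hnorm a ha) (hnorm b hb))
  calc laurentSum (convolution a b) z
      = ∑' m, ∑' k, z ^ (m - k) • a (m - k) * z ^ k • b k := by
        refine tsum_congr fun m => ?_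
        rw [convolution, ← tsum_const_smul'' (z ^ m)]
        refine tsum_congr fun k => ?_
        rw [smul_mul_smul_comm, ← zpow_add₀ hz0, sub_add_cancel]
    _ = ∑' p : ℤ × ℤ, z ^ (p.1 - p.2) • a (p.1 - p.2) * z ^ p.2 • b p.2 := hsum.tsum_prod.symm
    _ = ∑' p : ℤ × ℤ, z ^ p.1 • a p.1 * z ^ p.2 • b p.2 :=
        shear.tsum_eq fun p : ℤ × ℤ => z ^ p.1 • a p.1 * z ^ p.2 • b p.2
    _ = laurentSum a z * laurentSum b z :=
        (tsum_mul_tsum_of_summable_norm (hnorm a ha) (hnorm b hb)).symm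

lemma contDiff_laurentSum_circleParam (ha : RapidlyDecreasing a) :
    ContDiff ℝ ∞ fun t => laurentSum a (circleParam t) := by
  refine contDiff_tsum (v := fun s k => (2 * Real.pi) ^ s * (‖a k‖ * (1 + k.natAbs) ^ s))
    (fun k => (contDiff_circleParam_zpow k).smul contDiff_const)
    (fun s _ => (ha.summable_norm_mul_pow s).mul_left _) fun s k t _ => ?_
  have hsmooth : ContDiffAt ℝ s (fun t => circleParam t ^ k) t :=
    ((contDiff_circleParam_zpow k).of_le (mod_cast le_top)).contDiffAt
  rw [norm_iteratedFDeriv_eq_norm_iteratedDeriv, iteratedDeriv_smul_const hsmooth,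
    iteratedDeriv_circleParam_zpow, norm_smul, norm_mul, norm_circleParam_zpow, mul_one, norm_pow]
  have hnorm : ‖2 * (Real.pi : ℂ) * Complex.I * k‖ = 2 * Real.pi * k.natAbs := by
    simp [Nat.cast_natAbs, abs_of_pos Real.pi_pos]
  calc ‖2 * (Real.pi : ℂ) * Complex.I * k‖ ^ s * ‖a k‖
      = (2 * Real.pi) ^ s * (‖a k‖ * (k.natAbs : ℝ) ^ s) := by rw [hnorm]; ring
    _ ≤ (2 * Real.pi) ^ s * (‖a k‖ * (1 + k.natAbs) ^ s) := by
        gcongr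
        linarith

variable {A : Type*} [NormedRing A] [NormedAlgebra ℂ A] [CompleteSpace A] {U : Set ℂ}

lemma laurentSum_mem_smoothBoundaryAlgebra {a : ℤ → A} (hU : IsOpen U) (ha : RapidlyDecreasing a)
    (hdiff : ∀ k, DiffContOnCl ℂ (fun z => z ^ k • a k) U)
    (hle : ∀ k, ∀ z ∈ closure U, ‖z ^ k • a k‖ ≤ ‖a k‖) :
    laurentSum a ∈ smoothBoundaryAlgebra U A :=
  ⟨⟨Complex.differentiableOn_tsum_of_summable_norm ha.summable_norm
      (fun k => (hdiff k).differentiableOn) hU fun k z hz => hle k z (subset_closure hz),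
    continuousOn_tsum (fun k => (hdiff k).continuousOn) ha.summable_norm hle⟩,
    contDiff_laurentSum_circleParam ha⟩

lemma tendsto_laurentSum_cobounded (ha : Summable fun k => ‖a k‖) (hneg : ∀ k, 0 ≤ k → a k = 0) :
    Tendsto (laurentSum a) (Bornology.cobounded ℂ) (𝓝 0) := by
  have hterm : ∀ k, Tendsto (fun z : ℂ => z ^ k • a k) (Bornology.cobounded ℂ) (𝓝 0) := fun k => by
    rcases lt_or_ge k 0 with hk | hk
    · obtain ⟨j, hj⟩ := Int.exists_eq_neg_ofNat hk.le
      have hpow := (tendsto_inv₀_cobounded (α := ℂ)).pow j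
      rw [zero_pow (by omega)] at hpow
      simpa [hj] using hpow.smul_const (a k)
    · simp [hneg k hk]
  have hlarge : ∀ᶠ z in Bornology.cobounded ℂ, 1 ≤ ‖z‖ :=
    tendsto_norm_cobounded_atTop.eventually_ge_atTop 1
  simpa [laurentSum] using! tendsto_tsum_of_dominated_convergence ha hterm
    (hlarge.mono fun z hz => norm_zpow_smul_le_of_one_le_norm hneg hz)

lemma isPlusLoop_one_add_laurentSum {y : ℤ → A} (hy : RapidlyDecreasing y) (hpos : ∀ k < 0, y k = 0)
    (hlt : wienerNorm 1 y < 1) : IsPlusLoop (1 + laurentSum y) := by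
  have hle : ∀ k, ∀ z : ℂ, ‖z‖ ≤ 1 → ‖z ^ k • y k‖ ≤ ‖y k‖ := fun k z hz =>
    norm_zpow_smul_le_of_norm_le_one hpos hz k
  refine ⟨add_mem (one_mem _) (laurentSum_mem_smoothBoundaryAlgebra isOpen_ball hy (fun k => ?_)
    fun k z hz => hle k z ?_), fun z hz => isUnit_one_add_of_enorm_lt_one ?_⟩
  · rcases lt_or_ge k 0 with hk | hk
    · simp [hpos k hk, diffContOnCl_const]
    · lift k to ℕ using hk
      simp only [zpow_natCast]
      exact (differentiable_pow k).smul_const (y k) |>.diffContOnCl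
  · simpa [closure_ball (0 : ℂ) one_ne_zero] using hz
  · exact (enorm_laurentSum_le fun k => hle k z hz).trans_lt hlt

lemma isMinusLoop_one_add_laurentSum {x : ℤ → A} (hx : RapidlyDecreasing x)
    (hneg : ∀ k, 0 ≤ k → x k = 0) (hlt : wienerNorm 1 x < 1) :
    IsMinusLoop (1 + laurentSum x) 1 := by
  have hle : ∀ k, ∀ z : ℂ, 1 ≤ ‖z‖ → ‖z ^ k • x k‖ ≤ ‖x k‖ := fun k z hz =>
    norm_zpow_smul_le_of_one_le_norm hneg hz k
  refine ⟨add_mem (one_mem _) (laurentSum_mem_smoothBoundaryAlgebra isClosed_closedBall.isOpen_compl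
    hx (fun k => ?_) fun k z hz => hle k z ?_), fun z hz => isUnit_one_add_of_enorm_lt_one ?_,
    isUnit_one, ?_⟩
  · have hdiff : DifferentiableOn ℂ (fun z : ℂ => z ^ k • x k) (closure (closedBall 0 1)ᶜ) :=
      fun z hz => by
        rw [closure_compl_closedBall] at hz
        have hz0 : z ≠ 0 := norm_pos_iff.1 (one_pos.trans_le hz)
        exact ((differentiableAt_zpow.2 (.inl hz0)).smul_const _).differentiableWithinAt
    exact hdiff.diffContOnCl
  · rwa [closure_compl_closedBall] at hz
  · exact (enorm_laurentSum_le fun k => hle k z hz).trans_lt hlt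
  · have hlim := (tendsto_laurentSum_cobounded hx.summable_norm hneg).const_add (1 : A)
    rwa [add_zero] at hlim

end LaurentSum

section FourierSeries

open scoped NNReal ENNReal

variable {E : Type*} [NormedAddCommGroup E]

lemma tsum_inv_polyWeight_two_lt_top : ∑' k, ((polyWeight 1 2 k)⁻¹ : ℝ≥0∞) < ⊤ := by
  have hnat : Summable fun m : ℕ => ((1 + (m : ℝ)) ^ 2)⁻¹ := by
    simpa [add_comm] using (summable_nat_add_iff 1).2 (Real.summable_nat_pow_inv.2 one_lt_two)
  have h_summable : Summable fun k => ((polyWeight 1 2 k)⁻¹ : ℝ≥0) := by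
    refine NNReal.summable_coe.1 (Summable.of_nat_of_neg ?_ ?_) <;>
      simpa [polyWeight] using hnat
  have hinv : ∀ k, ((polyWeight 1 2 k)⁻¹ : ℝ≥0∞) = ((polyWeight 1 2 k)⁻¹ : ℝ≥0) := fun k =>
    (ENNReal.coe_inv (one_pos.trans_le ((isBeurlingWeight_polyWeight 1 2).one_le k)).ne').symm
  simpa only [hinv] using (ENNReal.tsum_coe_ne_top_iff_summable.2 h_summable).lt_top

lemma rapidlyDecreasing_of_bound {a : ℤ → E}
    (h : ∀ s, ∃ C : ℝ≥0, ∀ k, ‖a k‖ₑ * polyWeight 1 s k ≤ C) : RapidlyDecreasing a := fun s => by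
  obtain ⟨C, hC⟩ := h (s + 2)
  refine lt_of_le_of_lt (b := C * ∑' k, ((polyWeight 1 2 k)⁻¹ : ℝ≥0∞)) ?_
    (ENNReal.mul_lt_top ENNReal.coe_lt_top tsum_inv_polyWeight_two_lt_top)
  rw [wienerNorm, ← ENNReal.tsum_mul_left]
  refine ENNReal.tsum_le_tsum fun k => ?_
  have hpos : (polyWeight 1 2 k : ℝ≥0∞) ≠ 0 :=
    mod_cast (one_pos.trans_le ((isBeurlingWeight_polyWeight 1 2).one_le k)).ne'
  rw [← div_eq_mul_inv, ENNReal.le_div_iff_mul_le (.inl hpos) (.inl ENNReal.coe_ne_top), mul_assoc,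
    ← ENNReal.coe_mul]
  exact (congrArg (fun c : ℝ≥0 => ‖a k‖ₑ * (c : ℝ≥0∞)) (pow_add _ s 2).symm).trans_le (hC k)

variable [NormedSpace ℂ E] {h : ℝ → E}

lemma fourierCoeffOn_eq_integral_circleParam (h : ℝ → E) (k : ℤ) :
    fourierCoeffOn (zero_lt_one' ℝ) h k = ∫ t in (0 : ℝ)..1, circleParam t ^ (-k) • h t := by
  rw [fourierCoeffOn_eq_integral, sub_zero, div_one, one_smul]
  refine intervalIntegral.integral_congr fun t _ => congrArg (· • h t) ?_
  simp only [← fourier_eq_circleParam_zpow, fourier_coe_apply]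

lemma exists_norm_fourierCoeffOn_le (h : ℝ → E) :
    ∃ C : ℝ≥0, ∀ k, ‖fourierCoeffOn (zero_lt_one' ℝ) h k‖ ≤ C := by
  refine ⟨Real.toNNReal (∫ t in (0 : ℝ)..1, ‖h t‖), fun k => le_trans ?_ (Real.le_coe_toNNReal _)⟩
  rw [fourierCoeffOn_eq_integral_circleParam]
  refine (intervalIntegral.norm_integral_le_integral_norm zero_le_one).trans_eq ?_
  simp only [norm_smul, norm_circleParam_zpow, one_mul]

variable [CompleteSpace E]

lemma fourierCoeffOn_deriv (hh : ContDiff ℝ 1 h) (hper : Function.Periodic h 1) (k : ℤ) :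
    fourierCoeffOn (zero_lt_one' ℝ) (deriv h) k =
      (2 * Real.pi * Complex.I * k) • fourierCoeffOn (zero_lt_one' ℝ) h k := by
  have hparts := intervalIntegral.integral_smul_deriv_eq_deriv_smul (a := 0) (b := 1)
    (fun t _ => hasDerivAt_circleParam_zpow (-k) t)
    (fun t _ => (hh.differentiable one_ne_zero t).hasDerivAt)
    (((contDiff_circleParam_zpow (-k)).continuous.const_mul _).intervalIntegrable _ _)
    ((hh.continuous_deriv le_rfl).intervalIntegrable _ _)
  have hbdry : circleParam 1 ^ (-k) • h 1 = circleParam 0 ^ (-k) • h 0 := by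
    simpa using congrArg₂ (fun z x => z ^ (-k) • x) (circleParam_periodic 0) (hper 0)
  simp only [fourierCoeffOn_eq_integral_circleParam]
  rw [hparts, hbdry, sub_self, zero_sub, ← intervalIntegral.integral_smul,
    ← intervalIntegral.integral_neg]
  refine intervalIntegral.integral_congr fun t _ => ?_
  simp [mul_smul]

lemma natAbs_mul_enorm_fourierCoeffOn_le (hh : ContDiff ℝ 1 h) (hper : Function.Periodic h 1)
    (k : ℤ) : (k.natAbs : ℝ≥0∞) * ‖fourierCoeffOn (zero_lt_one' ℝ) h k‖ₑ ≤
      ‖fourierCoeffOn (zero_lt_one' ℝ) (deriv h) k‖ₑ := by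
  have hscalar : ‖(k.natAbs : ℝ)‖ ≤ ‖2 * Real.pi * Complex.I * (k : ℂ)‖ := by
    rw [norm_natAbs, norm_mul, Complex.norm_intCast, Real.norm_eq_abs]
    refine le_mul_of_one_le_left (abs_nonneg _) ?_
    simp only [norm_mul, Complex.norm_ofNat, Complex.norm_real, Complex.norm_I, mul_one,
      Real.norm_of_nonneg Real.pi_pos.le]
    linarith [Real.two_le_pi]
  rw [fourierCoeffOn_deriv hh hper, enorm_smul, ← Real.enorm_natCast]
  exact mul_le_mul_left (enorm_le_iff_norm_le.2 hscalar) _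

lemma exists_fourierCoeffOn_decay (s : ℕ) (hh : ContDiff ℝ ∞ h) (hper : Function.Periodic h 1) :
    ∃ C : ℝ≥0, ∀ k, ‖fourierCoeffOn (zero_lt_one' ℝ) h k‖ₑ * polyWeight 1 s k ≤ C := by
  induction s generalizing h with
  | zero =>
    obtain ⟨C, hC⟩ := exists_norm_fourierCoeffOn_le h
    exact ⟨C, fun k => by simpa [polyWeight, enorm_le_coe, ← NNReal.coe_le_coe] using hC k⟩
  | succ s ih =>
    have hper' : Function.Periodic (deriv h) 1 := fun t => by
      rw [← deriv_comp_add_const, show (fun t => h (t + 1)) = h from funext hper]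
    obtain ⟨C, hC⟩ := ih hh hper
    obtain ⟨C', hC'⟩ := ih (contDiff_infty_iff_deriv.1 hh).2 hper'
    refine ⟨C + C', fun k => ?_⟩
    set c := fourierCoeffOn (zero_lt_one' ℝ) h k
    calc ‖c‖ₑ * polyWeight 1 (s + 1) k
        = ‖c‖ₑ * polyWeight 1 s k + k.natAbs * ‖c‖ₑ * polyWeight 1 s k := by
          simp only [polyWeight, pow_succ]
          push_cast
          ring
      _ ≤ C + C' := add_le_add (hC k) <| (mul_le_mul_left
          (natAbs_mul_enorm_fourierCoeffOn_le (hh.of_le (mod_cast le_top)) hper k) _).trans (hC' k)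

lemma rapidlyDecreasing_fourierCoeffOn (hh : ContDiff ℝ ∞ h) (hper : Function.Periodic h 1) :
    RapidlyDecreasing (fourierCoeffOn (zero_lt_one' ℝ) h) :=
  rapidlyDecreasing_of_bound fun s => exists_fourierCoeffOn_decay s hh hper

lemma laurentSum_fourierCoeffOn_complex {h : ℝ → ℂ} (hh : ContDiff ℝ ∞ h)
    (hper : Function.Periodic h 1) (t : ℝ) :
    laurentSum (fourierCoeffOn (zero_lt_one' ℝ) h) (circleParam t) = h t := by
  let H : C(UnitAddCircle, ℂ) := ⟨hper.lift, hh.continuous.quotient_lift _⟩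
  have hcoeff : fourierCoeff H = fourierCoeffOn (zero_lt_one' ℝ) h := by
    funext k
    rw [fourierCoeff_eq_intervalIntegral _ k 0, fourierCoeffOn_eq_integral, zero_add, sub_zero]
    rfl
  have hsum := has_pointwise_sum_fourier_series_of_summable (f := H)
    (hcoeff ▸ (rapidlyDecreasing_fourierCoeffOn hh hper).summable_norm.of_norm) t
  simp only [hcoeff, fourier_eq_circleParam_zpow] at hsum
  simpa [laurentSum, mul_comm] using! hsum.tsum_eq

lemma laurentSum_fourierCoeffOn (hh : ContDiff ℝ ∞ h) (hper : Function.Periodic h 1) (t : ℝ) :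
    laurentSum (fourierCoeffOn (zero_lt_one' ℝ) h) (circleParam t) = h t := by
  refine (SeparatingDual.eq_iff_forall_dual_eq (R := ℂ)).2 fun φ => ?_
  have hφ : ∀ k, φ (fourierCoeffOn (zero_lt_one' ℝ) h k) =
      fourierCoeffOn (zero_lt_one' ℝ) (fun t => φ (h t)) k := fun k => by
    simp only [fourierCoeffOn_eq_integral_circleParam, ← map_smul]
    refine (φ.intervalIntegral_comp_comm (Continuous.intervalIntegrable ?_ _ _)).symm
    exact (contDiff_circleParam_zpow (-k)).continuous.smul hh.continuous
  have hφh : ContDiff ℝ ∞ fun t => φ (h t) := (φ.restrictScalars ℝ).contDiff.comp hh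
  rw [← laurentSum_fourierCoeffOn_complex hφh (hper.comp φ) t, laurentSum, φ.map_tsum]
  · simp only [map_smul, hφ]
    rfl
  · exact summable_laurentSum (rapidlyDecreasing_fourierCoeffOn hh hper).summable_norm
      (norm_circleParam t)

end FourierSeries

section LoopFactorization

open scoped NNReal ENNReal

lemma tendsto_wienerNorm_indicator_compl {E : Type*} [NormedAddCommGroup E] {w : ℤ → ℝ≥0}
    {a : ℤ → E} (ha : wienerNorm w a ≠ ⊤) :
    Tendsto (fun S : Finset ℤ => wienerNorm w ((S : Set ℤ)ᶜ.indicator a)) atTop (𝓝 0) := by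
  refine (ENNReal.tendsto_tsum_compl_atTop_zero ha).congr fun S => ?_
  rw [wienerNorm, ← tsum_subtype_eq_of_support_subset (s := (S : Set ℤ)ᶜ)]
  · exact tsum_congr fun k => by simp
  · exact Function.support_subset_iff'.2 fun k hk => by simp [hk]

variable {A : Type*} [NormedRing A] [NormedAlgebra ℂ A] [CompleteSpace A]

lemma exists_rapidlyDecreasing_laurentSum_eq {f : ℂ → A}
    (hf : ContDiff ℝ ∞ fun t => f (circleParam t)) :
    ∃ a, RapidlyDecreasing a ∧ ∀ z, ‖z‖ = 1 → laurentSum a z = f z := by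
  have hper : Function.Periodic (fun t => f (circleParam t)) 1 := circleParam_periodic.comp f
  refine ⟨_, rapidlyDecreasing_fourierCoeffOn hf hper, fun z hz => ?_⟩
  obtain ⟨t, rfl⟩ := exists_circleParam_eq hz
  exact laurentSum_fourierCoeffOn hf hper t

lemma exists_wienerHopf_factorization {e : ℤ → A} (he : RapidlyDecreasing e)
    (hlt : wienerNorm 1 e < 2⁻¹) :
    ∃ X Y : ℂ → A, IsMinusLoop X 1 ∧ IsPlusLoop Y ∧
      ∀ z, ‖z‖ = 1 → X z * (1 + laurentSum e z) = Y z := by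
  have hlt_one : wienerNorm 1 e < 1 := hlt.trans ENNReal.one_half_lt_one
  have hdouble : wienerNorm 1 e + wienerNorm 1 e < 1 := by
    simpa only [ENNReal.inv_two_add_inv_two] using ENNReal.add_lt_add hlt hlt
  set x := wienerHopfSolution (Set.Iio 0) e
  set v := e + convolution x e with hv
  have hxv : x = -(Set.Iio 0).indicator v := wienerHopfSolution_eq _ hlt_one
  have hyv : v + x = (Set.Ici 0).indicator v := by
    rw [hxv, ← sub_eq_add_neg, ← Set.indicator_compl, Set.compl_Iio]
  have hxrapid : RapidlyDecreasing x := rapidlyDecreasing_wienerHopfSolution _ he hlt_one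
  have hvrapid : RapidlyDecreasing v := he.add (hxrapid.convolution he)
  have hxlt : wienerNorm 1 x < 1 := by
    refine (wienerNorm_wienerHopfSolution_le _ isBeurlingWeight_one).trans_lt ?_
    rw [← div_eq_mul_inv]
    refine ENNReal.div_lt_of_lt_mul ?_
    rwa [one_mul, lt_tsub_iff_left]
  have hvlt : wienerNorm 1 v < 1 := by
    calc wienerNorm 1 v ≤ wienerNorm 1 e + wienerNorm 1 x * wienerNorm 1 e :=
          wienerNorm_add_le.trans (by gcongr; exact wienerNorm_convolution_le isBeurlingWeight_one)
      _ ≤ wienerNorm 1 e + wienerNorm 1 e := by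
          gcongr
          exact mul_le_of_le_one_left' hxlt.le
      _ < 1 := hdouble
  refine ⟨1 + laurentSum x, 1 + laurentSum (v + x),
    isMinusLoop_one_add_laurentSum hxrapid (fun k hk => ?_) hxlt,
    isPlusLoop_one_add_laurentSum (hvrapid.add hxrapid) (fun k hk => ?_) ?_, fun z hz => ?_⟩
  · simp [hxv, hk]
  · rw [hyv, Set.indicator_of_notMem (by simpa using hk)]
  · rw [hyv]
    exact (wienerNorm_mono fun k => enorm_indicator_le_enorm_self v k).trans_lt hvlt
  · simp only [Pi.add_apply, Pi.one_apply]
    rw [laurentSum_add hvrapid.summable_norm hxrapid.summable_norm hz, hv,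
      laurentSum_add he.summable_norm (hxrapid.convolution he).summable_norm hz,
      laurentSum_convolution hxrapid.summable_norm he.summable_norm hz]
    noncomm_ring

-- Truncating the coefficients of `f` gives a Laurent polynomial so close to `f` that its quotient
-- by `f` is `1 + e` with `e` small, where the Wiener–Hopf equation is solvable.
theorem exists_laurentPolynomial_mul_plusLoop_mul_minusLoop {f : ℂ → A}
    (hunit : ∀ z, ‖z‖ = 1 → IsUnit (f z)) (hf : ContDiff ℝ ∞ fun t => f (circleParam t)) :
    ∃ (S : Finset ℤ) (a : ℤ → A) (Y X : ℂ → A), IsPlusLoop Y ∧ IsMinusLoop X 1 ∧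
      ∀ z, ‖z‖ = 1 → f z = (∑ k ∈ S, z ^ k • a k) * Y z * X z := by
  obtain ⟨a, ha, haf⟩ := exists_rapidlyDecreasing_laurentSum_eq hf
  obtain ⟨g, hg, hgf⟩ := exists_rapidlyDecreasing_laurentSum_eq
    (f := fun z => (f z)⁻¹ʳ) (contDiff_ringInverse_comp hf fun t => hunit _ (norm_circleParam t))
  have htail : Tendsto (fun S : Finset ℤ =>
      wienerNorm 1 g * wienerNorm 1 ((S : Set ℤ)ᶜ.indicator a)) atTop (𝓝 0) := by
    simpa using ENNReal.Tendsto.const_mul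
      (tendsto_wienerNorm_indicator_compl ha.wienerNorm_lt_top.ne)
      (.inr hg.wienerNorm_lt_top.ne)
  obtain ⟨S, hS⟩ := (htail.eventually_lt_const (by simp : (0 : ℝ≥0∞) < 2⁻¹)).exists
  set b := -(S : Set ℤ)ᶜ.indicator a with hb
  have hbrapid : RapidlyDecreasing b := ha.mono fun k => by
    rw [hb, Pi.neg_apply, enorm_neg]
    exact enorm_indicator_le_enorm_self a k
  have hlt : wienerNorm 1 (convolution g b) < 2⁻¹ := by
    refine (wienerNorm_convolution_le isBeurlingWeight_one).trans_lt (lt_of_eq_of_lt ?_ hS)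
    simp [hb, wienerNorm]
  obtain ⟨X, Y, hX, hY, hXY⟩ := exists_wienerHopf_factorization (hg.convolution hbrapid) hlt
  refine ⟨S, a, fun z => (Y z)⁻¹ʳ, X, hY.ringInverse, hX, fun z hz => ?_⟩
  have hpoly : f z * (1 + laurentSum (convolution g b) z) = ∑ k ∈ S, z ^ k • a k := by
    have hab : a + b = (S : Set ℤ).indicator a := by
      rw [hb, ← sub_eq_add_neg, ← Set.indicator_compl, compl_compl]
    rw [laurentSum_convolution hg.summable_norm hbrapid.summable_norm hz, hgf z hz, mul_add,
      mul_one, Ring.mul_inverse_cancel_left _ _ (hunit z hz), ← haf z hz,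
      ← laurentSum_add ha.summable_norm hbrapid.summable_norm hz, hab, laurentSum,
      tsum_eq_sum (s := S)]
    · exact Finset.sum_congr rfl fun k hk => by simp [hk]
    · exact fun k hk => by simp [hk]
  have hone : (1 + laurentSum (convolution g b) z) * (Y z)⁻¹ʳ * X z = 1 := by
    rw [← (hX.isUnit z hz.ge).mul_right_inj, ← mul_assoc, ← mul_assoc, hXY z hz,
      Ring.mul_inverse_cancel _ (hY.isUnit z hz.le), one_mul, mul_one]
  rw [← hpoly, mul_assoc, mul_assoc, ← mul_assoc (1 + _), hone, mul_one]

end LoopFactorization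

section RowReduction

open Polynomial
open scoped Matrix

lemma eval_reflect {R : Type*} [CommSemiring R] {p : R[X]} {d : ℕ}
    (hp : p.natDegree ≤ d) (z : R) [Invertible z] : z ^ d * (reflect d p).eval ⅟z = p.eval z := by
  simpa [mul_comm] using eval₂_reflect_mul_pow (RingHom.id R) z d p hp

variable {ι K : Type*} [Fintype ι] [Field K]

/-- The matrix of the coefficients of degree `d i` in row `i`; these are the leading coefficients
of the rows when the `d i` are the row degrees. -/
def rowLeadingMatrix (Q : Matrix ι ι K[X]) (d : ι → ℕ) : Matrix ι ι K :=
  Matrix.of fun i j => (Q i j).coeff (d i)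

variable {Q : Matrix ι ι K[X]} {d : ι → ℕ} {c : ι → K} {m : ℕ}

lemma natDegree_vecMul_le (hdeg : ∀ i j, (Q i j).natDegree ≤ d i) (hc : ∀ i, c i ≠ 0 → d i ≤ m)
    (j : ι) : (((fun i => C (c i) * X ^ (m - d i)) ᵥ* Q) j).natDegree ≤ m := by
  refine natDegree_sum_le_of_forall_le _ _ fun i _ => ?_
  by_cases hi : c i = 0
  · simp [hi]
  · calc _ ≤ (C (c i) * X ^ (m - d i)).natDegree + (Q i j).natDegree := natDegree_mul_le
      _ ≤ (m - d i) + d i := add_le_add (natDegree_C_mul_X_pow_le _ _) (hdeg i j)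
      _ = m := Nat.sub_add_cancel (hc i hi)

lemma coeff_vecMul (hc : ∀ i, c i ≠ 0 → d i ≤ m) (j : ι) :
    (((fun i => C (c i) * X ^ (m - d i)) ᵥ* Q) j).coeff m = (c ᵥ* rowLeadingMatrix Q d) j := by
  simp only [Matrix.vecMul, dotProduct, finsetSum_coeff]
  refine Finset.sum_congr rfl fun i _ => ?_
  by_cases hi : c i = 0
  · simp [hi]
  · rw [mul_assoc, coeff_C_mul, coeff_X_pow_mul', if_pos (Nat.sub_le _ _),
      Nat.sub_sub_self (hc i hi)]
    rfl

variable [DecidableEq ι]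

lemma det_one_updateCol {R : Type*} [CommRing R] (j : ι) (v : ι → R) :
    ((1 : Matrix ι ι R).updateCol j v).det = v j := by
  rw [← Matrix.cramer_apply, Matrix.cramer_one]
  rfl

lemma det_one_updateRow {R : Type*} [CommRing R] (i : ι) (v : ι → R) :
    ((1 : Matrix ι ι R).updateRow i v).det = v i := by
  rw [← Matrix.det_transpose, ← Matrix.updateCol_transpose, Matrix.transpose_one, det_one_updateCol]

/-- Evaluation of a polynomial matrix at a point. -/
noncomputable def evalMatrix (z : K) : Matrix ι ι K[X] →+* Matrix ι ι K :=
  (evalRingHom z).mapMatrix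

@[simp] lemma evalMatrix_apply (z : K) (Q : Matrix ι ι K[X]) (i j : ι) :
    evalMatrix z Q i j = (Q i j).eval z := rfl

lemma det_evalMatrix (z : K) (Q : Matrix ι ι K[X]) : (evalMatrix z Q).det = Q.det.eval z :=
  ((evalRingHom z).map_det Q).symm

-- A linear relation among the leading coefficients of the rows, made homogeneous by powers of `X`,
-- lowers the degree of the highest row that it involves.
lemma exists_unit_mul_natDegree_le_update (hQ : Q.det ≠ 0) (hdeg : ∀ i j, (Q i j).natDegree ≤ d i)
    (hsing : ¬IsUnit (rowLeadingMatrix Q d)) :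
    ∃ (T : (Matrix ι ι K[X])ˣ) (i₀ : ι), 0 < d i₀ ∧
      ∀ i j, (((T : Matrix ι ι K[X]) * Q) i j).natDegree ≤ Function.update d i₀ (d i₀ - 1) i := by
  classical
  rw [Matrix.isUnit_iff_isUnit_det, isUnit_iff_ne_zero, not_not] at hsing
  obtain ⟨c, hc0, hrel⟩ := Matrix.exists_vecMul_eq_zero_iff.2 hsing
  obtain ⟨i₀, hi₀, hmax⟩ := Finset.exists_max_image {i | c i ≠ 0} d
    ((Function.ne_iff.1 hc0).imp fun i hi => by simpa using hi)
  simp only [Finset.mem_filter, Finset.mem_univ, true_and] at hi₀ hmax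
  set v : ι → K[X] := fun i => C (c i) * X ^ (d i₀ - d i) with hv
  have hdet : ((1 : Matrix ι ι K[X]).updateRow i₀ v).det = C (c i₀) := by
    simp [det_one_updateRow, hv]
  have hunit : IsUnit ((1 : Matrix ι ι K[X]).updateRow i₀ v) :=
    (Matrix.isUnit_iff_isUnit_det _).2 (hdet ▸ isUnit_C.2 (isUnit_iff_ne_zero.2 hi₀))
  have hmul : (1 : Matrix ι ι K[X]).updateRow i₀ v * Q = Q.updateRow i₀ (v ᵥ* Q) := by
    rw [Matrix.updateRow_mul, one_mul]
  have hdrop : ∀ j, ((v ᵥ* Q) j).coeff (d i₀) = 0 := fun j => by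
    rw [coeff_vecMul hmax, hrel, Pi.zero_apply]
  have hle : ∀ j, ((v ᵥ* Q) j).natDegree ≤ d i₀ := natDegree_vecMul_le hdeg hmax
  obtain ⟨T, hT⟩ := hunit
  refine ⟨T, i₀, Nat.pos_of_ne_zero fun hzero => ?_, fun i j => ?_⟩
  · have hrow : v ᵥ* Q = 0 := funext fun j => by
      rw [eq_C_of_natDegree_le_zero ((hle j).trans_eq hzero), ← hzero, hdrop j, C_0, Pi.zero_apply]
    have hzdet := congrArg Matrix.det hmul
    rw [Matrix.det_mul, hdet, hrow, Matrix.det_eq_zero_of_row_eq_zero (A := Q.updateRow i₀ 0) i₀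
      fun j => by simp] at hzdet
    exact mul_ne_zero (C_ne_zero.2 hi₀) hQ hzdet
  · rw [hT, hmul]
    rcases eq_or_ne i i₀ with rfl | hi
    · simpa using natDegree_le_pred (hle j) (hdrop j)
    · simpa [hi] using hdeg i j

lemma exists_unit_mul_isUnit_rowLeadingMatrix (hQ : Q.det ≠ 0)
    (hdeg : ∀ i j, (Q i j).natDegree ≤ d i) :
    ∃ (U : (Matrix ι ι K[X])ˣ) (d' : ι → ℕ),
      (∀ i j, (((U : Matrix ι ι K[X]) * Q) i j).natDegree ≤ d' i) ∧
      IsUnit (rowLeadingMatrix ((U : Matrix ι ι K[X]) * Q) d') := by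
  induction hN : ∑ i, d i using Nat.strong_induction_on generalizing Q d with
  | _ N ih =>
    by_cases hlead : IsUnit (rowLeadingMatrix Q d)
    · exact ⟨1, d, by simpa using hdeg, by simpa using hlead⟩
    obtain ⟨T, i₀, hpos, hT⟩ := exists_unit_mul_natDegree_le_update hQ hdeg hlead
    have hlt : ∑ i, Function.update d i₀ (d i₀ - 1) i < N := by
      rw [← hN]
      refine Finset.sum_lt_sum (fun i _ => ?_) ⟨i₀, Finset.mem_univ _, ?_⟩
      · rcases eq_or_ne i i₀ with rfl | hi <;> simp [*]
      · simpa using hpos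
    have hTQ : ((T : Matrix ι ι K[X]) * Q).det ≠ 0 := by
      rw [Matrix.det_mul]
      exact mul_ne_zero ((Matrix.isUnit_iff_isUnit_det _).1 T.isUnit).ne_zero hQ
    obtain ⟨U, d', hd', hU⟩ := ih _ hlt hTQ hT rfl
    exact ⟨U * T, d', by simpa [mul_assoc] using hd', by simpa [mul_assoc] using hU⟩

theorem exists_evalMatrix_eq_unit_mul_diagonal_mul (hQ : Q.det ≠ 0) :
    ∃ (U : (Matrix ι ι K[X])ˣ) (d : ι → ℕ) (T : Matrix ι ι K[X]), IsUnit (evalMatrix 0 T) ∧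
      ∀ z, z ≠ 0 → evalMatrix z Q =
        evalMatrix z U * Matrix.diagonal (fun i => z ^ d i) * evalMatrix z⁻¹ T := by
  obtain ⟨U, d, hdeg, hlead⟩ := exists_unit_mul_isUnit_rowLeadingMatrix hQ
    (fun i j => Finset.le_sup (f := fun j => (Q i j).natDegree) (Finset.mem_univ j))
  set R : Matrix ι ι K[X] := U * Q with hR
  refine ⟨U⁻¹, d, Matrix.of fun i j => reflect (d i) (R i j), ?_, fun z hz => ?_⟩
  · convert hlead using 1
    ext i j
    simp [rowLeadingMatrix, ← coeff_zero_eq_eval_zero, coeff_reflect]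
  · have hQR : Q = (↑U⁻¹ : Matrix ι ι K[X]) * R := by rw [hR, Units.inv_mul_cancel_left]
    have := invertibleOfNonzero hz
    conv_lhs => rw [hQR, map_mul]
    rw [mul_assoc]
    congr 1
    ext i j
    simpa using (eval_reflect (hdeg i j) z).symm

end RowReduction

section ZeroRemoval

open Polynomial
open scoped Matrix Matrix.Norms.Operator

lemma dslope_mem_smoothBoundaryAlgebra {g : ℂ → ℂ} {a : ℂ}
    (hg : g ∈ smoothBoundaryAlgebra (ball 0 1) ℂ) (ha : a ∈ ball (0 : ℂ) 1) :
    dslope g a ∈ smoothBoundaryAlgebra (ball 0 1) ℂ := by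
  have hne : ∀ t, circleParam t ≠ a := fun t h => by
    simpa [← h, norm_circleParam] using mem_ball_zero_iff.1 ha
  have hnhds : closure (ball (0 : ℂ) 1) ∈ 𝓝 a :=
    mem_of_superset (isOpen_ball.mem_nhds ha) subset_closure
  refine ⟨⟨(Complex.differentiableOn_dslope (isOpen_ball.mem_nhds ha)).2 hg.1.1,
    (continuousOn_dslope hnhds).2 ⟨hg.1.2, hg.1.differentiableAt isOpen_ball ha⟩⟩, ?_⟩
  simp only [dslope_of_ne _ (hne _), slope_def_module]
  exact ((contDiff_circleParam.sub contDiff_const).inv fun t => sub_ne_zero.2 (hne t)).smul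
    (hg.2.sub contDiff_const)

lemma eq_of_sub_mul_eq {g h : ℂ → ℂ} {a : ℂ} {s : Set ℂ} (hs : s ∈ 𝓝 a) (hg : ContinuousOn g s)
    (hh : ContinuousOn h s) (heq : ∀ z ∈ s, (z - a) * g z = (z - a) * h z) : Set.EqOn g h s := by
  have hne : ∀ z ∈ s, z ≠ a → g z = h z := fun z hz hza =>
    mul_left_cancel₀ (sub_ne_zero.2 hza) (heq z hz)
  intro z hz
  rcases eq_or_ne z a with rfl | hza
  · refine ((hg.continuousAt hs).eventuallyEq_nhds_iff_eventuallyEq_nhdsNE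
      (hh.continuousAt hs)).1 ?_ |>.eq_of_nhds
    filter_upwards [self_mem_nhdsWithin, nhdsWithin_le_nhds hs] with w hw hws using hne w hws hw
  · exact hne z hz hza

variable {ι : Type*} [Fintype ι] [DecidableEq ι] {U : Set ℂ} {G : ℂ → Matrix ι ι ℂ} {a : ℂ}

lemma det_mem_smoothBoundaryAlgebra (hG : G ∈ smoothBoundaryAlgebra U (Matrix ι ι ℂ)) :
    (fun z => (G z).det) ∈ smoothBoundaryAlgebra U ℂ := by
  have hdet : (fun z => (G z).det) =
      ∑ σ : Equiv.Perm ι, Equiv.Perm.sign σ • ∏ i, fun z => G z (σ i) i := by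
    ext z
    simp [Matrix.det_apply, Finset.prod_apply, Finset.sum_apply]
  rw [hdet]
  exact sum_mem fun σ _ => zsmul_mem (prod_mem fun i _ =>
    matrix_mem_smoothBoundaryAlgebra_iff.1 hG (σ i) i) _

lemma IsPlusLoop.det (hG : IsPlusLoop G) : IsPlusLoop fun z => (G z).det :=
  ⟨det_mem_smoothBoundaryAlgebra hG.mem,
    fun z hz => (Matrix.isUnit_iff_isUnit_det _).1 (hG.isUnit z hz)⟩

/-- The polynomial matrix that differs from the identity in column `j`, where it is
`X - a` on the diagonal and `-v i` in row `i ≠ j`. -/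
noncomputable def elementaryFactor (a : ℂ) (v : ι → ℂ) (j : ι) : Matrix ι ι ℂ[X] :=
  (1 : Matrix ι ι ℂ[X]).updateCol j (Function.update (fun i => -C (v i)) j (X - C a))

lemma det_elementaryFactor (a : ℂ) (v : ι → ℂ) (j : ι) :
    (elementaryFactor a v j).det = X - C a := by
  rw [elementaryFactor, det_one_updateCol, Function.update_self]

lemma evalMatrix_elementaryFactor (a z : ℂ) (v : ι → ℂ) (j : ι) :
    evalMatrix z (elementaryFactor a v j) =
      (1 : Matrix ι ι ℂ).updateCol j (Function.update (-v) j (z - a)) := by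
  ext i k
  rcases eq_or_ne k j with rfl | hk
  · rcases eq_or_ne i k with rfl | hi <;> simp [elementaryFactor, *]
  · simp [elementaryFactor, hk, Matrix.one_apply, apply_ite (eval z)]

lemma mulVec_update_neg {v : ι → ℂ} {j : ι} (hvj : v j = 1) {A B : Matrix ι ι ℂ} {c : ℂ}
    (hoff : ∀ i k, k ≠ j → B i k = A i k) (hj : ∀ i, c * B i j = (A *ᵥ v) i) :
    B *ᵥ Function.update (-v) j c = A.col j := by
  ext i
  have hsplit := hj i
  rw [Matrix.mulVec, dotProduct, Fintype.sum_eq_add_sum_compl j, hvj, mul_one] at hsplit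
  have hcompl : ∑ k ∈ {j}ᶜ, B i k * Function.update (-v) j c k = -∑ k ∈ {j}ᶜ, A i k * v k := by
    rw [← Finset.sum_neg_distrib]
    refine Finset.sum_congr rfl fun k hk => ?_
    have hkj : k ≠ j := by simpa using hk
    rw [hoff i k hkj, Function.update_of_ne hkj, Pi.neg_apply, mul_neg]
  rw [Matrix.mulVec, dotProduct, Fintype.sum_eq_add_sum_compl j, hcompl, Function.update_self,
    mul_comm, hsplit, add_neg_cancel_right]
  rfl

lemma exists_eq_mul_elementaryFactor (hG : G ∈ smoothBoundaryAlgebra (ball 0 1) (Matrix ι ι ℂ))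
    (ha : a ∈ ball (0 : ℂ) 1) (hdet : (G a).det = 0) :
    ∃ H ∈ smoothBoundaryAlgebra (ball 0 1) (Matrix ι ι ℂ), ∃ (v : ι → ℂ) (j : ι),
      ∀ z, G z = H z * evalMatrix z (elementaryFactor a v j) := by
  obtain ⟨w, hw0, hw⟩ := Matrix.exists_mulVec_eq_zero_iff.2 hdet
  obtain ⟨j, hj⟩ := Function.ne_iff.1 hw0
  set v : ι → ℂ := (w j)⁻¹ • w with hv
  have hvj : v j = 1 := by simpa [hv] using inv_mul_cancel₀ hj
  have hGv : G a *ᵥ v = 0 := by rw [hv, Matrix.mulVec_smul, hw, smul_zero]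
  refine ⟨fun z => (G z).updateCol j fun i => dslope (fun w => (G w *ᵥ v) i) a z,
    matrix_mem_smoothBoundaryAlgebra_iff.2 fun i k => ?_, v, j, fun z => ?_⟩
  · have hentry := matrix_mem_smoothBoundaryAlgebra_iff.1 hG
    rcases eq_or_ne k j with rfl | hk
    · simp only [Matrix.updateCol_self]
      refine dslope_mem_smoothBoundaryAlgebra ?_ ha
      have hsum : (fun z => (G z *ᵥ v) i) = ∑ k, (fun z => G z i k) * fun _ => v k := by
        ext z
        simp [Matrix.mulVec, dotProduct]
      rw [hsum]
      exact sum_mem fun k _ => mul_mem (hentry i k) (const_mem_smoothBoundaryAlgebra _)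
    · simpa only [Matrix.updateCol_ne hk] using hentry i k
  · rw [evalMatrix_elementaryFactor, Matrix.mul_updateCol, mul_one,
      mulVec_update_neg hvj (fun i k hk => Matrix.updateCol_ne hk) fun i => ?_]
    · simp only [Matrix.updateCol_idem]
      exact (Matrix.updateCol_eq_self (G z) j).symm
    · have hslope := sub_smul_dslope (fun w => (G w *ᵥ v) i) a z
      simpa [hGv] using hslope

lemma det_eq_mul_of_eq_mul_elementaryFactor {H : ℂ → Matrix ι ι ℂ} {r : ℂ[X]} {u : ℂ → ℂ}
    {v : ι → ℂ} {j : ι} (hH : H ∈ smoothBoundaryAlgebra (ball 0 1) (Matrix ι ι ℂ))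
    (hu : IsPlusLoop u) (ha : a ∈ ball (0 : ℂ) 1)
    (hGH : ∀ z, G z = H z * evalMatrix z (elementaryFactor a v j))
    (hdet : ∀ z, ‖z‖ ≤ 1 → (G z).det = ((X - C a) * r).eval z * u z) :
    ∀ z, ‖z‖ ≤ 1 → (H z).det = r.eval z * u z := by
  have hcl : closure (ball (0 : ℂ) 1) = closedBall 0 1 := closure_ball 0 one_ne_zero
  have heq : Set.EqOn (fun z => (H z).det) (fun z => r.eval z * u z) (closedBall 0 1) := by
    refine eq_of_sub_mul_eq (closedBall_mem_nhds_of_mem ha)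
      (hcl ▸ (det_mem_smoothBoundaryAlgebra hH).1.2)
      (r.continuous.continuousOn.mul (hcl ▸ hu.mem.1.2)) fun z hz => ?_
    have hdetz := hdet z (mem_closedBall_zero_iff.1 hz)
    rw [hGH, Matrix.det_mul, det_evalMatrix, det_elementaryFactor, eval_mul] at hdetz
    simp only [eval_sub, eval_X, eval_C] at hdetz
    rw [mul_comm, hdetz, mul_assoc]
  exact fun z hz => heq (mem_closedBall_zero_iff.2 hz)

theorem exists_plusLoop_mul_evalMatrix {q : ℂ[X]} {u : ℂ → ℂ}
    (hG : G ∈ smoothBoundaryAlgebra (ball 0 1) (Matrix ι ι ℂ)) (hu : IsPlusLoop u)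
    (hdet : ∀ z, ‖z‖ ≤ 1 → (G z).det = q.eval z * u z) (hq : ∀ z, ‖z‖ = 1 → q.eval z ≠ 0) :
    ∃ (H : ℂ → Matrix ι ι ℂ) (Q : Matrix ι ι ℂ[X]), IsPlusLoop H ∧
      (∀ z, 1 ≤ ‖z‖ → IsUnit (evalMatrix z Q)) ∧ ∀ z, G z = H z * evalMatrix z Q := by
  induction hN : q.natDegree using Nat.strong_induction_on generalizing q G with
  | _ N ih =>
    by_cases hroot : ∀ z, ‖z‖ ≤ 1 → q.eval z ≠ 0
    · refine ⟨G, 1, ⟨hG, fun z hz => (Matrix.isUnit_iff_isUnit_det _).2 ?_⟩, by simp, by simp⟩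
      exact hdet z hz ▸ (hroot z hz).isUnit.mul (hu.isUnit z hz)
    push Not at hroot
    obtain ⟨a, ha, hqa⟩ := hroot
    have haball : a ∈ ball (0 : ℂ) 1 := mem_ball_zero_iff.2 (ha.lt_of_ne fun h => hq a h hqa)
    obtain ⟨r, rfl⟩ := dvd_iff_isRoot.2 hqa
    obtain ⟨H, hH, v, j, hGH⟩ := exists_eq_mul_elementaryFactor hG haball
      (by rw [hdet a ha, hqa, zero_mul])
    have hr : ∀ z, ‖z‖ = 1 → r.eval z ≠ 0 := fun z hz h =>
      hq z hz (by rw [eval_mul, h, mul_zero])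
    have hdeg : r.natDegree < N := by
      have hr0 : r ≠ 0 := fun h => hr 1 norm_one (by rw [h, eval_zero])
      rw [← hN, natDegree_mul (X_sub_C_ne_zero a) hr0, natDegree_X_sub_C]
      omega
    obtain ⟨H', Q, hH', hQ, hHH'⟩ := ih _ hdeg hH
      (det_eq_mul_of_eq_mul_elementaryFactor hH hu haball hGH hdet) hr rfl
    refine ⟨H', Q * elementaryFactor a v j, hH', fun z hz => ?_, fun z => ?_⟩
    · rw [map_mul]
      refine (hQ z hz).mul ((Matrix.isUnit_iff_isUnit_det _).2 ?_)
      rw [det_evalMatrix, det_elementaryFactor, eval_sub, eval_X, eval_C]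
      exact (sub_ne_zero.2 (ne_of_apply_ne norm
        ((mem_ball_zero_iff.1 haball).trans_le hz).ne')).isUnit
    · rw [hGH, hHH', map_mul, mul_assoc]

end ZeroRemoval

section Existence

open Polynomial
open scoped Matrix.Norms.Operator

variable {ι : Type*} [Fintype ι]

lemma contDiff_matrix {E : Type*} [NormedAddCommGroup E] [NormedSpace ℝ E] {m : WithTop ℕ∞}
    {g : E → Matrix ι ι ℂ} (hg : ∀ i j, ContDiff ℝ m fun t => g t i j) : ContDiff ℝ m g := by
  classical
  have hsum : g = fun t => ∑ i, ∑ j, Matrix.single i j (g t i j) :=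
    funext fun t => Matrix.matrix_eq_sum_single (g t)
  rw [hsum]
  exact ContDiff.sum fun i _ => ContDiff.sum fun j _ =>
    (Matrix.singleLinearMap ℝ i j : ℂ →ₗ[ℝ] Matrix ι ι ℂ).toContinuousLinearMap.contDiff.comp
      (hg i j)

variable [DecidableEq ι] {f : ℂ → Matrix ι ι ℂ}

lemma ne_zero_of_one_le_norm {z : ℂ} (hz : 1 ≤ ‖z‖) : z ≠ 0 :=
  norm_pos_iff.1 (one_pos.trans_le hz)

lemma exists_evalMatrix_eq_pow_smul_sum {K : Type*} [Field K] (S : Finset ℤ)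
    (a : ℤ → Matrix ι ι K) : ∃ (M : ℕ) (P : Matrix ι ι K[X]),
      ∀ z, z ≠ 0 → evalMatrix z P = z ^ M • ∑ k ∈ S, z ^ k • a k := by
  obtain ⟨M, hM⟩ : ∃ M : ℕ, ∀ k ∈ S, 0 ≤ k + M := by
    refine ⟨S.sup Int.natAbs, fun k hk => ?_⟩
    have := Finset.le_sup (f := Int.natAbs) hk
    omega
  refine ⟨M, Matrix.of fun i j => ∑ k ∈ S, monomial (k + M).toNat (a k i j), fun z hz => ?_⟩
  have hpow : ∀ k ∈ S, z ^ (k + M).toNat = z ^ M * z ^ k := fun k hk => by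
    rw [← zpow_natCast z (k + M).toNat, Int.toNat_of_nonneg (hM k hk), zpow_add₀ hz, zpow_natCast,
      mul_comm]
  ext i j
  simp only [evalMatrix_apply, Matrix.of_apply, eval_finsetSum, eval_monomial, Matrix.smul_apply,
    Matrix.sum_apply, smul_eq_mul, Finset.mul_sum]
  refine Finset.sum_congr rfl fun k hk => ?_
  rw [hpow k hk]
  ring

lemma evalMatrix_mem_smoothBoundaryAlgebra (U : Set ℂ) (Q : Matrix ι ι ℂ[X]) :
    (fun z => evalMatrix z Q) ∈ smoothBoundaryAlgebra U (Matrix ι ι ℂ) :=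
  matrix_mem_smoothBoundaryAlgebra_iff.2 fun i j =>
    differentiable_mem_smoothBoundaryAlgebra (Q i j).differentiable

lemma isPlusLoop_evalMatrix (V : (Matrix ι ι ℂ[X])ˣ) :
    IsPlusLoop fun z => evalMatrix z (V : Matrix ι ι ℂ[X]) :=
  ⟨evalMatrix_mem_smoothBoundaryAlgebra _ _, fun z _ => V.isUnit.map (evalMatrix z)⟩

lemma isMinusLoop_evalMatrix_inv {T : Matrix ι ι ℂ[X]}
    (hT : ∀ z, ‖z‖ ≤ 1 → IsUnit (evalMatrix z T)) :
    IsMinusLoop (fun z => evalMatrix z⁻¹ T) (evalMatrix 0 T) := by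
  refine ⟨matrix_mem_smoothBoundaryAlgebra_iff.2 fun i j => ?_,
    fun z hz => hT _ (by simpa using inv_le_one_of_one_le₀ hz), hT 0 (by simp), ?_⟩
  · have haeval : (fun z => (T i j).eval z⁻¹) = aeval (fun z : ℂ => z⁻¹) (T i j) :=
      funext fun z => (aeval_fn_apply _ _ z).symm
    have hle : Algebra.adjoin ℂ {fun z => z⁻¹} ≤ smoothBoundaryAlgebra (closedBall 0 1)ᶜ ℂ :=
      Algebra.adjoin_le (Set.singleton_subset_iff.2 inv_mem_smoothBoundaryAlgebra)
    exact haeval ▸ hle (aeval_mem_adjoin_singleton ℂ _)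
  · have hcont : Continuous fun z => evalMatrix z T :=
      continuous_matrix fun i j => (T i j).continuous
    exact (hcont.tendsto 0).comp tendsto_inv₀_cobounded

lemma exists_hasPartialIndices_evalMatrix {Q : Matrix ι ι ℂ[X]}
    (hQ : ∀ z, 1 ≤ ‖z‖ → IsUnit (evalMatrix z Q)) :
    ∃ κ, HasPartialIndices (fun z => evalMatrix z Q) κ := by
  have hQ0 : Q.det ≠ 0 := fun h => by
    have hdet := (Matrix.isUnit_iff_isUnit_det _).1 (hQ 1 (by simp))
    rw [det_evalMatrix, h, eval_zero] at hdet
    exact not_isUnit_zero hdet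
  obtain ⟨V, d, T, hT0, hfac⟩ := exists_evalMatrix_eq_unit_mul_diagonal_mul hQ0
  refine ⟨fun i => d i, _, _, _, isPlusLoop_evalMatrix V,
    isMinusLoop_evalMatrix_inv (T := T) fun z hz => ?_, fun z hz => ?_⟩
  · rcases eq_or_ne z 0 with rfl | hz0
    · exact hT0
    · have hunit := hQ z⁻¹ (by rw [norm_inv]; exact one_le_inv_iff₀.2 ⟨norm_pos_iff.2 hz0, hz⟩)
      rw [hfac _ (inv_ne_zero hz0), inv_inv] at hunit
      exact isUnit_of_mul_isUnit_right hunit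
  · simpa only [zpow_natCast] using hfac z (ne_zero_of_one_le_norm hz.ge)

lemma exists_hasPartialIndices_evalMatrix_mul_plusLoop {P : Matrix ι ι ℂ[X]}
    {Y : ℂ → Matrix ι ι ℂ} (hP : ∀ z, ‖z‖ = 1 → IsUnit (evalMatrix z P)) (hY : IsPlusLoop Y) :
    ∃ κ, HasPartialIndices (fun z => evalMatrix z P * Y z) κ := by
  obtain ⟨H, Q, hH, hQ, hfac⟩ := exists_plusLoop_mul_evalMatrix (q := P.det)
    (mul_mem (evalMatrix_mem_smoothBoundaryAlgebra _ P) hY.mem) hY.det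
    (fun z _ => by rw [Pi.mul_apply, Matrix.det_mul, det_evalMatrix]) fun z hz =>
      det_evalMatrix z P ▸ ((Matrix.isUnit_iff_isUnit_det _).1 (hP z hz)).ne_zero
  obtain ⟨κ, hκ⟩ := exists_hasPartialIndices_evalMatrix hQ
  exact ⟨κ, hκ.mul_plusLoop_left hH fun z _ => hfac z⟩

theorem exists_hasPartialIndices (hunit : ∀ z, ‖z‖ = 1 → IsUnit (f z))
    (hf : ContDiff ℝ ∞ fun t => f (circleParam t)) : ∃ κ, HasPartialIndices f κ := by
  obtain ⟨S, a, Y, X, hY, hX, hfac⟩ :=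
    exists_laurentPolynomial_mul_plusLoop_mul_minusLoop hunit hf
  obtain ⟨M, P, hP⟩ := exists_evalMatrix_eq_pow_smul_sum S a
  have hsum : ∀ z, ‖z‖ = 1 → ∑ k ∈ S, z ^ k • a k = z ^ (-M : ℤ) • evalMatrix z P :=
    fun z hz => by
      have hz0 := ne_zero_of_one_le_norm hz.ge
      rw [hP z hz0, zpow_neg, zpow_natCast, inv_smul_smul₀ (pow_ne_zero M hz0)]
  have hPunit : ∀ z, ‖z‖ = 1 → IsUnit (evalMatrix z P) := fun z hz => by
    have hz0 := ne_zero_of_one_le_norm hz.ge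
    have hfz := hunit z hz
    rw [hfac z hz] at hfz
    rw [hP z hz0]
    exact (isUnit_of_mul_isUnit_left (isUnit_of_mul_isUnit_left hfz)).smul
      (Units.mk0 (z ^ M) (pow_ne_zero M hz0))
  obtain ⟨κ, hκ⟩ := exists_hasPartialIndices_evalMatrix_mul_plusLoop hPunit hY
  refine ⟨_, (hκ.zpow_smul (-M) fun z _ => rfl).mul_minusLoop_right hX fun z hz => ?_⟩
  rw [hfac z hz, hsum z hz, smul_mul_assoc]

end Existence

lemma exists_perm_antitone {α : Type*} [LinearOrder α] {n : ℕ} (κ : Fin n → α) :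
    ∃ σ : Equiv.Perm (Fin n), Antitone (κ ∘ σ) :=
  ⟨Tuple.sort (OrderDual.toDual ∘ κ), Tuple.monotone_sort (OrderDual.toDual ∘ κ)⟩

end BirkhoffFactorization

/-- Every smooth loop `f : 𝕊 → GL_n(ℂ)` admits a Birkhoff decomposition
`f = F₊ · diag(z^{κ₁},…,z^{κ_n}) · F₋` with decreasing integer partial indices
`κ₁ ≥ ⋯ ≥ κ_n`, and the tuple of partial indices is uniquely determined by `f`. -/
theorem stmt_4 (n : ℕ) (f : ℂ → Matrix (Fin n) (Fin n) ℂ)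
    (hfu : ∀ z : ℂ, ‖z‖ = 1 → IsUnit (f z))
    (hfs : ∀ i j, ContDiff ℝ (⊤ : ℕ∞) fun t : ℝ => f (circleParam t) i j) :
    ∃ κ : Fin n → ℤ, Antitone κ ∧
      (∃ Fp Fm L, SmoothBirkhoffFactorization n f κ Fp Fm L) ∧
      ∀ κ' : Fin n → ℤ, Antitone κ' →
        (∃ Fp Fm L, SmoothBirkhoffFactorization n f κ' Fp Fm L) → κ' = κ := by
  simp only [BirkhoffFactorization.exists_smoothBirkhoffFactorization_iff]
  obtain ⟨κ, hκ⟩ := BirkhoffFactorization.exists_hasPartialIndices hfu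
    (BirkhoffFactorization.contDiff_matrix hfs)
  obtain ⟨σ, hσ⟩ := BirkhoffFactorization.exists_perm_antitone κ
  exact ⟨κ ∘ σ, hσ, hκ.comp_perm σ, fun κ' hanti hκ' =>
    hκ'.unique_of_antitone (hκ.comp_perm σ) hanti hσ⟩
end

section
/- Let n ∈ ℕ, δ > 0, and let f be a holomorphic map from the annulus {z ∈ ℂ : 1−δ < |z| < 1+δ} to M_n(ℂ) with f(z) invertible for every z (this encodes a real-analytic loop 𝕊 → GL_n(ℂ)). Then there exist δ′ > 0, integers κ₁ ≥ κ₂ ≥ ⋯ ≥ κ_n, a holomorphic map F₊ : {z : |z| < 1+δ′} → M_n(ℂ) with invertible values, and a holomorphic map F₋ : {z : |z| > 1−δ′} → M_n(ℂ) with invertible values possessing an invertible limit F₋(∞) as |z| → ∞, such that f(z) = F₊(z)·diag(z^{κ₁},…,z^{κ_n})·F₋(z) for all z ∈ 𝕊. Moreover, the n-tuple (κ₁,…,κ_n) is uniquely determined by f. -/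
open Metric Filter

/-- A Birkhoff decomposition `f = F₊ · diag(z^κ) · F₋` on the unit circle, in which `F₊`
is holomorphic and `GL_n`-valued on a disk `{|z| < 1+δ'}` and `F₋` is holomorphic and
`GL_n`-valued on `{|z| > 1−δ'}` with an invertible limit at `∞` (for some `δ' > 0`). -/
def AnnulusBirkhoffFactorization (n : ℕ) (f : ℂ → Matrix (Fin n) (Fin n) ℂ)
    (κ : Fin n → ℤ) : Prop :=
  ∃ δ' : ℝ, 0 < δ' ∧
    ∃ Fp Fm : ℂ → Matrix (Fin n) (Fin n) ℂ, ∃ L : Matrix (Fin n) (Fin n) ℂ,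
      (∀ i j, DifferentiableOn ℂ (fun z => Fp z i j) {z : ℂ | ‖z‖ < 1 + δ'}) ∧
      (∀ z : ℂ, ‖z‖ < 1 + δ' → IsUnit (Fp z)) ∧
      (∀ i j, DifferentiableOn ℂ (fun z => Fm z i j) {z : ℂ | 1 - δ' < ‖z‖}) ∧
      (∀ z : ℂ, 1 - δ' < ‖z‖ → IsUnit (Fm z)) ∧
      IsUnit L ∧
      (∀ i j, Tendsto (fun z => Fm z i j)
        (comap (fun z : ℂ => ‖z‖) atTop) (nhds (L i j))) ∧
      (∀ z : ℂ, ‖z‖ = 1 →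
        f z = Fp z * Matrix.diagonal (fun i => z ^ κ i) * Fm z)

/-!
If `f` is close to `1`, a Neumann series in the weighted Wiener algebra solves the Wiener–Hopf
equation and yields a factorization with all partial indices zero. A general `f` is close to a
truncation of its Laurent series, so up to disk factors it is a Laurent polynomial
`z ^ N • A(z⁻¹)`, whose only obstruction is that `det A` may vanish inside the disk. A zero `b` of
the determinant is split off by replacing a row with `(w - b)⁻¹` times a combination of the rows
vanishing at `b`; choosing the row of largest exponent in that combination keeps the compensating
left factor holomorphic in `z`, and lowers that exponent by one.

For uniqueness, two factorizations give `A z * diag(z^κ) = diag(z^κ') * B z⁻¹` with `A`, `B`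
invertible on the disk. Where `κ' i < κ j`, the mean value property at `0` and at `∞` forces
`A 0 i j = 0`, so `κ' k < κ k` would give `A 0` a zero block too large for its determinant not to
vanish.
-/

section WienerAlgebra

variable {E : Type*} [NormedAddCommGroup E] {𝔸 : Type*} [NormedRing 𝔸] {ρ : ℝ}

/-- Membership in the Wiener algebra of the closed annulus `ρ⁻¹ ≤ |z| ≤ ρ`: a Laurent series
is encoded by its coefficients `a : ℤ → E`, which are to be absolutely summable against
`ρ ^ |k|`. -/
def WienerSummable (ρ : ℝ) (a : ℤ → E) : Prop :=
  Summable fun k => ‖a k‖ * ρ ^ k.natAbs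

/-- The norm of the weighted Wiener algebra; it is only meaningful on `WienerSummable` families. -/
noncomputable def wienerNorm (ρ : ℝ) (a : ℤ → E) : ℝ :=
  ∑' k, ‖a k‖ * ρ ^ k.natAbs

/-- The product of two Laurent series, on the level of coefficients. -/
noncomputable def laurentConv (a b : ℤ → 𝔸) (k : ℤ) : 𝔸 :=
  ∑' j, a j * b (k - j)

lemma wienerNorm_nonneg (hρ : 0 ≤ ρ) (a : ℤ → E) : 0 ≤ wienerNorm ρ a :=
  tsum_nonneg fun _ => by positivity

lemma WienerSummable.of_norm_le {a b : ℤ → E} (hρ : 0 ≤ ρ) (hb : WienerSummable ρ b)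
    (hab : ∀ k, ‖a k‖ ≤ ‖b k‖) : WienerSummable ρ a :=
  Summable.of_nonneg_of_le (fun _ => by positivity)
    (fun k => by gcongr; exact hab k) hb

lemma wienerNorm_le_of_norm_le {a b : ℤ → E} (hρ : 0 ≤ ρ) (hb : WienerSummable ρ b)
    (hab : ∀ k, ‖a k‖ ≤ ‖b k‖) : wienerNorm ρ a ≤ wienerNorm ρ b :=
  (hb.of_norm_le hρ hab).tsum_le_tsum (fun k => by gcongr; exact hab k) hb

lemma WienerSummable.add {a b : ℤ → E} (hρ : 0 ≤ ρ) (ha : WienerSummable ρ a)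
    (hb : WienerSummable ρ b) : WienerSummable ρ (a + b) :=
  Summable.of_nonneg_of_le (fun _ => by positivity)
    (fun k => by rw [← add_mul]; gcongr; exact norm_add_le _ _) (Summable.add ha hb)

lemma wienerNorm_add_le {a b : ℤ → E} (hρ : 0 ≤ ρ) (ha : WienerSummable ρ a)
    (hb : WienerSummable ρ b) : wienerNorm ρ (a + b) ≤ wienerNorm ρ a + wienerNorm ρ b := by
  rw [wienerNorm, wienerNorm, wienerNorm, ← Summable.tsum_add ha hb]
  exact (ha.add hρ hb).tsum_le_tsum
    (fun k => by rw [← add_mul]; gcongr; exact norm_add_le _ _) (Summable.add ha hb)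

lemma WienerSummable.summable_norm {a : ℤ → E} (hρ : 1 ≤ ρ) (ha : WienerSummable ρ a) :
    Summable fun k => ‖a k‖ :=
  Summable.of_nonneg_of_le (fun _ => norm_nonneg _)
    (fun _ => le_mul_of_one_le_right (norm_nonneg _) (one_le_pow₀ hρ)) ha

lemma hasSum_mul_sub_of_summable_norm {R : Type*} [NormedRing R] [CompleteSpace R] {a b : ℤ → R}
    (ha : Summable fun k => ‖a k‖) (hb : Summable fun k => ‖b k‖) :
    HasSum (fun p : ℤ × ℤ => a p.2 * b (p.1 - p.2)) ((∑' k, a k) * ∑' k, b k) := by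
  rw [tsum_mul_tsum_of_summable_norm ha hb]
  let shear : ℤ × ℤ ≃ ℤ × ℤ :=
    (Equiv.prodComm ℤ ℤ).trans (Equiv.prodShear (Equiv.refl ℤ) fun j => Equiv.subRight j)
  exact shear.hasSum_iff.2 (summable_mul_of_summable_norm ha hb).hasSum

lemma norm_mul_sub_mul_pow_natAbs_le (hρ : 1 ≤ ρ) (a b : ℤ → 𝔸) (k j : ℤ) :
    ‖a j * b (k - j)‖ * ρ ^ k.natAbs ≤
      (‖a j‖ * ρ ^ j.natAbs) * (‖b (k - j)‖ * ρ ^ (k - j).natAbs) :=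
  calc ‖a j * b (k - j)‖ * ρ ^ k.natAbs
      ≤ ‖a j‖ * ‖b (k - j)‖ * ρ ^ (j.natAbs + (k - j).natAbs) := by
        gcongr
        · exact norm_mul_le _ _
        · omega
    _ = _ := by ring

lemma WienerSummable.hasSum_mul_sub {a b : ℤ → 𝔸} (ha : WienerSummable ρ a)
    (hb : WienerSummable ρ b) :
    HasSum (fun p : ℤ × ℤ => (‖a p.2‖ * ρ ^ p.2.natAbs) *
      (‖b (p.1 - p.2)‖ * ρ ^ (p.1 - p.2).natAbs)) (wienerNorm ρ a * wienerNorm ρ b) :=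
  hasSum_mul_sub_of_summable_norm (Summable.norm ha) (Summable.norm hb)

lemma norm_laurentConv_mul_pow_natAbs_le {a b : ℤ → 𝔸} (hρ : 1 ≤ ρ) (ha : WienerSummable ρ a)
    (hb : WienerSummable ρ b) (k : ℤ) :
    ‖laurentConv a b k‖ * ρ ^ k.natAbs ≤
      ∑' j, (‖a j‖ * ρ ^ j.natAbs) * (‖b (k - j)‖ * ρ ^ (k - j).natAbs) := by
  have : 0 < ρ := one_pos.trans_le hρ
  have hs := (ha.hasSum_mul_sub hb).summable.prod_factor k
  rw [← le_div_iff₀ (by positivity)]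
  refine tsum_of_norm_bounded (hs.hasSum.div_const _) fun j => ?_
  rw [le_div_iff₀ (by positivity)]
  exact norm_mul_sub_mul_pow_natAbs_le hρ a b k j

lemma WienerSummable.laurentConv {a b : ℤ → 𝔸} (hρ : 1 ≤ ρ) (ha : WienerSummable ρ a)
    (hb : WienerSummable ρ b) : WienerSummable ρ (laurentConv a b) :=
  have : 0 ≤ ρ := zero_le_one.trans hρ
  Summable.of_nonneg_of_le (fun _ => by positivity)
    (norm_laurentConv_mul_pow_natAbs_le hρ ha hb) (ha.hasSum_mul_sub hb).summable.prod

lemma wienerNorm_laurentConv_le {a b : ℤ → 𝔸} (hρ : 1 ≤ ρ) (ha : WienerSummable ρ a)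
    (hb : WienerSummable ρ b) :
    wienerNorm ρ (laurentConv a b) ≤ wienerNorm ρ a * wienerNorm ρ b := by
  have hprod := ha.hasSum_mul_sub hb
  rw [← hprod.tsum_eq, hprod.summable.tsum_prod]
  exact (ha.laurentConv hρ hb).tsum_le_tsum (norm_laurentConv_mul_pow_natAbs_le hρ ha hb)
    hprod.summable.prod

lemma WienerSummable.summable_mul_sub [CompleteSpace 𝔸] {a b : ℤ → 𝔸} (hρ : 1 ≤ ρ)
    (ha : WienerSummable ρ a) (hb : WienerSummable ρ b) (k : ℤ) :
    Summable fun j => a j * b (k - j) := by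
  have hprod := hasSum_mul_sub_of_summable_norm (a := a) (b := b) (ha.summable_norm hρ)
    (hb.summable_norm hρ)
  exact hprod.summable.prod_factor k

variable [NormedAlgebra ℂ 𝔸] [CompleteSpace 𝔸]

lemma norm_zpow_smul_of_norm_eq_one [NormedSpace ℂ E] {z : ℂ} (hz : ‖z‖ = 1) (k : ℤ) (x : E) :
    ‖z ^ k • x‖ = ‖x‖ := by
  rw [norm_smul, norm_zpow, hz, one_zpow, one_mul]

lemma WienerSummable.summable_zpow_smul [NormedSpace ℂ E] [CompleteSpace E] {a : ℤ → E}
    (hρ : 1 ≤ ρ) (ha : WienerSummable ρ a) {z : ℂ} (hz : ‖z‖ = 1) :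
    Summable fun k : ℤ => z ^ k • a k :=
  .of_norm <| by simpa only [norm_zpow_smul_of_norm_eq_one hz] using ha.summable_norm hρ

lemma hasSum_zpow_smul_laurentConv {a b : ℤ → 𝔸} (hρ : 1 ≤ ρ) (ha : WienerSummable ρ a)
    (hb : WienerSummable ρ b) {z : ℂ} (hz : ‖z‖ = 1) :
    HasSum (fun k : ℤ => z ^ k • laurentConv a b k)
      ((∑' k : ℤ, z ^ k • a k) * ∑' k : ℤ, z ^ k • b k) := by
  have hz0 : z ≠ 0 := norm_ne_zero_iff.1 (hz ▸ one_ne_zero)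
  have hprod : HasSum (fun p : ℤ × ℤ => z ^ p.1 • (a p.2 * b (p.1 - p.2)))
      ((∑' k : ℤ, z ^ k • a k) * ∑' k : ℤ, z ^ k • b k) := by
    convert! hasSum_mul_sub_of_summable_norm (a := fun k : ℤ => z ^ k • a k)
      (b := fun k : ℤ => z ^ k • b k) ?_ ?_ using 2 with p
    · rw [smul_mul_smul_comm, ← zpow_add₀ hz0, add_sub_cancel]
    · simpa only [norm_zpow_smul_of_norm_eq_one hz] using ha.summable_norm hρ
    · simpa only [norm_zpow_smul_of_norm_eq_one hz] using hb.summable_norm hρ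
  exact hprod.prod_fiberwise fun k => (ha.summable_mul_sub hρ hb k).hasSum.const_smul _

end WienerAlgebra

section LaurentSeries

variable {E : Type*} [NormedAddCommGroup E] [NormedSpace ℂ E]

lemma tsum_natCast_zpow_smul {c : ℤ → E} (hc : ∀ k < 0, c k = 0) (z : ℂ) :
    ∑' k : ℕ, z ^ k • c k = ∑' k : ℤ, z ^ k • c k := by
  have hsupp : Function.support (fun k : ℤ => z ^ k • c k) ⊆ Set.range (Nat.cast : ℕ → ℤ) := by
    intro k hk
    by_contra! hneg
    have : k < 0 := not_le.1 fun h => hneg ⟨k.toNat, Int.toNat_of_nonneg h⟩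
    exact hk (by simp only [hc k this, smul_zero])
  simpa only [zpow_natCast] using Nat.cast_injective.tsum_eq hsupp

lemma tsum_neg_zpow_smul {c : ℤ → E} (hc : ∀ k, 0 < k → c k = 0) (z : ℂ) :
    ∑' k : ℕ, z⁻¹ ^ k • c (-k) = ∑' k : ℤ, z ^ k • c k := by
  rw [tsum_natCast_zpow_smul (c := fun k => c (-k)) (fun k hk => hc _ (neg_pos.2 hk)),
    ← (Equiv.neg ℤ).tsum_eq]
  simp only [Equiv.neg_apply, neg_neg, inv_zpow, zpow_neg, inv_inv]

end LaurentSeries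

section WienerHopf

variable {E : Type*} [NormedAddCommGroup E] {ρ : ℝ}

lemma summable_prod_of_summable_wienerNorm {Y : ℕ → ℤ → E} (hρ : 0 ≤ ρ)
    (hY : ∀ n, WienerSummable ρ (Y n)) (hsum : Summable fun n => wienerNorm ρ (Y n)) :
    Summable fun p : ℕ × ℤ => ‖Y p.1 p.2‖ * ρ ^ p.2.natAbs :=
  (summable_prod_of_nonneg fun _ => by positivity).2 ⟨hY, hsum⟩

lemma norm_tsum_mul_pow_natAbs_le {Y : ℕ → ℤ → E} (hρ : 0 < ρ)
    (hY : ∀ n, WienerSummable ρ (Y n)) (hsum : Summable fun n => wienerNorm ρ (Y n)) (k : ℤ) :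
    ‖∑' n, Y n k‖ * ρ ^ k.natAbs ≤ ∑' n, ‖Y n k‖ * ρ ^ k.natAbs := by
  have hs := (summable_prod_of_summable_wienerNorm hρ.le hY hsum).prod_symm.prod_factor k
  rw [← le_div_iff₀ (by positivity)]
  refine tsum_of_norm_bounded (hs.hasSum.div_const _) fun n => ?_
  rw [le_div_iff₀ (by positivity)]
  exact le_rfl

lemma WienerSummable.tsum {Y : ℕ → ℤ → E} (hρ : 0 < ρ)
    (hY : ∀ n, WienerSummable ρ (Y n)) (hsum : Summable fun n => wienerNorm ρ (Y n)) :
    WienerSummable ρ fun k => ∑' n, Y n k :=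
  Summable.of_nonneg_of_le (fun _ => by positivity) (norm_tsum_mul_pow_natAbs_le hρ hY hsum)
    (summable_prod_of_summable_wienerNorm hρ.le hY hsum).prod_symm.prod

lemma wienerNorm_tsum_le {Y : ℕ → ℤ → E} (hρ : 0 < ρ)
    (hY : ∀ n, WienerSummable ρ (Y n)) (hsum : Summable fun n => wienerNorm ρ (Y n)) :
    wienerNorm ρ (fun k => ∑' n, Y n k) ≤ ∑' n, wienerNorm ρ (Y n) := by
  have hprod := summable_prod_of_summable_wienerNorm hρ.le hY hsum
  calc wienerNorm ρ (fun k => ∑' n, Y n k)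
      ≤ ∑' k, ∑' n, ‖Y n k‖ * ρ ^ k.natAbs :=
        (WienerSummable.tsum hρ hY hsum).tsum_le_tsum (norm_tsum_mul_pow_natAbs_le hρ hY hsum)
          hprod.prod_symm.prod
    _ = ∑' n, wienerNorm ρ (Y n) := hprod.tsum_comm

lemma summable_of_summable_wienerNorm {Y : ℕ → ℤ → E} (hρ : 1 ≤ ρ)
    (hY : ∀ n, WienerSummable ρ (Y n)) (hsum : Summable fun n => wienerNorm ρ (Y n)) :
    Summable fun p : ℕ × ℤ => ‖Y p.1 p.2‖ :=
  Summable.of_nonneg_of_le (fun _ => norm_nonneg _)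
    (fun _ => le_mul_of_one_le_right (norm_nonneg _) (one_le_pow₀ hρ))
    (summable_prod_of_summable_wienerNorm (zero_le_one.trans hρ) hY hsum)

variable {𝔸 : Type*} [NormedRing 𝔸]

/-- The terms of the Neumann series `Y = ∑ₙ Yₙ` solving `Y = -Π(e + Y * e)`, where `Π` is the
projection onto the negative powers and `*` is the product of Laurent series. -/
noncomputable def wienerHopfTerm (e : ℤ → 𝔸) : ℕ → ℤ → 𝔸
  | 0 => -(Set.Iio 0).indicator e
  | n + 1 => -(Set.Iio 0).indicator (laurentConv (wienerHopfTerm e n) e)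

lemma wienerHopfTerm_of_nonneg (e : ℤ → 𝔸) (n : ℕ) {k : ℤ} (hk : 0 ≤ k) :
    wienerHopfTerm e n k = 0 := by
  cases n <;> simp [wienerHopfTerm, hk]

lemma wienerHopfTerm_bound {e : ℤ → 𝔸} (hρ : 1 ≤ ρ) (he : WienerSummable ρ e) (n : ℕ) :
    WienerSummable ρ (wienerHopfTerm e n) ∧
      wienerNorm ρ (wienerHopfTerm e n) ≤ wienerNorm ρ e ^ (n + 1) := by
  have hρ0 : 0 ≤ ρ := zero_le_one.trans hρ
  have hneg (a : ℤ → 𝔸) (k : ℤ) : ‖(-(Set.Iio 0).indicator a) k‖ ≤ ‖a k‖ := by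
    simpa only [Pi.neg_apply, norm_neg] using norm_indicator_le_norm_self a k
  induction n with
  | zero =>
    rw [zero_add, pow_one]
    exact ⟨he.of_norm_le hρ0 (hneg e), wienerNorm_le_of_norm_le hρ0 he (hneg e)⟩
  | succ n ih =>
    have hconv := ih.1.laurentConv hρ he
    refine ⟨hconv.of_norm_le hρ0 (hneg _), ?_⟩
    calc wienerNorm ρ (wienerHopfTerm e (n + 1))
        ≤ wienerNorm ρ (laurentConv (wienerHopfTerm e n) e) :=
          wienerNorm_le_of_norm_le hρ0 hconv (hneg _)
      _ ≤ wienerNorm ρ (wienerHopfTerm e n) * wienerNorm ρ e :=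
          wienerNorm_laurentConv_le hρ ih.1 he
      _ ≤ wienerNorm ρ e ^ (n + 1) * wienerNorm ρ e := by
          gcongr
          · exact wienerNorm_nonneg hρ0 e
          · exact ih.2

variable [CompleteSpace 𝔸]

lemma laurentConv_tsum {Y : ℕ → ℤ → 𝔸} {e : ℤ → 𝔸} (hρ : 1 ≤ ρ)
    (hY : ∀ n, WienerSummable ρ (Y n)) (hsum : Summable fun n => wienerNorm ρ (Y n))
    (he : WienerSummable ρ e) (k : ℤ) :
    laurentConv (fun j => ∑' n, Y n j) e k = ∑' n, laurentConv (Y n) e k := by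
  have hnorm := summable_of_summable_wienerNorm hρ hY hsum
  obtain ⟨C, hC⟩ : ∃ C, ∀ j, ‖e j‖ ≤ C :=
    ⟨_, fun j => (he.summable_norm hρ).le_tsum j fun _ _ => norm_nonneg _⟩
  have hprod : Summable fun p : ℕ × ℤ => Y p.1 p.2 * e (k - p.2) :=
    Summable.of_norm_bounded (hnorm.mul_right C) fun p =>
      (norm_mul_le _ _).trans (by gcongr; exact hC _)
  calc laurentConv (fun j => ∑' n, Y n j) e k
      = ∑' j, ∑' n, Y n j * e (k - j) :=
        tsum_congr fun j => (hnorm.of_norm.prod_symm.prod_factor j).tsum_mul_right _ |>.symm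
    _ = ∑' n, laurentConv (Y n) e k := hprod.tsum_comm

lemma exists_wienerHopf_solution {e : ℤ → 𝔸} (hρ : 1 ≤ ρ) (he : WienerSummable ρ e)
    (he1 : wienerNorm ρ e < 1) :
    ∃ Y : ℤ → 𝔸, WienerSummable ρ Y ∧
      wienerNorm ρ Y ≤ wienerNorm ρ e * (1 - wienerNorm ρ e)⁻¹ ∧
      (∀ k, 0 ≤ k → Y k = 0) ∧ ∀ k < 0, Y k + e k + laurentConv Y e k = 0 := by
  have hρ0 : 0 < ρ := one_pos.trans_le hρ
  have hY := fun n => (wienerHopfTerm_bound hρ he n).1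
  have hgeom := (hasSum_geometric_of_lt_one (wienerNorm_nonneg hρ0.le e) he1).mul_left
    (wienerNorm ρ e)
  simp only [← pow_succ'] at hgeom
  have hsum : Summable fun n => wienerNorm ρ (wienerHopfTerm e n) :=
    Summable.of_nonneg_of_le (fun _ => wienerNorm_nonneg hρ0.le _)
      (fun n => (wienerHopfTerm_bound hρ he n).2) hgeom.summable
  refine ⟨fun k => ∑' n, wienerHopfTerm e n k, WienerSummable.tsum hρ0 hY hsum, ?_, ?_, ?_⟩
  · exact (wienerNorm_tsum_le hρ0 hY hsum).trans
      (hasSum_le (fun n => (wienerHopfTerm_bound hρ he n).2) hsum.hasSum hgeom)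
  · intro k hk
    simp only [wienerHopfTerm_of_nonneg e _ hk, tsum_zero]
  · intro k hk
    have hterm : Summable fun n => wienerHopfTerm e n k :=
      (summable_of_summable_wienerNorm hρ hY hsum).of_norm.prod_symm.prod_factor k
    have hzero : wienerHopfTerm e 0 k = -e k := by
      simp [wienerHopfTerm, hk]
    have hsucc (n : ℕ) : wienerHopfTerm e (n + 1) k = -laurentConv (wienerHopfTerm e n) e k := by
      simp [wienerHopfTerm, hk]
    beta_reduce
    rw [laurentConv_tsum hρ hY hsum he, hterm.tsum_eq_zero_add, hzero]
    simp only [hsucc, tsum_neg]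
    abel

end WienerHopf

section DiskUnit

variable {𝔸 : Type*} [NormedRing 𝔸] [NormedAlgebra ℂ 𝔸]

/-- `F` is holomorphic and invertible-valued on (a neighbourhood of) the closed unit disk.
Factors that live near `|z| ≥ 1` are written `H z⁻¹` with `DiskUnit H`. -/
structure DiskUnit (F : ℂ → 𝔸) : Prop where
  analytic : AnalyticOnNhd ℂ F (closedBall 0 1)
  isUnit : ∀ z ∈ closedBall (0 : ℂ) 1, IsUnit (F z)

lemma DiskUnit.mul {F G : ℂ → 𝔸} (hF : DiskUnit F) (hG : DiskUnit G) :
    DiskUnit fun z => F z * G z where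
  analytic := hF.analytic.mul hG.analytic
  isUnit z hz := (hF.isUnit z hz).mul (hG.isUnit z hz)

variable [CompleteSpace 𝔸]

lemma DiskUnit.inverse {F : ℂ → 𝔸} (hF : DiskUnit F) : DiskUnit fun z => Ring.inverse (F z) where
  analytic z hz := by
    obtain ⟨u, hu⟩ := hF.isUnit z hz
    have hinv : AnalyticAt ℂ Ring.inverse (F z) := hu ▸ analyticAt_inverse u
    exact hinv.comp (hF.analytic z hz)
  isUnit z hz := (hF.isUnit z hz).ringInverse

lemma diskUnit_one_add_tsum {ρ : ℝ} (hρ : 1 < ρ) {c : ℕ → 𝔸}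
    (hc : Summable fun k => ‖c k‖ * ρ ^ k) (hlt : ∑' k, ‖c k‖ * ρ ^ k < 1) :
    DiskUnit fun z : ℂ => 1 + ∑' k, z ^ k • c k := by
  have hbound (k : ℕ) (z : ℂ) (hz : z ∈ ball (0 : ℂ) ρ) : ‖z ^ k • c k‖ ≤ ‖c k‖ * ρ ^ k := by
    rw [norm_smul, norm_pow, mul_comm]
    have : ‖z‖ ≤ ρ := (mem_ball_zero_iff.1 hz).le
    gcongr
  have hmem {z : ℂ} (hz : z ∈ closedBall (0 : ℂ) 1) : z ∈ ball (0 : ℂ) ρ :=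
    closedBall_subset_ball hρ hz
  constructor
  · intro z hz
    have hdiff : DifferentiableOn ℂ (fun z : ℂ => ∑' k, z ^ k • c k) (ball 0 ρ) :=
      Complex.differentiableOn_tsum_of_summable_norm hc
        (fun k => ((differentiable_id.pow k).smul_const (c k)).differentiableOn) isOpen_ball hbound
    exact analyticAt_const.add (hdiff.analyticAt (isOpen_ball.mem_nhds (hmem hz)))
  · intro z hz
    have hsmall : ‖∑' k, z ^ k • c k‖ < 1 :=
      (tsum_of_norm_bounded hc.hasSum fun k => hbound k z (hmem hz)).trans_lt hlt
    simpa using isUnit_one_sub_of_norm_lt_one (x := -∑' k, z ^ k • c k) (by rwa [norm_neg])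

lemma diskUnit_one_add_tsum_of_injective {ρ : ℝ} (hρ : 1 < ρ) {c : ℤ → 𝔸}
    (hc : WienerSummable ρ c) (hlt : wienerNorm ρ c < 1) {φ : ℕ → ℤ} (hφ : φ.Injective)
    (hφabs : ∀ k, (φ k).natAbs = k) :
    DiskUnit fun z : ℂ => 1 + ∑' k, z ^ k • c (φ k) := by
  have : 0 < ρ := one_pos.trans hρ
  refine diskUnit_one_add_tsum hρ ?_ (lt_of_le_of_lt ?_ hlt)
  · simpa only [Function.comp_def, hφabs] using hc.comp_injective hφ
  · simpa only [Function.comp_def, hφabs, wienerNorm] using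
      tsum_comp_le_tsum_of_inj hc (fun _ => by positivity) hφ

theorem exists_diskUnit_mul_one_add_eq {ρ : ℝ} (hρ : 1 < ρ) {e : ℤ → 𝔸} (he : WienerSummable ρ e)
    (hsmall : wienerNorm ρ e ≤ 1 / 4) :
    ∃ X G : ℂ → 𝔸, DiskUnit X ∧ DiskUnit G ∧
      ∀ z : ℂ, ‖z‖ = 1 → X z⁻¹ * (1 + ∑' k : ℤ, z ^ k • e k) = G z := by
  have hρ0 : 0 ≤ ρ := zero_le_one.trans hρ.le
  have : 0 ≤ wienerNorm ρ e := wienerNorm_nonneg hρ0 e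
  obtain ⟨Y, hY, hYle, hYneg, hYeq⟩ :=
    exists_wienerHopf_solution hρ.le he (hsmall.trans_lt (by norm_num))
  have hYsmall : wienerNorm ρ Y ≤ 1 / 3 := by
    refine hYle.trans ?_
    rw [← div_eq_mul_inv, div_le_iff₀] <;> linarith
  have hconv := hY.laurentConv hρ.le he
  set c : ℤ → 𝔸 := Y + e + laurentConv Y e
  have hc : WienerSummable ρ c := (hY.add hρ0 he).add hρ0 hconv
  have hcsmall : wienerNorm ρ c < 1 := by
    have h₁ := wienerNorm_add_le hρ0 (hY.add hρ0 he) hconv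
    have h₂ := wienerNorm_add_le hρ0 hY he
    have h₃ := wienerNorm_laurentConv_le hρ.le hY he
    nlinarith [wienerNorm_nonneg hρ0 Y]
  refine ⟨_, _, diskUnit_one_add_tsum_of_injective hρ hY (hYsmall.trans_lt (by norm_num))
      (φ := fun k => -k) (neg_injective.comp Nat.cast_injective) (by simp),
    diskUnit_one_add_tsum_of_injective hρ hc hcsmall (φ := Nat.cast) Nat.cast_injective (by simp),
    fun z hz => ?_⟩
  have hsumY := hY.summable_zpow_smul hρ.le hz
  have hsume := he.summable_zpow_smul hρ.le hz
  have hsumc : ∑' k : ℤ, z ^ k • c k = (∑' k : ℤ, z ^ k • Y k) + (∑' k : ℤ, z ^ k • e k) +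
      (∑' k : ℤ, z ^ k • Y k) * ∑' k : ℤ, z ^ k • e k := by
    rw [← ((hsumY.hasSum.add hsume.hasSum).add
      (hasSum_zpow_smul_laurentConv hρ.le hY he hz)).tsum_eq]
    simp only [c, Pi.add_apply, smul_add]
  rw [tsum_neg_zpow_smul (fun k hk => hYneg k hk.le), tsum_natCast_zpow_smul (c := c) hYeq, hsumc]
  noncomm_ring

end DiskUnit

section LaurentExpansion

variable {E : Type*} [NormedAddCommGroup E]

/-- The closed annulus `σ⁻¹ ≤ |z| ≤ σ`. -/
def closedAnnulus (σ : ℝ) : Set ℂ :=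
  closedBall 0 σ \ ball 0 σ⁻¹

lemma mem_closedAnnulus {σ : ℝ} {z : ℂ} : z ∈ closedAnnulus σ ↔ σ⁻¹ ≤ ‖z‖ ∧ ‖z‖ ≤ σ := by
  simp [closedAnnulus, and_comm]

lemma isCompact_closedAnnulus (σ : ℝ) : IsCompact (closedAnnulus σ) :=
  (isCompact_closedBall _ _).diff isOpen_ball

lemma ne_zero_of_mem_closedAnnulus {σ : ℝ} (hσ : 0 < σ) {z : ℂ} (hz : z ∈ closedAnnulus σ) :
    z ≠ 0 :=
  norm_pos_iff.1 <| (inv_pos.2 hσ).trans_le (mem_closedAnnulus.1 hz).1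

lemma sphere_subset_closedAnnulus {σ : ℝ} (hσ : 1 ≤ σ) : sphere 0 1 ⊆ closedAnnulus σ :=
  fun z hz => by
    rw [mem_closedAnnulus, mem_sphere_zero_iff_norm.1 hz]
    exact ⟨inv_le_one_of_one_le₀ hσ, hσ⟩

lemma summable_pow_natAbs {q : ℝ} (h0 : 0 ≤ q) (h1 : q < 1) :
    Summable fun k : ℤ => q ^ k.natAbs := by
  have hgeom := summable_geometric_of_lt_one h0 h1
  exact .of_nat_of_neg (by simpa using hgeom) (by simpa using hgeom)

variable [NormedSpace ℂ E]

lemma norm_circleAverage_le {h : ℂ → E} {s B : ℝ} (hs : 0 ≤ s)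
    (hB : ∀ z, ‖z‖ = s → ‖h z‖ ≤ B) : ‖Real.circleAverage h 0 s‖ ≤ B := by
  rw [Real.circleAverage, norm_smul, norm_inv, Real.norm_of_nonneg Real.two_pi_pos.le,
    inv_mul_le_iff₀ Real.two_pi_pos]
  refine (intervalIntegral.norm_integral_le_of_norm_le_const fun θ _ => hB _ ?_).trans_eq ?_
  · rw [norm_circleMap_zero, abs_of_nonneg hs]
  · rw [sub_zero, abs_of_pos Real.two_pi_pos, mul_comm]

/-- The `k`-th Laurent coefficient of `h`, as the mean of `z⁻ᵏ h(z)` over the unit circle. -/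
noncomputable def laurentCoeff (h : ℂ → E) (k : ℤ) : E :=
  Real.circleAverage (fun z => z ^ (-k) • h z) 0 1

lemma coe_toCircle_two_pi (θ : ℝ) :
    (AddCircle.toCircle (θ : AddCircle (2 * Real.pi)) : ℂ) = circleMap 0 1 θ := by
  rw [AddCircle.toCircle_apply_mk, div_self Real.two_pi_pos.ne', one_mul, Circle.coe_exp]
  simp [circleMap]

lemma fourierCoeff_comp_toCircle [Fact (0 < 2 * Real.pi)] (h : ℂ → E) (k : ℤ) :
    fourierCoeff (fun x : AddCircle (2 * Real.pi) => h x.toCircle) k = laurentCoeff h k := by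
  rw [fourierCoeff_eq_intervalIntegral _ k 0, zero_add, one_div, laurentCoeff, Real.circleAverage]
  simp only [fourier_apply, AddCircle.toCircle_zsmul, Circle.coe_zpow, coe_toCircle_two_pi]

variable {σ : ℝ} {h : ℂ → E}

lemma circleAverage_eq_of_differentiableOn_annulus {r R : ℝ} (hr : 0 < r) (hrR : r ≤ R)
    (hh : DifferentiableOn ℂ h (closedBall 0 R \ ball 0 r)) :
    Real.circleAverage h 0 R = Real.circleAverage h 0 r := by
  rw [Real.circleAverage_eq_circleIntegral (hr.trans_le hrR).ne',
    Real.circleAverage_eq_circleIntegral hr.ne',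
    Complex.circleIntegral_sub_center_inv_smul_eq_of_differentiable_on_annulus_off_countable hr hrR
      Set.countable_empty hh.continuousOn]
  rintro z ⟨hz, -⟩
  refine (hh.mono ?_).differentiableAt ((isOpen_ball.sdiff isClosed_closedBall).mem_nhds hz)
  exact Set.sdiff_subset_sdiff ball_subset_closedBall ball_subset_closedBall

lemma differentiableOn_zpow_smul (hσ : 0 < σ) (hh : DifferentiableOn ℂ h (closedAnnulus σ))
    (k : ℤ) : DifferentiableOn ℂ (fun z => z ^ k • h z) (closedAnnulus σ) :=
  DifferentiableOn.smul
    (fun _ hz => (differentiableAt_zpow.2 <|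
      .inl (ne_zero_of_mem_closedAnnulus hσ hz)).differentiableWithinAt) hh

lemma norm_laurentCoeff_le (hσ : 1 < σ) (hh : DifferentiableOn ℂ h (closedAnnulus σ)) {B : ℝ}
    (hB : ∀ z ∈ closedAnnulus σ, ‖h z‖ ≤ B) (k : ℤ) :
    ‖laurentCoeff h k‖ ≤ B * σ⁻¹ ^ k.natAbs := by
  have hσ0 : 0 < σ := one_pos.trans hσ
  have hσinv : σ⁻¹ < 1 := inv_lt_one_of_one_lt₀ hσ
  have hdiff := differentiableOn_zpow_smul hσ0 hh (-k)
  have hbound {s : ℝ} (hs : 0 < s) (hsmem : ∀ z : ℂ, ‖z‖ = s → z ∈ closedAnnulus σ) :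
      ‖Real.circleAverage (fun z => z ^ (-k) • h z) 0 s‖ ≤ B * s ^ (-k) :=
    norm_circleAverage_le hs.le fun z hz => by
      rw [norm_smul, norm_zpow, hz, mul_comm]
      gcongr
      exact hB z (hsmem z hz)
  obtain hk | hk := Int.natAbs_eq k
  · have houter : Real.circleAverage (fun z => z ^ (-k) • h z) 0 σ = laurentCoeff h k :=
      circleAverage_eq_of_differentiableOn_annulus one_pos hσ.le <| hdiff.mono <|
        Set.sdiff_subset_sdiff_right (ball_subset_ball hσinv.le)
    refine houter ▸ (hbound hσ0 fun z hz => ?_).trans_eq ?_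
    · exact mem_closedAnnulus.2 (by rw [hz]; exact ⟨(hσinv.trans hσ).le, le_rfl⟩)
    · rw [hk, Int.natAbs_natCast, zpow_neg, zpow_natCast, inv_pow]
  · have hinner : laurentCoeff h k = Real.circleAverage (fun z => z ^ (-k) • h z) 0 σ⁻¹ :=
      circleAverage_eq_of_differentiableOn_annulus (inv_pos.2 hσ0) hσinv.le <| hdiff.mono <|
        Set.sdiff_subset_sdiff_left (closedBall_subset_closedBall hσ.le)
    refine hinner ▸ (hbound (inv_pos.2 hσ0) fun z hz => ?_).trans_eq ?_
    · exact mem_closedAnnulus.2 (by rw [hz]; exact ⟨le_rfl, (hσinv.trans hσ).le⟩)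
    · rw [hk, neg_neg, Int.natAbs_neg, Int.natAbs_natCast, zpow_natCast]

lemma wienerSummable_laurentCoeff {ρ : ℝ} (hρ : 1 ≤ ρ) (hρσ : ρ < σ)
    (hh : DifferentiableOn ℂ h (closedAnnulus σ)) : WienerSummable ρ (laurentCoeff h) := by
  have hρ0 : 0 < ρ := one_pos.trans_le hρ
  have hσ0 : 0 < σ := hρ0.trans hρσ
  obtain ⟨B, hB⟩ := (isCompact_closedAnnulus σ).exists_bound_of_continuousOn hh.continuousOn
  refine Summable.of_nonneg_of_le (fun _ => by positivity) (fun k => ?_)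
    ((summable_pow_natAbs (q := σ⁻¹ * ρ) (by positivity)
      ((inv_mul_lt_one₀ hσ0).2 hρσ)).mul_left B)
  rw [mul_pow, ← mul_assoc]
  gcongr
  exact norm_laurentCoeff_le (hρ.trans_lt hρσ) hh hB k

lemma hasSum_laurentCoeff_complex {h : ℂ → ℂ} (hσ : 1 < σ)
    (hh : DifferentiableOn ℂ h (closedAnnulus σ)) {z : ℂ} (hz : ‖z‖ = 1) :
    HasSum (fun k : ℤ => z ^ k • laurentCoeff h k) (h z) := by
  have : Fact (0 < 2 * Real.pi) := ⟨Real.two_pi_pos⟩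
  have hmem (x : AddCircle (2 * Real.pi)) : (x.toCircle : ℂ) ∈ closedAnnulus σ :=
    sphere_subset_closedAnnulus hσ.le (mem_sphere_zero_iff_norm.2 (Circle.norm_coe _))
  let F : C(AddCircle (2 * Real.pi), ℂ) :=
    ⟨fun x => h x.toCircle, hh.continuousOn.comp_continuous
      (continuous_subtype_val.comp AddCircle.continuous_toCircle) hmem⟩
  have hcoeff : fourierCoeff F = laurentCoeff h := funext (fourierCoeff_comp_toCircle h)
  have hsum : Summable (fourierCoeff F) :=
    hcoeff ▸ ((wienerSummable_laurentCoeff le_rfl hσ hh).summable_norm le_rfl).of_norm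
  have hzarg : circleMap 0 1 z.arg = z := by
    simpa [circleMap, hz] using z.norm_mul_exp_arg_mul_I
  have hpoint :=
    has_pointwise_sum_fourier_series_of_summable hsum (z.arg : AddCircle (2 * Real.pi))
  simpa only [F, ContinuousMap.coe_mk, fourierCoeff_comp_toCircle, fourier_apply,
    AddCircle.toCircle_zsmul, Circle.coe_zpow, coe_toCircle_two_pi, hzarg, smul_eq_mul,
    mul_comm] using hpoint

theorem hasSum_laurentCoeff [CompleteSpace E] (hσ : 1 < σ)
    (hh : DifferentiableOn ℂ h (closedAnnulus σ)) {z : ℂ} (hz : ‖z‖ = 1) :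
    HasSum (fun k : ℤ => z ^ k • laurentCoeff h k) (h z) := by
  have hσ0 : 0 < σ := one_pos.trans hσ
  have hsum := (wienerSummable_laurentCoeff le_rfl hσ hh).summable_zpow_smul le_rfl hz
  suffices ∑' k : ℤ, z ^ k • laurentCoeff h k = h z from this ▸ hsum.hasSum
  refine (SeparatingDual.eq_iff_forall_dual_eq (R := ℂ)).2 fun φ => ?_
  have hcoeff (k : ℤ) : φ (laurentCoeff h k) = laurentCoeff (φ ∘ h) k := by
    have hint : CircleIntegrable (fun z => z ^ (-k) • h z) 0 1 :=
      ((differentiableOn_zpow_smul hσ0 hh (-k)).continuousOn.mono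
        (sphere_subset_closedAnnulus hσ.le)).circleIntegrable zero_le_one
    refine (ContinuousLinearMap.circleAverage_comp_comm (φ.restrictScalars ℝ) hint).symm.trans ?_
    simp only [laurentCoeff, Function.comp_def, ContinuousLinearMap.coe_restrictScalars', map_smul]
  rw [φ.map_tsum hsum]
  simp only [map_smul, hcoeff]
  exact (hasSum_laurentCoeff_complex hσ (φ.differentiable.comp_differentiableOn hh) hz).tsum_eq

end LaurentExpansion

section Approximation

lemma exists_finset_wienerNorm_indicator_compl_lt {E : Type*} [NormedAddCommGroup E] {ρ ε : ℝ}
    (a : ℤ → E) (hε : 0 < ε) :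
    ∃ S : Finset ℤ, wienerNorm ρ ((↑S : Set ℤ)ᶜ.indicator a) < ε := by
  have htail := tendsto_tsum_compl_atTop_zero fun k => ‖a k‖ * ρ ^ k.natAbs
  obtain ⟨S, hS⟩ := (htail.eventually (gt_mem_nhds hε)).exists
  refine ⟨S, lt_of_eq_of_lt ?_ hS⟩
  refine Eq.trans (tsum_congr fun k => ?_)
    (tsum_subtype (↑S : Set ℤ)ᶜ fun k => ‖a k‖ * ρ ^ k.natAbs).symm
  rw [norm_indicator_eq_indicator_norm, Set.indicator_mul_left]

lemma sum_add_tsum_zpow_smul_indicator_compl {E : Type*} [NormedAddCommGroup E] [NormedSpace ℂ E]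
    {a : ℤ → E} {z : ℂ} {x : E} (ha : HasSum (fun k : ℤ => z ^ k • a k) x) (S : Finset ℤ) :
    ∑ k ∈ S, z ^ k • a k + ∑' k : ℤ, z ^ k • (↑S : Set ℤ)ᶜ.indicator a k = x := by
  have hindicator (k : ℤ) : z ^ k • (↑S : Set ℤ)ᶜ.indicator a k =
      (↑S : Set ℤ)ᶜ.indicator (fun k => z ^ k • a k) k :=
    (Set.indicator_smul_apply _ _ _ _).symm
  simp only [hindicator, ← tsum_subtype]
  exact ha.summable.sum_add_tsum_compl.trans ha.tsum_eq

variable {𝔸 : Type*} [NormedRing 𝔸] [NormedAlgebra ℂ 𝔸] [CompleteSpace 𝔸]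

theorem exists_diskUnit_mul_laurentPolynomial_eq {σ : ℝ} (hσ : 1 < σ) {f : ℂ → 𝔸}
    (hf : DifferentiableOn ℂ f (closedAnnulus σ)) (hfu : ∀ z ∈ closedAnnulus σ, IsUnit (f z)) :
    ∃ X G : ℂ → 𝔸, DiskUnit X ∧ DiskUnit G ∧ ∃ (S : Finset ℤ) (c : ℤ → 𝔸),
      ∀ z : ℂ, ‖z‖ = 1 → X z⁻¹ * ∑ k ∈ S, z ^ k • c k = G z * f z := by
  obtain ⟨ρ, hρ, hρσ⟩ := exists_between hσ
  have hρ0 : 0 ≤ ρ := zero_le_one.trans hρ.le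
  have hg : DifferentiableOn ℂ (fun z => Ring.inverse (f z)) (closedAnnulus σ) :=
    hf.inverse hfu
  set a := laurentCoeff f
  set d := laurentCoeff fun z => Ring.inverse (f z)
  have ha : WienerSummable ρ a := wienerSummable_laurentCoeff hρ.le hρσ hf
  have hd : WienerSummable ρ d := wienerSummable_laurentCoeff hρ.le hρσ hg
  have hd0 : 0 ≤ wienerNorm ρ d := wienerNorm_nonneg hρ0 d
  obtain ⟨S, hS⟩ := exists_finset_wienerNorm_indicator_compl_lt (ρ := ρ)
    (ε := (4 * (wienerNorm ρ d + 1))⁻¹) (-a) (by positivity)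
  set t := (↑S : Set ℤ)ᶜ.indicator (-a) with ht_def
  have ht : WienerSummable ρ t := ha.of_norm_le hρ0 fun k =>
    (norm_indicator_le_norm_self _ _).trans_eq (norm_neg _)
  have hsmall : wienerNorm ρ (laurentConv t d) ≤ 1 / 4 := by
    refine (wienerNorm_laurentConv_le hρ.le ht hd).trans ?_
    calc wienerNorm ρ t * wienerNorm ρ d
        ≤ (4 * (wienerNorm ρ d + 1))⁻¹ * (wienerNorm ρ d + 1) := by gcongr; linarith
      _ = 1 / 4 := by field_simp
  obtain ⟨X, G, hX, hG, hXG⟩ := exists_diskUnit_mul_one_add_eq hρ (ht.laurentConv hρ.le hd) hsmall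
  refine ⟨X, G, hX, hG, S, a, fun z hz => ?_⟩
  have hfz : IsUnit (f z) :=
    hfu z (sphere_subset_closedAnnulus hσ.le (mem_sphere_zero_iff_norm.2 hz))
  have htail : ∑' k : ℤ, z ^ k • t k = ∑ k ∈ S, z ^ k • a k - f z := by
    have hneg : ∑' k : ℤ, z ^ k • t k = -∑' k : ℤ, z ^ k • (↑S : Set ℤ)ᶜ.indicator a k := by
      simp only [ht_def, Set.indicator_neg', Pi.neg_apply, smul_neg, tsum_neg]
    rw [hneg, ← sum_add_tsum_zpow_smul_indicator_compl (hasSum_laurentCoeff hσ hf hz) S]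
    abel
  rw [← hXG z hz, (hasSum_zpow_smul_laurentConv hρ.le ht hd hz).tsum_eq, htail,
    (hasSum_laurentCoeff hσ hg hz).tsum_eq, sub_mul, Ring.mul_inverse_cancel _ hfz,
    add_sub_cancel, mul_assoc, mul_assoc, Ring.inverse_mul_cancel _ hfz, mul_one]

end Approximation

section MatrixAnalytic

open scoped Matrix.Norms.Operator

variable {ι : Type*} [Fintype ι]

lemma analyticAt_matrix_iff {F : ℂ → Matrix ι ι ℂ} {z : ℂ} :
    AnalyticAt ℂ F z ↔ ∀ i j, AnalyticAt ℂ (fun w => F w i j) z := by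
  classical
  constructor
  · intro hF i j
    exact ((Matrix.entryLinearMap ℂ ℂ i j).toContinuousLinearMap.analyticAt _).comp hF
  · intro hF
    have hsum : F = fun w => ∑ i, ∑ j, F w i j • Matrix.single i j (1 : ℂ) := by
      funext w
      simpa only [Matrix.smul_single, smul_eq_mul, mul_one] using Matrix.matrix_eq_sum_single (F w)
    rw [hsum]
    exact Finset.analyticAt_fun_sum _ fun i _ => Finset.analyticAt_fun_sum _ fun j _ =>
      (hF i j).smul analyticAt_const

lemma analyticOnNhd_matrix_iff {F : ℂ → Matrix ι ι ℂ} {s : Set ℂ} :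
    AnalyticOnNhd ℂ F s ↔ ∀ i j, AnalyticOnNhd ℂ (fun w => F w i j) s := by
  simp only [AnalyticOnNhd, analyticAt_matrix_iff]
  tauto

lemma analyticAt_matrix_det [DecidableEq ι] {F : ℂ → Matrix ι ι ℂ} {z : ℂ}
    (hF : AnalyticAt ℂ F z) : AnalyticAt ℂ (fun w => (F w).det) z := by
  simp only [Matrix.det_apply]
  exact Finset.analyticAt_fun_sum _ fun τ _ => (Finset.analyticAt_fun_prod _ fun i _ =>
    analyticAt_matrix_iff.1 hF (τ i) i).const_smul

end MatrixAnalytic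

section MatrixAlgebra

open Polynomial in
lemma exists_sum_zpow_smul_eq_zpow_smul_map_eval {ι : Type*} (S : Finset ℤ)
    (c : ℤ → Matrix ι ι ℂ) : ∃ (N : ℤ) (A : Matrix ι ι ℂ[X]), ∀ z : ℂ, z ≠ 0 →
      ∑ k ∈ S, z ^ k • c k = z ^ N • A.map (eval z⁻¹) := by
  obtain ⟨N, hN⟩ := S.bddAbove
  refine ⟨N, Matrix.of fun i j => ∑ k ∈ S, C (c k i j) * X ^ (N - k).toNat, fun z hz => ?_⟩
  ext i j
  simp only [Matrix.sum_apply, Matrix.smul_apply, Matrix.map_apply, Matrix.of_apply,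
    eval_finsetSum, eval_mul, eval_C, eval_pow, eval_X, smul_eq_mul, Finset.mul_sum]
  refine Finset.sum_congr rfl fun k hk => ?_
  have hpow : z⁻¹ ^ (N - k).toNat = z ^ (k - N) := by
    rw [← zpow_natCast, Int.toNat_of_nonneg (sub_nonneg.2 (hN hk)), inv_zpow', neg_sub]
  rw [hpow, mul_left_comm, ← zpow_add₀ hz, add_sub_cancel, mul_comm]

lemma det_eq_zero_of_block_eq_zero {ι R : Type*} [Fintype ι] [LinearOrder ι] [CommRing R]
    (A : Matrix ι ι R) (k : ι) (hA : ∀ i j, k ≤ i → j ≤ k → A i j = 0) : A.det = 0 := by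
  rw [Matrix.det_apply']
  refine Finset.sum_eq_zero fun τ _ => ?_
  obtain ⟨j, hjk, hkj⟩ : ∃ j ≤ k, k ≤ τ j := by
    by_contra! hlt
    have hcard : ({j | j ≤ k} : Finset ι).card ≤ ({i | i < k} : Finset ι).card :=
      Finset.card_le_card_of_injOn τ (fun j hj => by simpa using hlt j (by simpa using hj))
        τ.injective.injOn
    have hssubset : ({i | i < k} : Finset ι) ⊂ ({j | j ≤ k} : Finset ι) :=
      Finset.ssubset_iff.2 ⟨k, by simp, fun i => by simpa using fun h => h.elim Eq.le le_of_lt⟩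
    exact (Finset.card_lt_card hssubset).not_ge hcard
  exact mul_eq_zero_of_right _ (Finset.prod_eq_zero (Finset.mem_univ j) (hA _ _ hkj hjk))

lemma det_one_updateRow {ι R : Type*} [Fintype ι] [DecidableEq ι] [CommRing R] (i : ι)
    (r : ι → R) : ((1 : Matrix ι ι R).updateRow i r).det = r i := by
  have hdet := Matrix.det_updateRow_sum (1 : Matrix ι ι R) i r
  rwa [← Matrix.vecMul_eq_sum, Matrix.vecMul_one, Matrix.det_one, smul_eq_mul, mul_one] at hdet

end MatrixAlgebra

section DiskFactorization

open scoped Matrix.Norms.Operator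

variable {ι : Type*} [Fintype ι] [DecidableEq ι]

/-- A Birkhoff factorization whose two factors live on the closed unit disk, the one at infinity
being evaluated at `z⁻¹`. It agrees with `AnnulusBirkhoffFactorization`, but the point `∞` needs
no separate treatment. -/
def DiskBirkhoffFactorization (f : ℂ → Matrix ι ι ℂ) (κ : ι → ℤ) : Prop :=
  ∃ P H : ℂ → Matrix ι ι ℂ, DiskUnit P ∧ DiskUnit H ∧
    ∀ z : ℂ, ‖z‖ = 1 → f z = P z * Matrix.diagonal (fun i => z ^ κ i) * H z⁻¹

lemma diskUnit_submatrix {F : ℂ → Matrix ι ι ℂ} (hF : DiskUnit F) (τ₁ τ₂ : Equiv.Perm ι) :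
    DiskUnit fun z => (F z).submatrix τ₁ τ₂ where
  analytic := analyticOnNhd_matrix_iff.2 fun i j =>
    analyticOnNhd_matrix_iff.1 hF.analytic (τ₁ i) (τ₂ j)
  isUnit z hz := (Matrix.isUnit_submatrix_equiv τ₁ τ₂).2 (hF.isUnit z hz)

lemma DiskBirkhoffFactorization.comp_perm {f : ℂ → Matrix ι ι ℂ} {κ : ι → ℤ}
    (hf : DiskBirkhoffFactorization f κ) (τ : Equiv.Perm ι) :
    DiskBirkhoffFactorization f (κ ∘ τ) := by
  obtain ⟨P, H, hP, hH, hfPH⟩ := hf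
  refine ⟨_, _, diskUnit_submatrix hP (.refl ι) τ, diskUnit_submatrix hH τ (.refl ι),
    fun z hz => ?_⟩
  have hdiag : Matrix.diagonal (fun i => z ^ (κ ∘ τ) i) =
      (Matrix.diagonal fun i => z ^ κ i).submatrix τ τ :=
    (Matrix.submatrix_diagonal_equiv (fun i => z ^ κ i) τ).symm
  rw [hfPH z hz, hdiag, Matrix.submatrix_mul_equiv, Matrix.submatrix_mul_equiv]
  rfl

lemma DiskBirkhoffFactorization.of_diskUnit_mul {Q f : ℂ → Matrix ι ι ℂ} {κ : ι → ℤ}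
    (hQ : DiskUnit Q) (hf : DiskBirkhoffFactorization (fun z => Q z * f z) κ) :
    DiskBirkhoffFactorization f κ := by
  obtain ⟨P, H, hP, hH, hPH⟩ := hf
  have : CompleteSpace (Matrix ι ι ℂ) := FiniteDimensional.complete ℂ _
  refine ⟨_, H, hQ.inverse.mul hP, hH, fun z hz => ?_⟩
  have hQz : IsUnit (Q z) := hQ.isUnit z (mem_closedBall_zero_iff.2 hz.le)
  rw [mul_assoc, mul_assoc, ← mul_assoc (P z), ← hPH z hz, ← mul_assoc,
    Ring.inverse_mul_cancel _ hQz, one_mul]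

lemma DiskBirkhoffFactorization.congr {f g : ℂ → Matrix ι ι ℂ} {κ : ι → ℤ}
    (hf : DiskBirkhoffFactorization f κ) (hfg : ∀ z : ℂ, ‖z‖ = 1 → f z = g z) :
    DiskBirkhoffFactorization g κ := by
  obtain ⟨P, H, hP, hH, hPH⟩ := hf
  exact ⟨P, H, hP, hH, fun z hz => hfg z hz ▸ hPH z hz⟩

end DiskFactorization

section Annulus

open scoped Topology Matrix.Norms.Operator

lemma exists_one_lt_forall_mem_ball {p : ℂ → Prop} (hp : ∀ᶠ z in 𝓝ˢ (closedBall (0 : ℂ) 1), p z) :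
    ∃ ρ : ℝ, 1 < ρ ∧ ∀ z : ℂ, ‖z‖ < ρ → p z := by
  obtain ⟨r, hr, hsub⟩ :=
    (hasBasis_nhdsSet_thickening (isCompact_closedBall (0 : ℂ) 1)).eventually_iff.1 hp
  refine ⟨r + 1, by linarith, fun z hz => hsub ?_⟩
  rwa [thickening_closedBall hr zero_le_one, mem_ball_zero_iff]

lemma DiskUnit.eventually_nhdsSet {𝔸 : Type*} [NormedRing 𝔸] [NormedAlgebra ℂ 𝔸] [CompleteSpace 𝔸]
    {F : ℂ → 𝔸} (hF : DiskUnit F) :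
    ∀ᶠ z in 𝓝ˢ (closedBall (0 : ℂ) 1), AnalyticAt ℂ F z ∧ IsUnit (F z) := by
  refine eventually_nhdsSet_iff_forall.2 fun z hz => ?_
  have han := hF.analytic z hz
  exact han.eventually_analyticAt.and
    (han.continuousAt.eventually (Units.isOpen.mem_nhds (hF.isUnit z hz)))

lemma analyticOnNhd_update_comp_inv {E : Type*} [NormedAddCommGroup E] [NormedSpace ℂ E]
    [CompleteSpace E] {b : ℂ → E} {l : E} {δ : ℝ} (hδ : 0 < δ)
    (hb : DifferentiableOn ℂ b {z | 1 - δ < ‖z‖})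
    (hl : Tendsto b (comap (fun z : ℂ => ‖z‖) atTop) (𝓝 l)) :
    AnalyticOnNhd ℂ (Function.update (fun w => b w⁻¹) 0 l) (closedBall 0 1) := by
  have hopen : IsOpen {z : ℂ | 1 - δ < ‖z‖} := isOpen_lt continuous_const continuous_norm
  have hana {w : ℂ} (hw : w ∈ closedBall (0 : ℂ) 1) (hw0 : w ≠ 0) :
      AnalyticAt ℂ (Function.update (fun w => b w⁻¹) 0 l) w := by
    have hw1 : 1 ≤ ‖w⁻¹‖ := by
      rw [norm_inv]
      exact (one_le_inv₀ (norm_pos_iff.2 hw0)).2 (mem_closedBall_zero_iff.1 hw)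
    have hbw : AnalyticAt ℂ b w⁻¹ :=
      hb.analyticAt (hopen.mem_nhds (show 1 - δ < ‖w⁻¹‖ by linarith))
    refine (hbw.comp (analyticAt_id.inv hw0)).congr ?_
    filter_upwards [isOpen_ne.mem_nhds hw0] with u hu using (Function.update_of_ne hu _ _).symm
  intro w hw
  rcases eq_or_ne w 0 with rfl | hw0
  · refine Complex.analyticAt_of_differentiable_on_punctured_nhds_of_continuousAt ?_ ?_
    · filter_upwards [self_mem_nhdsWithin, nhdsWithin_le_nhds (closedBall_mem_nhds 0 one_pos)]
        with u hu0 hu1 using (hana hu1 hu0).differentiableAt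
    · rw [continuousAt_update_same]
      rw [comap_norm_atTop] at hl
      exact hl.comp tendsto_inv₀_nhdsNE_zero
  · exact hana hw hw0

variable {n : ℕ} {f : ℂ → Matrix (Fin n) (Fin n) ℂ} {κ : Fin n → ℤ}

lemma AnnulusBirkhoffFactorization.disk (hf : AnnulusBirkhoffFactorization n f κ) :
    DiskBirkhoffFactorization f κ := by
  obtain ⟨δ, hδ, P, M, L, hPd, hPu, hMd, hMu, hL, hML, hfPM⟩ := hf
  have hopen : IsOpen {z : ℂ | ‖z‖ < 1 + δ} := isOpen_lt continuous_norm continuous_const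
  have hlt {z : ℂ} (hz : z ∈ closedBall (0 : ℂ) 1) : ‖z‖ < 1 + δ := by
    linarith [mem_closedBall_zero_iff.1 hz]
  refine ⟨P, Function.update (fun w => M w⁻¹) 0 L, ⟨?_, fun z hz => hPu z (hlt hz)⟩, ⟨?_, ?_⟩, ?_⟩
  · exact analyticOnNhd_matrix_iff.2 fun i j z hz =>
      (hPd i j).analyticAt (hopen.mem_nhds (hlt hz))
  · refine analyticOnNhd_matrix_iff.2 fun i j => ?_
    have hentry : (fun w => Function.update (fun w => M w⁻¹) 0 L w i j) =
        Function.update (fun w => M w⁻¹ i j) 0 (L i j) := by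
      funext w
      exact Function.apply_update (fun _ A => A i j) (fun w => M w⁻¹) 0 L w
    rw [hentry]
    exact analyticOnNhd_update_comp_inv (b := fun z => M z i j) hδ (hMd i j) (hML i j)
  · intro w hw
    rcases eq_or_ne w 0 with rfl | hw0
    · rwa [Function.update_self]
    · rw [Function.update_of_ne hw0]
      refine hMu _ ?_
      have := (one_le_inv₀ (norm_pos_iff.2 hw0)).2 (mem_closedBall_zero_iff.1 hw)
      rw [norm_inv]
      linarith
  · intro z hz
    have hz0 : z⁻¹ ≠ 0 := inv_ne_zero (norm_ne_zero_iff.1 (hz ▸ one_ne_zero))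
    rw [Function.update_of_ne hz0, inv_inv, hfPM z hz]

lemma DiskBirkhoffFactorization.annulus (hf : DiskBirkhoffFactorization f κ) :
    AnnulusBirkhoffFactorization n f κ := by
  have : CompleteSpace (Matrix (Fin n) (Fin n) ℂ) := FiniteDimensional.complete ℂ _
  obtain ⟨P, H, hP, hH, hfPH⟩ := hf
  obtain ⟨ρ, hρ, hρPH⟩ :=
    exists_one_lt_forall_mem_ball (hP.eventually_nhdsSet.and hH.eventually_nhdsSet)
  have hρ0 : 0 < ρ := one_pos.trans hρ
  have hlt {z : ℂ} (hz : ‖z‖ < 1 + (1 - ρ⁻¹)) : ‖z‖ < ρ := by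
    have hinv : 2 - ρ⁻¹ ≤ ρ := by
      have := mul_inv_cancel₀ hρ0.ne'
      nlinarith [inv_pos.2 hρ0, sq_nonneg (ρ - 1)]
    linarith
  have hinv {z : ℂ} (hz : 1 - (1 - ρ⁻¹) < ‖z‖) : z ≠ 0 ∧ ‖z⁻¹‖ < ρ := by
    rw [sub_sub_cancel] at hz
    exact ⟨norm_pos_iff.1 ((inv_pos.2 hρ0).trans hz), norm_inv z ▸ inv_lt_of_inv_lt₀ hρ0 hz⟩
  refine ⟨1 - ρ⁻¹, sub_pos.2 (inv_lt_one_of_one_lt₀ hρ), P, fun z => H z⁻¹, H 0, ?_,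
    fun z hz => (hρPH z (hlt hz)).1.2, ?_, fun z hz => (hρPH _ (hinv hz).2).2.2, ?_, ?_, hfPH⟩
  · exact fun i j z hz => (analyticAt_matrix_iff.1 (hρPH z (hlt hz)).1.1 i
      j).differentiableAt.differentiableWithinAt
  · intro i j z hz
    have hHz := analyticAt_matrix_iff.1 (hρPH _ (hinv hz).2).2.1 i j
    exact (hHz.comp (analyticAt_id.inv (hinv hz).1)).differentiableAt.differentiableWithinAt
  · exact hH.isUnit 0 (mem_closedBall_self zero_le_one)
  · intro i j
    have hH0 := analyticOnNhd_matrix_iff.1 hH.analytic i j 0 (mem_closedBall_self zero_le_one)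
    rw [comap_norm_atTop]
    exact hH0.continuousAt.tendsto.comp tendsto_inv₀_cobounded

end Annulus

section RootRemoval

open scoped Topology Matrix Matrix.Norms.Operator

lemma analyticAt_dslope {E : Type*} [NormedAddCommGroup E] [NormedSpace ℂ E] {f : ℂ → E} {a z : ℂ}
    (ha : AnalyticAt ℂ f a) (hz : AnalyticAt ℂ f z) : AnalyticAt ℂ (dslope f a) z := by
  rcases eq_or_ne z a with rfl | hza
  · obtain ⟨p, hp⟩ := ha
    exact ⟨_, hp.has_fpower_series_dslope_fslope⟩
  · have hslope : AnalyticAt ℂ (fun w => (w - a)⁻¹ • (f w - f a)) z :=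
      ((analyticAt_id.sub analyticAt_const).inv (sub_ne_zero.2 hza)).smul (hz.sub analyticAt_const)
    refine hslope.congr ?_
    filter_upwards [isOpen_ne.mem_nhds hza] with w hw
    rw [dslope_of_ne _ hw, slope_def_module]

lemma eqOn_closedBall_of_sub_mul_eq {F G : ℂ → ℂ} {b : ℂ} (hb : ‖b‖ < 1)
    (hF : ContinuousOn F (closedBall 0 1)) (hG : ContinuousOn G (closedBall 0 1))
    (hFG : ∀ w ∈ closedBall (0 : ℂ) 1, (w - b) * F w = (w - b) * G w) :
    Set.EqOn F G (closedBall 0 1) := by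
  have hne {w : ℂ} (hw : w ∈ closedBall (0 : ℂ) 1) (hwb : w ≠ b) : F w = G w :=
    mul_left_cancel₀ (sub_ne_zero.2 hwb) (hFG w hw)
  have hnhds : closedBall (0 : ℂ) 1 ∈ 𝓝 b :=
    mem_of_superset (isOpen_ball.mem_nhds (mem_ball_zero_iff.2 hb)) ball_subset_closedBall
  intro w hw
  rcases eq_or_ne w b with rfl | hwb
  · refine (((hF.continuousAt hnhds).eventuallyEq_nhds_iff_eventuallyEq_nhdsNE
      (hG.continuousAt hnhds)).1 ?_).eq_of_nhds
    filter_upwards [self_mem_nhdsWithin, nhdsWithin_le_nhds hnhds] with u hu hu1 using hne hu1 hu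
  · exact hne hw hwb

variable {ι : Type*} [Fintype ι] [DecidableEq ι]

/-- The matrix which, for a null row vector `v` of `H b` and an index `i` maximizing `κ` on the
support of `v`, splits a zero of `H` at `b` off the loop `diag(z^κ) * H z⁻¹`. -/
noncomputable def rootRemovalMatrix (κ : ι → ℤ) (v : ι → ℂ) (i : ι) (b z : ℂ) : Matrix ι ι ℂ :=
  (1 : Matrix ι ι ℂ).updateRow i fun l => v l * z ^ (κ i - κ l).toNat / (1 - b * z)

lemma one_sub_mul_ne_zero {b z : ℂ} (hb : ‖b‖ < 1) (hz : ‖z‖ ≤ 1) : 1 - b * z ≠ 0 := by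
  refine sub_ne_zero.2 fun h => ?_
  have hlt : ‖b * z‖ < 1 := by
    rw [norm_mul]
    exact mul_lt_one_of_nonneg_of_lt_one_left (norm_nonneg b) hb hz
  rw [← h, norm_one] at hlt
  exact lt_irrefl _ hlt

lemma diskUnit_rootRemovalMatrix (κ : ι → ℤ) {v : ι → ℂ} {i : ι} {b : ℂ} (hb : ‖b‖ < 1)
    (hvi : v i ≠ 0) : DiskUnit (rootRemovalMatrix κ v i b) where
  analytic := by
    refine analyticOnNhd_matrix_iff.2 fun k l z hz => ?_
    have hne := one_sub_mul_ne_zero hb (mem_closedBall_zero_iff.1 hz)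
    rcases eq_or_ne k i with rfl | hk
    · simp only [rootRemovalMatrix, Matrix.updateRow_self]
      fun_prop (disch := assumption)
    · simp only [rootRemovalMatrix, Matrix.updateRow_ne hk]
      exact analyticAt_const
  isUnit z hz := by
    rw [Matrix.isUnit_iff_isUnit_det, rootRemovalMatrix, det_one_updateRow, sub_self,
      Int.toNat_zero, pow_zero, mul_one]
    exact (div_ne_zero hvi (one_sub_mul_ne_zero hb (mem_closedBall_zero_iff.1 hz))).isUnit

lemma rootRemovalMatrix_mul_diagonal_mul {κ : ι → ℤ} {v : ι → ℂ} {i : ι}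
    (hmax : ∀ l, v l ≠ 0 → κ l ≤ κ i) {b z : ℂ} (hb : ‖b‖ < 1) (hz : ‖z‖ = 1)
    {A : Matrix ι ι ℂ} {r : ι → ℂ} (hr : (z⁻¹ - b) • r = v ᵥ* A) :
    rootRemovalMatrix κ v i b z * (Matrix.diagonal (fun k => z ^ κ k) * A) =
      Matrix.diagonal (fun k => z ^ Function.update κ i (κ i - 1) k) * A.updateRow i r := by
  have hz0 : z ≠ 0 := norm_ne_zero_iff.1 (hz ▸ one_ne_zero)
  have hbz := one_sub_mul_ne_zero hb hz.le
  have hrow : (fun l => v l * z ^ (κ i - κ l).toNat / (1 - b * z)) ᵥ*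
      Matrix.diagonal (fun k => z ^ κ k) = (z ^ κ i / (1 - b * z)) • v := by
    funext l
    rw [Matrix.vecMul_diagonal, Pi.smul_apply, smul_eq_mul]
    rcases eq_or_ne (v l) 0 with hl | hl
    · simp only [hl, zero_mul, zero_div, mul_zero]
    · have hpow : z ^ (κ i - κ l).toNat * z ^ κ l = z ^ κ i := by
        rw [← zpow_natCast, Int.toNat_of_nonneg (sub_nonneg.2 (hmax l hl)), ← zpow_add₀ hz0,
          sub_add_cancel]
      rw [← hpow]
      ring
  rw [rootRemovalMatrix, Matrix.updateRow_mul, one_mul, ← Matrix.vecMul_vecMul, hrow,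
    Matrix.smul_vecMul, ← hr]
  ext k j
  rcases eq_or_ne k i with rfl | hk
  · simp only [Matrix.updateRow_self, Matrix.diagonal_mul, Function.update_self, Pi.smul_apply,
      smul_eq_mul, zpow_sub_one₀ hz0]
    field_simp
  · simp only [Matrix.updateRow_ne hk, Matrix.diagonal_mul, Function.update_of_ne hk]

lemma exists_rootRemoval {H : ℂ → Matrix ι ι ℂ} (hH : AnalyticOnNhd ℂ H (closedBall 0 1)) {b : ℂ}
    (hb : ‖b‖ < 1) (hdet : (H b).det = 0) (κ : ι → ℤ) :
    ∃ (Q H' : ℂ → Matrix ι ι ℂ) (κ' : ι → ℤ) (a : ℂ), DiskUnit Q ∧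
      AnalyticOnNhd ℂ H' (closedBall 0 1) ∧ a ≠ 0 ∧
      (∀ w, (w - b) * (H' w).det = a * (H w).det) ∧
      ∀ z : ℂ, ‖z‖ = 1 → Q z * (Matrix.diagonal (fun i => z ^ κ i) * H z⁻¹) =
        Matrix.diagonal (fun i => z ^ κ' i) * H' z⁻¹ := by
  obtain ⟨v, hv0, hv⟩ := Matrix.exists_vecMul_eq_zero_iff.2 hdet
  obtain ⟨i, hi, himax⟩ : ∃ i, v i ≠ 0 ∧ ∀ l, v l ≠ 0 → κ l ≤ κ i := by
    obtain ⟨l, hl⟩ := Function.ne_iff.1 hv0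
    simpa using Finset.exists_max_image ({l | v l ≠ 0} : Finset ι) κ ⟨l, by simpa using hl⟩
  set r : ℂ → ι → ℂ := fun w j => dslope (fun w => (v ᵥ* H w) j) b w
  have hr (w : ℂ) : (w - b) • r w = v ᵥ* H w := by
    funext j
    exact sub_smul_dslope_of_zero (f := fun w => (v ᵥ* H w) j) (congrFun hv j) w
  have hvH (j : ι) {w : ℂ} (hw : w ∈ closedBall (0 : ℂ) 1) :
      AnalyticAt ℂ (fun w => (v ᵥ* H w) j) w :=
    Finset.analyticAt_fun_sum _ fun l _ =>
      analyticAt_const.mul (analyticAt_matrix_iff.1 (hH w hw) l j)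
  refine ⟨rootRemovalMatrix κ v i b, fun w => (H w).updateRow i (r w), _, v i,
    diskUnit_rootRemovalMatrix κ hb hi, ?_, hi, fun w => ?_, fun z hz =>
    rootRemovalMatrix_mul_diagonal_mul himax hb hz (hr z⁻¹)⟩
  · refine analyticOnNhd_matrix_iff.2 fun k j w hw => ?_
    rcases eq_or_ne k i with rfl | hk
    · simp only [Matrix.updateRow_self]
      exact analyticAt_dslope (hvH j (mem_closedBall_zero_iff.2 hb.le)) (hvH j hw)
    · simp only [Matrix.updateRow_ne hk]
      exact analyticAt_matrix_iff.1 (hH w hw) k j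
  · rw [← Matrix.det_updateRow_smul, hr, Matrix.vecMul_eq_sum, Matrix.det_updateRow_sum,
      smul_eq_mul]

open Polynomial in
theorem exists_diskBirkhoffFactorization_of_det_eq {p : ℂ[X]}
    (hp : ∀ w : ℂ, ‖w‖ = 1 → p.eval w ≠ 0) {H : ℂ → Matrix ι ι ℂ}
    (hH : AnalyticOnNhd ℂ H (closedBall 0 1)) {g : ℂ → ℂ} (hg : ContinuousOn g (closedBall 0 1))
    (hg0 : ∀ w ∈ closedBall (0 : ℂ) 1, g w ≠ 0)
    (hdet : ∀ w ∈ closedBall (0 : ℂ) 1, (H w).det = p.eval w * g w) (κ : ι → ℤ) :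
    ∃ κ', DiskBirkhoffFactorization (fun z => Matrix.diagonal (fun i => z ^ κ i) * H z⁻¹) κ' := by
  induction hd : p.natDegree using Nat.strong_induction_on generalizing p H g κ with
  | _ d ih =>
  by_cases hroot : ∃ b, ‖b‖ < 1 ∧ p.IsRoot b
  · obtain ⟨b, hb, hpb⟩ := hroot
    have hbmem : b ∈ closedBall (0 : ℂ) 1 := mem_closedBall_zero_iff.2 hb.le
    obtain ⟨q, rfl⟩ := dvd_iff_isRoot.2 hpb
    have heval (w : ℂ) : ((X - C b) * q).eval w = (w - b) * q.eval w := by simp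
    have hq (w : ℂ) (hw : ‖w‖ = 1) : q.eval w ≠ 0 := right_ne_zero_of_mul (heval w ▸ hp w hw)
    have hq0 : q ≠ 0 := fun h => hq 1 norm_one (by rw [h, eval_zero])
    have hdeg : q.natDegree < d := by
      rw [← hd, natDegree_mul (X_sub_C_ne_zero b) hq0, natDegree_X_sub_C]
      omega
    obtain ⟨Q, H', κ₁, a, hQ, hH', ha, hdet', hQH⟩ :=
      exists_rootRemoval hH hb (by rw [hdet b hbmem, hpb.eq_zero, zero_mul]) κ
    have hcont : ContinuousOn (fun w => a * g w) (closedBall 0 1) := continuousOn_const.mul hg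
    have hdetH' : Set.EqOn (fun w => (H' w).det) (fun w => q.eval w * (a * g w))
        (closedBall 0 1) := by
      refine eqOn_closedBall_of_sub_mul_eq hb
        (fun w hw => (analyticAt_matrix_det (hH' w hw)).continuousAt.continuousWithinAt)
        (q.continuous.continuousOn.mul hcont) fun w hw => ?_
      rw [hdet' w, hdet w hw, heval]
      ring
    obtain ⟨κ', hκ'⟩ := ih _ hdeg hq hH' hcont (fun w hw => mul_ne_zero ha (hg0 w hw)) hdetH' κ₁ rfl
    exact ⟨κ', .of_diskUnit_mul hQ (hκ'.congr fun z hz => (hQH z hz).symm)⟩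
  · push Not at hroot
    refine ⟨κ, fun _ => 1, H, ⟨analyticOnNhd_const, fun _ _ => isUnit_one⟩, ⟨hH, fun w hw => ?_⟩,
      fun z _ => by rw [one_mul]⟩
    have hpw : p.eval w ≠ 0 := by
      rcases (mem_closedBall_zero_iff.1 hw).lt_or_eq with hw1 | hw1
      exacts [hroot w hw1, hp w hw1]
    rw [Matrix.isUnit_iff_isUnit_det, hdet w hw]
    exact (mul_ne_zero hpw (hg0 w hw)).isUnit

end RootRemoval

section Existence

open scoped Matrix.Norms.Operator

variable {ι : Type*} [Fintype ι] [DecidableEq ι]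

open Polynomial in
theorem exists_diskBirkhoffFactorization {σ : ℝ} (hσ : 1 < σ) {f : ℂ → Matrix ι ι ℂ}
    (hf : DifferentiableOn ℂ f (closedAnnulus σ)) (hfu : ∀ z ∈ closedAnnulus σ, IsUnit (f z)) :
    ∃ κ, DiskBirkhoffFactorization f κ := by
  have : CompleteSpace (Matrix ι ι ℂ) := FiniteDimensional.complete ℂ _
  obtain ⟨X, G, hX, hG, S, c, hXG⟩ := exists_diskUnit_mul_laurentPolynomial_eq hσ hf hfu
  obtain ⟨N, A, hA⟩ := exists_sum_zpow_smul_eq_zpow_smul_map_eval S c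
  have hdetA (w : ℂ) : (A.map (eval w)).det = A.det.eval w :=
    ((evalRingHom w).map_det A).symm
  have hGf (z : ℂ) (hz : ‖z‖ = 1) :
      z ^ N • (X z⁻¹ * A.map (eval z⁻¹)) = G z * f z := by
    rw [← hXG z hz, hA z (norm_ne_zero_iff.1 (hz ▸ one_ne_zero)), mul_smul_comm]
  have hroot (w : ℂ) (hw : ‖w‖ = 1) : A.det.eval w ≠ 0 := by
    have hw' : ‖w⁻¹‖ = 1 := by rw [norm_inv, hw, inv_one]
    have hunit : IsUnit (G w⁻¹ * f w⁻¹) := (hG.isUnit _ (mem_closedBall_zero_iff.2 hw'.le)).mul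
      (hfu _ (sphere_subset_closedAnnulus hσ.le (mem_sphere_zero_iff_norm.2 hw')))
    rw [← hGf _ hw', Matrix.isUnit_iff_isUnit_det, inv_inv, Matrix.det_smul, Matrix.det_mul,
      hdetA] at hunit
    exact right_ne_zero_of_mul (right_ne_zero_of_mul hunit.ne_zero)
  have hAan : AnalyticOnNhd ℂ (fun w => A.map (eval w)) (closedBall 0 1) :=
    analyticOnNhd_matrix_iff.2 fun i j _ _ => (A i j).differentiable.analyticAt _
  obtain ⟨κ, hκ⟩ := exists_diskBirkhoffFactorization_of_det_eq hroot (hX.analytic.mul hAan)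
    (g := fun w => (X w).det)
    (fun w hw => (analyticAt_matrix_det (hX.analytic w hw)).continuousAt.continuousWithinAt)
    (fun w hw => ((Matrix.isUnit_iff_isUnit_det _).1 (hX.isUnit w hw)).ne_zero)
    (fun w _ => by rw [Matrix.det_mul, hdetA, mul_comm]) (fun _ => N)
  refine ⟨κ, .of_diskUnit_mul hG (hκ.congr fun z hz => ?_)⟩
  rw [← hGf z hz, Matrix.smul_eq_diagonal_mul]

lemma DiskBirkhoffFactorization.exists_antitone {n : ℕ} {f : ℂ → Matrix (Fin n) (Fin n) ℂ}
    {κ : Fin n → ℤ} (hf : DiskBirkhoffFactorization f κ) :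
    ∃ κ', Antitone κ' ∧ DiskBirkhoffFactorization f κ' :=
  ⟨κ ∘ Tuple.sort (OrderDual.toDual ∘ κ), Tuple.monotone_sort (OrderDual.toDual ∘ κ),
    hf.comp_perm _⟩

lemma exists_closedAnnulus_subset {δ : ℝ} (hδ : 0 < δ) :
    ∃ σ : ℝ, 1 < σ ∧ closedAnnulus σ ⊆ {z : ℂ | 1 - δ < ‖z‖ ∧ ‖z‖ < 1 + δ} := by
  obtain ⟨σ, hσ, hσδ⟩ := exists_between (lt_add_of_pos_right 1 hδ)
  refine ⟨σ, hσ, fun z hz => ?_⟩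
  obtain ⟨hz₁, hz₂⟩ := mem_closedAnnulus.1 hz
  have hσinv : 1 - δ < σ⁻¹ := by
    rw [← one_div, lt_div_iff₀ (one_pos.trans hσ)]
    nlinarith
  exact ⟨hσinv.trans_le hz₁, hz₂.trans_lt hσδ⟩

theorem exists_antitone_diskBirkhoffFactorization {n : ℕ} {δ : ℝ} (hδ : 0 < δ)
    {f : ℂ → Matrix (Fin n) (Fin n) ℂ}
    (hfd : ∀ i j, DifferentiableOn ℂ (fun z => f z i j) {z : ℂ | 1 - δ < ‖z‖ ∧ ‖z‖ < 1 + δ})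
    (hfu : ∀ z : ℂ, 1 - δ < ‖z‖ → ‖z‖ < 1 + δ → IsUnit (f z)) :
    ∃ κ, Antitone κ ∧ DiskBirkhoffFactorization f κ := by
  obtain ⟨σ, hσ, hσδ⟩ := exists_closedAnnulus_subset hδ
  have hopen : IsOpen {z : ℂ | 1 - δ < ‖z‖ ∧ ‖z‖ < 1 + δ} :=
    (isOpen_lt continuous_const continuous_norm).inter (isOpen_lt continuous_norm continuous_const)
  have hf : DifferentiableOn ℂ f (closedAnnulus σ) := fun z hz =>
    (analyticAt_matrix_iff.2 fun i j => (hfd i j).analyticAt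
      (hopen.mem_nhds (hσδ hz))).differentiableAt.differentiableWithinAt
  obtain ⟨κ, hκ⟩ :=
    exists_diskBirkhoffFactorization hσ hf fun z hz => hfu z (hσδ hz).1 (hσδ hz).2
  exact hκ.exists_antitone

end Existence

section Uniqueness

open scoped Matrix.Norms.Operator

lemma eq_zero_of_mul_pow_eq_comp_inv {a b : ℂ → ℂ} (ha : AnalyticOnNhd ℂ a (closedBall 0 1))
    (hb : AnalyticOnNhd ℂ b (closedBall 0 1)) {m : ℕ} (hm : m ≠ 0)
    (hab : ∀ z : ℂ, ‖z‖ = 1 → a z * z ^ m = b z⁻¹) : a 0 = 0 := by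
  have hmean {h : ℂ → ℂ} (hh : AnalyticOnNhd ℂ h (closedBall 0 1)) :
      Real.circleAverage h 0 1 = h 0 := by
    refine DiffContOnCl.circleAverage (DifferentiableOn.diffContOnCl ?_)
    rw [abs_one, closure_ball _ one_ne_zero]
    exact hh.differentiableOn
  have hpow : AnalyticOnNhd ℂ (fun w : ℂ => w ^ m) (closedBall 0 1) :=
    analyticOnNhd_id.pow m
  calc a 0 = Real.circleAverage a 0 1 := (hmean ha).symm
    _ = Real.circleAverage (fun z => (fun w => b w * w ^ m) z⁻¹) 0 1 := by
        refine Real.circleAverage_congr_sphere fun z hz => ?_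
        have hz1 : ‖z‖ = 1 := by simpa using hz
        have hz0 : z ≠ 0 := norm_ne_zero_iff.1 (hz1 ▸ one_ne_zero)
        simp only [← hab z hz1, inv_pow, mul_inv_cancel_right₀ (pow_ne_zero m hz0)]
    _ = Real.circleAverage (fun w => b w * w ^ m) 0 1 :=
        Real.circleAverage_zero_one_congr_inv (f := fun w => b w * w ^ m)
    _ = b 0 * 0 ^ m := hmean (hb.mul hpow)
    _ = 0 := by rw [zero_pow hm, mul_zero]

variable {ι : Type*} [Fintype ι]

lemma DiskBirkhoffFactorization.exists_intertwining [DecidableEq ι] {f : ℂ → Matrix ι ι ℂ}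
    {κ κ' : ι → ℤ} (hf : DiskBirkhoffFactorization f κ) (hf' : DiskBirkhoffFactorization f κ') :
    ∃ A B : ℂ → Matrix ι ι ℂ, DiskUnit A ∧ DiskUnit B ∧ ∀ z : ℂ, ‖z‖ = 1 →
      A z * Matrix.diagonal (fun i => z ^ κ i) = Matrix.diagonal (fun i => z ^ κ' i) * B z⁻¹ := by
  have : CompleteSpace (Matrix ι ι ℂ) := FiniteDimensional.complete ℂ _
  obtain ⟨P, H, hP, hH, hPH⟩ := hf
  obtain ⟨P', H', hP', hH', hPH'⟩ := hf'
  refine ⟨_, _, hP'.inverse.mul hP, hH'.mul hH.inverse, fun z hz => ?_⟩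
  have hPz : IsUnit (P' z) := hP'.isUnit z (mem_closedBall_zero_iff.2 hz.le)
  have hHz : IsUnit (H z⁻¹) :=
    hH.isUnit _ (mem_closedBall_zero_iff.2 (by rw [norm_inv, hz, inv_one]))
  have hfz := (hPH z hz).symm.trans (hPH' z hz)
  set D := Matrix.diagonal fun i => z ^ κ i
  set D' := Matrix.diagonal fun i => z ^ κ' i
  calc Ring.inverse (P' z) * P z * D
      = Ring.inverse (P' z) * (P z * D * H z⁻¹) * Ring.inverse (H z⁻¹) := by
        simp only [mul_assoc, Ring.mul_inverse_cancel _ hHz, mul_one]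
    _ = Ring.inverse (P' z) * P' z * (D' * (H' z⁻¹ * Ring.inverse (H z⁻¹))) := by
        simp only [hfz, mul_assoc]
    _ = D' * (H' z⁻¹ * Ring.inverse (H z⁻¹)) := by rw [Ring.inverse_mul_cancel _ hPz, one_mul]

theorem DiskBirkhoffFactorization.le_of_antitone [LinearOrder ι] {f : ℂ → Matrix ι ι ℂ}
    {κ κ' : ι → ℤ} (hκ : Antitone κ) (hκ' : Antitone κ') (hf : DiskBirkhoffFactorization f κ)
    (hf' : DiskBirkhoffFactorization f κ') : κ ≤ κ' := by
  obtain ⟨A, B, hA, hB, hAB⟩ := hf.exists_intertwining hf'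
  intro k
  by_contra! hlt
  have hzero (i j : ι) (hki : k ≤ i) (hjk : j ≤ k) : A 0 i j = 0 := by
    have hpos : κ' i < κ j := (hκ' hki).trans_lt (hlt.trans_le (hκ hjk))
    refine eq_zero_of_mul_pow_eq_comp_inv (analyticOnNhd_matrix_iff.1 hA.analytic i j)
      (analyticOnNhd_matrix_iff.1 hB.analytic i j) (m := (κ j - κ' i).toNat) (by omega)
      fun z hz => ?_
    have hz0 : z ≠ 0 := norm_ne_zero_iff.1 (hz ▸ one_ne_zero)
    have hentry := congrFun (congrFun (hAB z hz) i) j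
    rw [Matrix.mul_diagonal, Matrix.diagonal_mul] at hentry
    rw [← zpow_natCast, Int.toNat_of_nonneg (sub_nonneg.2 hpos.le), zpow_sub₀ hz0,
      ← mul_div_assoc, hentry, mul_div_cancel_left₀ _ (zpow_ne_zero _ hz0)]
  have hunit := (Matrix.isUnit_iff_isUnit_det _).1 (hA.isUnit 0 (mem_closedBall_self zero_le_one))
  exact hunit.ne_zero (det_eq_zero_of_block_eq_zero (A 0) k hzero)

end Uniqueness

/-- Every real-analytic loop in `GL_n(ℂ)`, encoded as a holomorphic
`GL_n(ℂ)`-valued map `f` on an annulus `{1−δ < |z| < 1+δ}` around the unit circle, admits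
a Birkhoff decomposition `f = F₊ · diag(z^{κ₁},…,z^{κ_n}) · F₋` on `𝕊` with decreasing
partial indices `κ₁ ≥ ⋯ ≥ κ_n` and factors holomorphic on slightly smaller disks
`{|z| < 1+δ'}` resp. `{|z| > 1−δ'}`; the partial indices are uniquely determined by `f`. -/
theorem stmt_5 (n : ℕ) (δ : ℝ) (hδ : 0 < δ) (f : ℂ → Matrix (Fin n) (Fin n) ℂ)
    (hfd : ∀ i j, DifferentiableOn ℂ (fun z => f z i j)
      {z : ℂ | 1 - δ < ‖z‖ ∧ ‖z‖ < 1 + δ})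
    (hfu : ∀ z : ℂ, 1 - δ < ‖z‖ → ‖z‖ < 1 + δ → IsUnit (f z)) :
    ∃ κ : Fin n → ℤ, Antitone κ ∧
      AnnulusBirkhoffFactorization n f κ ∧
      ∀ κ' : Fin n → ℤ, Antitone κ' → AnnulusBirkhoffFactorization n f κ' → κ' = κ := by
  obtain ⟨κ, hκ, hfκ⟩ := exists_antitone_diskBirkhoffFactorization hδ hfd hfu
  exact ⟨κ, hκ, hfκ.annulus, fun κ' hκ' hfκ' =>
    le_antisymm (hfκ'.disk.le_of_antitone hκ' hκ hfκ) (hfκ.le_of_antitone hκ hκ' hfκ'.disk)⟩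
end
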